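/- arXiv:1309.6506 — 6 statements merged into one kernel-verified Lean document; each statement's English description precedes it below -/
import Mathlib

section
/- Let r, v, k be integers with r ≥ 2 and (k+2r)/2 ≤ v ≤ k+r−2, and let C = (k+r−v−1)^{1/⌊k/(k+r−v)⌋} (a real number). Then there exists a constant D such that for every integer n ≥ k, f^{(r)}(n,v,k) ≤ (2C/r!)·n^{r−1+1/⌊k/(k+r−v)⌋} + D·n^{r−1}. -/
/-- `f^{(r)}(n,v,k)`: one plus the maximum number of edges of an `r`-uniform hypergraph
on `n` vertices in which every `k` pairwise distinct edges cover at least `v + 1`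
vertices. -/
noncomputable def fBES (n r k : ℕ) (v : ℤ) : ℕ :=
  sSup {m | ∃ E : Finset (Finset (Fin n)),
    (∀ e ∈ E, e.card = r) ∧
    (∀ E' ⊆ E, E'.card = k → v + 1 ≤ ((E'.biUnion id).card : ℤ)) ∧ E.card = m} + 1

/-!
Write `s = k + r - v` and `t = ⌊k / s⌋`. Counting pairs of an `(r - 2)`-set and a hyperedge
containing it, it suffices to bound the edges of the link graph of each `(r - 2)`-set by
`(d + t + k) n`, where `d ^ t > (s - 1) n`. Such a link has no subgraph with `k` edges on at most
`k + 2 - s` vertices, whereas a graph with more edges does. Indeed, it contains a subgraph of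
minimum degree at least `d + t + k`. Attaching to a subgraph a trail that has its ends in it and
uses a new edge raises `#edges - #vertices`, so the required surplus of edges is reached by gluing
together `s` short trails. If more than `k` edges at some vertex lie on cycles of length at most
`t`, then `s` such cycles do. Otherwise deleting the edges on these cycles leaves girth above `t`
and minimum degree at least `d + t`. From any vertex there are then more than `(s - 1) n` paths of
length `t`, so `s` of them share both ends, and by the girth condition the middle edge of each lies
on none of the others. In both cases, pendant edges at a vertex of large degree bring the number of
edges up to `k`.
-/

section

open Finset SimpleGraph

variable {V : Type*} {G : SimpleGraph V}

section Ears

variable {H : G.Subgraph} {u v w : V}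

lemma verts_subgraphOfAdj_sup (h : G.Adj u v) (hv : v ∈ H.verts) :
    (G.subgraphOfAdj h ⊔ H).verts = insert u H.verts := by
  ext x
  simp only [Subgraph.verts_sup, subgraphOfAdj_verts, Set.mem_union, Set.mem_insert_iff,
    Set.mem_singleton_iff]
  grind

lemma edgeSet_subgraphOfAdj_sup (h : G.Adj u v) :
    (G.subgraphOfAdj h ⊔ H).edgeSet = insert s(u, v) H.edgeSet := by
  rw [Subgraph.edgeSet_sup, edgeSet_subgraphOfAdj, Set.singleton_union]

lemma ncard_verts_subgraphOfAdj_sup [Finite V] (h : G.Adj u v) (hv : v ∈ H.verts)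
    (hu : u ∉ H.verts) : (G.subgraphOfAdj h ⊔ H).verts.ncard = H.verts.ncard + 1 := by
  rw [verts_subgraphOfAdj_sup h hv, Set.ncard_insert_of_notMem hu]

lemma ncard_edgeSet_subgraphOfAdj_sup [Finite V] (h : G.Adj u v) (he : s(u, v) ∉ H.edgeSet) :
    (G.subgraphOfAdj h ⊔ H).edgeSet.ncard = H.edgeSet.ncard + 1 := by
  rw [edgeSet_subgraphOfAdj_sup h, Set.ncard_insert_of_notMem he]

lemma toSubgraph_cons_sup (h : G.Adj u v) (p : G.Walk v w) :
    (Walk.cons h p).toSubgraph ⊔ H = G.subgraphOfAdj h ⊔ (p.toSubgraph ⊔ H) := by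
  rw [Walk.toSubgraph, sup_assoc]

lemma start_mem_verts_toSubgraph_sup (p : G.Walk u v) : u ∈ (p.toSubgraph ⊔ H).verts :=
  Or.inl p.start_mem_verts_toSubgraph

lemma subgraphOfAdj_sup_eq_self (h : G.Adj u v) (he : s(u, v) ∈ H.edgeSet) :
    G.subgraphOfAdj h ⊔ H = H :=
  sup_eq_right.2 (subgraphOfAdj_le_of_adj H he)

/-- Adding a path that ends in `H` does not decrease `#edges - #vertices`; both inequalities are
written additively to avoid truncated subtraction. -/
lemma ncard_toSubgraph_sup_le [Finite V] (p : G.Walk u v) (hv : v ∈ H.verts) :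
    (p.toSubgraph ⊔ H).verts.ncard + H.edgeSet.ncard ≤
      H.verts.ncard + (p.toSubgraph ⊔ H).edgeSet.ncard ∧
    (p.toSubgraph ⊔ H).verts.ncard ≤ H.verts.ncard + p.length := by
  induction p with
  | nil =>
    have : G.singletonSubgraph _ ⊔ H = H := sup_eq_right.2 ((singletonSubgraph_le_iff _ _).2 hv)
    simp [Walk.toSubgraph, this]
  | @cons u u' v h p ih =>
    obtain ⟨hexcess, hverts⟩ := ih hv
    rw [toSubgraph_cons_sup, Walk.length_cons]
    have hu' := start_mem_verts_toSubgraph_sup (H := H) p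
    by_cases hu : u ∈ (p.toSubgraph ⊔ H).verts
    · rw [verts_subgraphOfAdj_sup h hu', Set.insert_eq_of_mem hu]
      have := Set.ncard_le_ncard (Subgraph.edgeSet_mono
        (le_sup_right : p.toSubgraph ⊔ H ≤ G.subgraphOfAdj h ⊔ (p.toSubgraph ⊔ H)))
      omega
    · rw [ncard_verts_subgraphOfAdj_sup h hu' hu,
        ncard_edgeSet_subgraphOfAdj_sup h
          fun he => hu (Subgraph.edge_vert _ (Subgraph.mem_edgeSet.1 he))]
      omega

lemma ncard_toSubgraph_sup_lt [Finite V] (p : G.Walk u v) (hp : p.IsTrail) (hu : u ∈ H.verts)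
    (hv : v ∈ H.verts) (hnew : ∃ e ∈ p.edges, e ∉ H.edgeSet) :
    (p.toSubgraph ⊔ H).verts.ncard + H.edgeSet.ncard <
      H.verts.ncard + (p.toSubgraph ⊔ H).edgeSet.ncard ∧
    (p.toSubgraph ⊔ H).verts.ncard < H.verts.ncard + p.length := by
  induction p with
  | nil => simp at hnew
  | @cons u u' v h p ih =>
    rw [Walk.isTrail_cons] at hp
    rw [toSubgraph_cons_sup, Walk.length_cons]
    by_cases he : s(u, u') ∈ H.edgeSet
    · have hnew' : ∃ e ∈ p.edges, e ∉ H.edgeSet := by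
        simpa [Walk.edges_cons, he] using hnew
      obtain ⟨hexcess, hverts⟩ := ih hp.1 (H.edge_vert (Subgraph.Adj.symm he)) hv hnew'
      rw [subgraphOfAdj_sup_eq_self h (Subgraph.edgeSet_mono le_sup_right he)]
      omega
    · obtain ⟨hexcess, hverts⟩ := ncard_toSubgraph_sup_le p hv
      have he' : s(u, u') ∉ (p.toSubgraph ⊔ H).edgeSet := by
        rw [Subgraph.edgeSet_sup, Walk.edgeSet_toSubgraph]
        exact fun h => h.elim hp.2 he
      rw [verts_subgraphOfAdj_sup h (start_mem_verts_toSubgraph_sup p),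
        Set.insert_eq_of_mem (Subgraph.verts_mono le_sup_right hu),
        ncard_edgeSet_subgraphOfAdj_sup h he']
      omega

end Ears

section DenseSubgraphs

/-- `G` has a subgraph with at least `k` edges on at most `k + 2 - s` vertices. In the link of an
`(r - 2)`-set such a subgraph yields `k` hyperedges on at most `k + r - s` vertices. -/
def HasDenseSubgraph (G : SimpleGraph V) (k s : ℕ) : Prop :=
  ∃ H : G.Subgraph, k ≤ H.edgeSet.ncard ∧ H.verts.ncard + s ≤ k + 2

/-- Some subgraph through `x`, not necessarily with `k` edges, has the surplus of edges over
vertices required by `HasDenseSubgraph`; if `x` has large degree, pendant edges at `x` complete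
it to `k` edges. -/
def HasDenseSubgraphAt (G : SimpleGraph V) (x : V) (k s : ℕ) : Prop :=
  ∃ H : G.Subgraph, x ∈ H.verts ∧ H.verts.ncard + s ≤ H.edgeSet.ncard + 2 ∧
    H.verts.ncard + s ≤ k + 2

variable {V' : Type*} {G' : SimpleGraph V'} {H : G.Subgraph} {x : V} {k s : ℕ}

lemma ncard_verts_map (f : G →g G') (hf : Function.Injective f) :
    (H.map f).verts.ncard = H.verts.ncard :=
  Set.ncard_image_of_injective _ hf

lemma ncard_edgeSet_map (f : G →g G') (hf : Function.Injective f) :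
    (H.map f).edgeSet.ncard = H.edgeSet.ncard := by
  rw [Subgraph.edgeSet_map, Set.ncard_image_of_injective _ (Sym2.map.injective hf)]

lemma HasDenseSubgraph.of_isContained (h : HasDenseSubgraph G k s) (hG : G ⊑ G') :
    HasDenseSubgraph G' k s := by
  obtain ⟨H, hedges, hverts⟩ := h
  obtain ⟨f⟩ := hG
  exact ⟨H.map f.toHom, by rwa [ncard_edgeSet_map _ f.injective],
    by rwa [ncard_verts_map _ f.injective]⟩

lemma HasDenseSubgraphAt.mono {G G' : SimpleGraph V} (h : HasDenseSubgraphAt G x k s)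
    (hG : G ≤ G') : HasDenseSubgraphAt G' x k s := by
  obtain ⟨H, hx, hexcess, hverts⟩ := h
  have hinj : Function.Injective (Hom.ofLE hG) := Function.injective_id
  exact ⟨H.map (Hom.ofLE hG), ⟨x, hx, rfl⟩,
    by rwa [ncard_edgeSet_map _ hinj, ncard_verts_map _ hinj], by rwa [ncard_verts_map _ hinj]⟩

lemma HasDenseSubgraphAt.hasDenseSubgraph [Finite V] [G.LocallyFinite]
    (h : HasDenseSubgraphAt G x k s) (hs : 2 ≤ s) (hx : k ≤ G.degree x) :
    HasDenseSubgraph G k s := by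
  obtain ⟨H, hxH, hexcess, hverts⟩ := h
  obtain ⟨slack, hslack⟩ := Nat.exists_eq_add_of_le hverts
  induction slack generalizing H with
  | zero => exact ⟨H, by omega, hverts⟩
  | succ slack ih =>
    obtain ⟨w, hwx, hw⟩ : ∃ w ∈ G.neighborSet x, w ∉ H.verts := by
      refine Set.exists_mem_notMem_of_ncard_lt_ncard ?_
      rw [← G.coe_neighborFinset, Set.ncard_coe_finset, G.card_neighborFinset_eq_degree]
      omega
    have hadj : G.Adj w x := (G.mem_neighborSet x w).1 hwx |>.symm
    have hverts' := ncard_verts_subgraphOfAdj_sup hadj hxH hw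
    have hedges' := ncard_edgeSet_subgraphOfAdj_sup (H := H) hadj
      fun he => hw (H.edge_vert (Subgraph.mem_edgeSet.1 he))
    exact ih (G.subgraphOfAdj hadj ⊔ H) (Or.inr hxH) (by omega) (by omega) (by omega)

end DenseSubgraphs

section Girth

variable {u v x y : V}

/-- A cycle in the union of the two paths would have length at most `P.length + Q.length`, so the
union is acyclic. -/
lemma eq_of_length_add_length_lt_egirth {P Q : G.Walk u v} (hP : P.IsPath) (hQ : Q.IsPath)
    (h : ((P.length + Q.length : ℕ) : ℕ∞) < G.egirth) : P = Q := by
  classical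
  let U : SimpleGraph V := fromEdgeSet {e | e ∈ P.edges ∨ e ∈ Q.edges}
  have mem_U {e : Sym2 V} : e ∈ U.edgeSet ↔ e ∈ P.edges ∨ e ∈ Q.edges := by
    rw [edgeSet_fromEdgeSet]
    refine and_iff_left_of_imp fun he => G.not_isDiag_of_mem_edgeSet ?_
    exact he.elim (P.edges_subset_edgeSet ·) (Q.edges_subset_edgeSet ·)
  have hU : U.IsAcyclic := by
    intro z c hc
    have hcG : ∀ e ∈ c.edges, e ∈ G.edgeSet := fun e he =>
      (mem_U.1 (c.edges_subset_edgeSet he)).elim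
        (P.edges_subset_edgeSet ·) (Q.edges_subset_edgeSet ·)
    have hlong : P.length + Q.length < c.length := by
      have := h.trans_le (egirth_le_length (hc.transfer hcG))
      rwa [Walk.length_transfer, Nat.cast_lt] at this
    have hsubset : c.edges ⊆ P.edges ++ Q.edges := fun e he =>
      List.mem_append.2 (mem_U.1 (c.edges_subset_edgeSet he))
    have := (hc.isTrail.edges_nodup.subperm hsubset).length_le
    simp only [List.length_append, Walk.length_edges] at this
    omega
  have heq : P.transfer U _ = Q.transfer U _ :=
    congrArg Subtype.val <| (hU.subsingleton_path u v).elim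
      ⟨_, hP.transfer fun e he => mem_U.2 (Or.inl he)⟩
      ⟨_, hQ.transfer fun e he => mem_U.2 (Or.inr he)⟩
  apply Walk.ext_support
  simpa only [Walk.support_transfer] using congrArg Walk.support heq

lemma getVert_eq_of_add_lt_egirth {w : V} {P : G.Walk u v} {Q : G.Walk u w} (hP : P.IsPath)
    (hQ : Q.IsPath) {i j : ℕ} (hi : i ≤ P.length) (hj : j ≤ Q.length)
    (h : ((i + j : ℕ) : ℕ∞) < G.egirth) (heq : P.getVert i = Q.getVert j) :
    i = j ∧ ∀ l ≤ i, P.getVert l = Q.getVert l := by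
  have htake : P.take i = (Q.take j).copy rfl heq.symm := by
    refine eq_of_length_add_length_lt_egirth (hP.take i) (by simpa using hQ.take j) ?_
    rwa [Walk.length_copy, Walk.take_length, Walk.take_length, min_eq_left hi, min_eq_left hj]
  have hij : i = j := by
    have := congrArg Walk.length htake
    rwa [Walk.length_copy, Walk.take_length, Walk.take_length, min_eq_left hi, min_eq_left hj]
      at this
  subst hij
  refine ⟨rfl, fun l hl => ?_⟩
  have := congrArg (Walk.getVert · l) htake
  simpa only [Walk.getVert_copy, Walk.take_getVert, min_eq_right hl] using this

lemma getVert_eq_of_length_lt_egirth {P Q : G.Walk x y} (hP : P.IsPath) (hQ : Q.IsPath)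
    (hPQ : Q.length = P.length) (h : (P.length : ℕ∞) < G.egirth) {i j : ℕ} (hi : i ≤ P.length)
    (hj : j ≤ P.length) (heq : P.getVert i = Q.getVert j) :
    i = j ∧ (2 * i ≤ P.length → ∀ l ≤ i, P.getVert l = Q.getVert l) ∧
      (P.length ≤ 2 * i → ∀ l ≥ i, P.getVert l = Q.getVert l) := by
  have initial (hij : i + j ≤ P.length) :=
    getVert_eq_of_add_lt_egirth hP hQ hi (by omega) (h.trans_le' (by exact_mod_cast hij)) heq
  have final (hij : P.length ≤ i + j) : i = j ∧ ∀ l ≥ i, P.getVert l = Q.getVert l := by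
    have heq' : P.reverse.getVert (P.length - i) = Q.reverse.getVert (P.length - j) := by
      simp only [Walk.getVert_reverse, hPQ]
      rwa [Nat.sub_sub_self hi, Nat.sub_sub_self hj]
    obtain ⟨hij', hagree⟩ := getVert_eq_of_add_lt_egirth hP.reverse hQ.reverse
      (by simp) (by simp [hPQ]) (h.trans_le' (by norm_cast; omega)) heq'
    refine ⟨by omega, fun l hl => ?_⟩
    rcases le_total P.length l with hl' | hl'
    · rw [P.getVert_of_length_le hl', Q.getVert_of_length_le (hPQ ▸ hl')]
    · have := hagree (P.length - l) (by omega)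
      simpa only [Walk.getVert_reverse, hPQ, Nat.sub_sub_self hl'] using this
  have hij : i = j := (le_total (i + j) P.length).elim (initial · |>.1) (final · |>.1)
  exact ⟨hij, fun hi => (initial (by omega)).2, fun hi => (final (by omega)).2⟩

/-- The middle edge works: two such paths through a common vertex agree on the shorter side of
it, and the two ends of the middle edge cover both sides. -/
lemma exists_private_edge {P : G.Walk x y} (hP : P.IsPath) (hpos : 0 < P.length)
    (h : (P.length : ℕ∞) < G.egirth) :
    ∃ e ∈ P.edges, ∀ Q : G.Walk x y, Q.IsPath → Q.length = P.length → e ∈ Q.edges → P = Q := by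
  obtain ⟨m, hm₁, hm₂⟩ : ∃ m, 2 * m ≤ P.length ∧ P.length ≤ 2 * m + 1 := ⟨P.length / 2, by omega⟩
  refine ⟨s(P.getVert m, P.getVert (m + 1)),
    P.mk_mem_edges_iff_exists.2 ⟨m, by omega, rfl⟩, fun Q hQ hPQ he => ?_⟩
  obtain ⟨j, hj, hedge⟩ := Q.mk_mem_edges_iff_exists.1 he
  have agree {i j : ℕ} := getVert_eq_of_length_lt_egirth hP hQ hPQ h (i := i) (j := j)
  rcases Sym2.eq_iff.1 hedge.symm with ⟨hstart, hend⟩ | ⟨hstart, hend⟩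
  · refine Walk.ext_getVert fun l => ?_
    rcases Nat.lt_or_ge m l with hl | hl
    · exact (agree (by omega) (by omega) hend).2.2 (by omega) l hl
    · exact (agree (by omega) (by omega) hstart).2.1 hm₁ l hl
  · have := (agree (by omega) (by omega) hstart).1
    have := (agree (by omega) (by omega) hend).1
    omega

end Girth

section Unions

variable {k s t : ℕ} {x y : V}

lemma exists_subgraph_of_private_edges [Finite V] (S : Finset (G.Walk x y))
    (hS : ∀ P ∈ S, P.IsTrail ∧ P.length ≤ t)
    (hprivate : ∀ P ∈ S, ∃ e ∈ P.edges, ∀ Q ∈ S, e ∈ Q.edges → P = Q) :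
    ∃ H : G.Subgraph, x ∈ H.verts ∧ y ∈ H.verts ∧
      (∀ e ∈ H.edgeSet, ∃ Q ∈ S, e ∈ Q.edges) ∧
      H.verts.ncard + #S ≤ H.edgeSet.ncard + 2 ∧ H.verts.ncard + #S ≤ #S * t + 2 := by
  classical
  induction S using Finset.induction_on with
  | empty =>
    refine ⟨G.singletonSubgraph x ⊔ G.singletonSubgraph y, by simp, by simp, by simp, ?_⟩
    simpa using (Set.ncard_union_le {x} {y}).trans_eq (by simp)
  | insert P S hPS ih =>
    simp only [Finset.forall_mem_insert, Finset.exists_mem_insert] at hS hprivate ⊢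
    obtain ⟨⟨hP, hPt⟩, hS⟩ := hS
    obtain ⟨⟨e, heP, -, he⟩, hprivate⟩ := hprivate
    obtain ⟨H, hx, hy, hHS, hexcess, hverts⟩ := ih hS fun Q hQ =>
      (hprivate Q hQ).imp fun _ h => h.imp_right And.right
    have heH : e ∉ H.edgeSet := fun h => by
      obtain ⟨Q, hQ, heQ⟩ := hHS e h
      exact hPS (he Q hQ heQ ▸ hQ)
    obtain ⟨hexcess', hverts'⟩ := ncard_toSubgraph_sup_lt P hP hx hy ⟨e, heP, heH⟩
    refine ⟨P.toSubgraph ⊔ H, Or.inr hx, Or.inr hy, fun f hf => ?_, ?_⟩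
    · rw [Subgraph.edgeSet_sup, Walk.edgeSet_toSubgraph] at hf
      exact hf.imp_right (hHS f)
    · rw [Finset.card_insert_of_notMem hPS, add_one_mul]
      omega

lemma hasDenseSubgraphAt_of_paths [Finite V] (hst : s * t ≤ k) (ht : 1 ≤ t)
    (h : (t : ℕ∞) < G.egirth) (S : Finset (G.Walk x y))
    (hS : ∀ P ∈ S, P.IsPath ∧ P.length = t) (hs : s ≤ #S) : HasDenseSubgraphAt G x k s := by
  obtain ⟨T, hTS, rfl⟩ := Finset.exists_subset_card_eq hs
  obtain ⟨H, hx, -, -, hexcess, hverts⟩ := exists_subgraph_of_private_edges T (t := t)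
    (fun P hP => ⟨(hS P (hTS hP)).1.isTrail, (hS P (hTS hP)).2.le⟩) fun P hP => by
      obtain ⟨hPpath, rfl⟩ := hS P (hTS hP)
      obtain ⟨e, he, hunique⟩ := exists_private_edge hPpath ht h
      exact ⟨e, he, fun Q hQ => hunique Q (hS Q (hTS hQ)).1 (hS Q (hTS hQ)).2⟩
  exact ⟨H, hx, hexcess, by omega⟩

end Unions

section ShortCycles

variable {k s t : ℕ} {z : V}

/-- The edges lying on a cycle of length at most `t`; deleting them raises the girth above `t`. -/
def shortCycleEdges (G : SimpleGraph V) (t : ℕ) : Set (Sym2 V) :=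
  {e | ∃ (z : V) (c : G.Walk z z), c.IsCycle ∧ c.length ≤ t ∧ e ∈ c.edges}

lemma lt_egirth_deleteEdges_shortCycleEdges (G : SimpleGraph V) (t : ℕ) :
    (t : ℕ∞) < (G.deleteEdges (shortCycleEdges G t)).egirth := by
  have hle := G.deleteEdges_le (shortCycleEdges G t)
  rw [← ENat.add_one_le_iff (ENat.natCast_ne_top t), le_egirth]
  intro z c hc
  by_contra! hshort
  have hshort' : c.length ≤ t := by
    rwa [ENat.lt_add_one_iff (ENat.natCast_ne_top t), Nat.cast_le] at hshort
  obtain ⟨e, he⟩ := List.exists_mem_of_ne_nil c.edges (by simpa using hc.ne_nil)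
  have he' := c.edges_subset_edgeSet he
  rw [edgeSet_deleteEdges] at he'
  exact he'.2 ⟨z, c.mapLe hle, hc.mapLe hle, by simpa using hshort', by simpa using he⟩

lemma exists_isCycle_of_mem_shortCycleEdges {w : V} (h : s(z, w) ∈ shortCycleEdges G t) :
    ∃ c : G.Walk z z, c.IsCycle ∧ c.length ≤ t ∧ s(z, w) ∈ c.edges := by
  classical
  obtain ⟨u, c, hc, hlen, hw⟩ := h
  have hz := c.fst_mem_support_of_mem_edges hw
  exact ⟨c.rotate z hz, hc.rotate hz, by rwa [Walk.length_rotate],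
    (c.rotate_edges z hz).mem_iff.2 hw⟩

lemma exists_subgraph_of_shortCycleEdges [Finite V] (ht : 1 ≤ t) (hst : s * t ≤ k)
    (hz : k < {w | s(z, w) ∈ shortCycleEdges G t}.ncard) :
    ∃ H : G.Subgraph, z ∈ H.verts ∧ H.verts.ncard + s ≤ H.edgeSet.ncard + 1 ∧
      H.verts.ncard + s ≤ s * t + 1 := by
  induction s with
  | zero => exact ⟨G.singletonSubgraph z, by simp⟩
  | succ s ih =>
    rw [add_one_mul] at hst ⊢
    obtain ⟨H, hzH, hexcess, hverts⟩ := ih (by omega)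
    obtain ⟨w, hw, hwH⟩ : ∃ w ∈ {w | s(z, w) ∈ shortCycleEdges G t}, w ∉ H.verts :=
      Set.exists_mem_notMem_of_ncard_lt_ncard (by omega)
    obtain ⟨c, hc, hct, hwc⟩ := exists_isCycle_of_mem_shortCycleEdges hw
    obtain ⟨hexcess', hverts'⟩ := ncard_toSubgraph_sup_lt c hc.isTrail hzH hzH
      ⟨_, hwc, fun h => hwH (H.edge_vert (Subgraph.mem_edgeSet.1 h).symm)⟩
    exact ⟨c.toSubgraph ⊔ H, Or.inr hzH, by omega, by omega⟩

lemma degree_le_degree_deleteEdges_shortCycleEdges_add [Finite V] [G.LocallyFinite]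
    [(G.deleteEdges (shortCycleEdges G t)).LocallyFinite]
    (ht : 1 ≤ t) (hst : s * t ≤ k) (hz : ¬ HasDenseSubgraphAt G z k s) :
    G.degree z ≤ (G.deleteEdges (shortCycleEdges G t)).degree z + k := by
  have hk : {w | s(z, w) ∈ shortCycleEdges G t}.ncard ≤ k := by
    contrapose! hz
    obtain ⟨H, hzH, hexcess, hverts⟩ := exists_subgraph_of_shortCycleEdges ht hst hz
    exact ⟨H, hzH, by omega, by omega⟩
  have hsplit : G.neighborSet z ⊆ (G.deleteEdges (shortCycleEdges G t)).neighborSet z ∪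
      {w | s(z, w) ∈ shortCycleEdges G t} := fun w hw => by
    by_cases he : s(z, w) ∈ shortCycleEdges G t
    · exact Or.inr he
    · exact Or.inl (deleteEdges_adj.2 ⟨hw, he⟩)
  have := (Set.ncard_le_ncard hsplit).trans (Set.ncard_union_le _ _)
  simp only [← coe_neighborFinset, Set.ncard_coe_finset, card_neighborFinset_eq_degree] at this
  omega

end ShortCycles

section PathCounting

variable {s d m : ℕ} {u v : V} [DecidableEq V] [G.LocallyFinite]

/-- The paths of length `m` from `u` to `v`, as a finite set. -/
def pathFinset (G : SimpleGraph V) [G.LocallyFinite] (m : ℕ) (u v : V) : Finset (G.Walk u v) :=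
  {p ∈ G.finsetWalkLength m u v | p.IsPath}

lemma mem_pathFinset {p : G.Walk u v} : p ∈ pathFinset G m u v ↔ p.IsPath ∧ p.length = m := by
  rw [pathFinset, mem_filter, mem_finsetWalkLength_iff, and_comm]

lemma le_card_neighborFinset_sdiff_support {p : G.Walk u v} (h : d + p.length ≤ G.degree v) :
    d ≤ #(G.neighborFinset v \ p.support.toFinset) := by
  have hsplit : G.neighborFinset v ⊆
      (G.neighborFinset v \ p.support.toFinset) ∪ p.support.toFinset.erase v := fun w hw => by
    have : w ≠ v := (G.mem_neighborFinset v w).1 hw |>.ne'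
    grind
  have hN := (card_le_card hsplit).trans (card_union_le _ _)
  have hsupport := p.support.toFinset_card_le
  rw [card_neighborFinset_eq_degree, card_erase_of_mem (by simp)] at hN
  rw [Walk.length_support] at hsupport
  omega

lemma sum_card_pathFinset_mul_le [Fintype V] (hdeg : ∀ v, d + m ≤ G.degree v) (u : V) :
    (∑ v, #(pathFinset G m u v)) * d ≤ ∑ v, #(pathFinset G (m + 1) u v) := by
  classical
  let extendsTo (a b : Σ v, G.Walk u v) : Prop := ∃ h : G.Adj a.1 b.1, a.2.concat h = b.2
  simp only [← card_sigma]
  refine (card_mul_le_card_mul extendsTo (n := 1) ?_ ?_).trans_eq (mul_one _)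
  · rintro ⟨v, p⟩ hp
    obtain ⟨hpath, rfl⟩ := mem_pathFinset.1 (mem_sigma.1 hp).2
    refine (le_card_neighborFinset_sdiff_support (hdeg v)).trans
      (card_le_card_of_surjOn Sigma.fst fun w hw => ?_)
    obtain ⟨hvw, hwp⟩ : G.Adj v w ∧ w ∉ p.support := by simpa using hw
    refine ⟨⟨w, p.concat hvw⟩, ?_, rfl⟩
    rw [mem_coe, mem_bipartiteAbove, mem_sigma, mem_pathFinset]
    exact ⟨⟨mem_univ _, hpath.concat hwp hvw, p.length_concat hvw⟩, hvw, rfl⟩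
  · rintro ⟨w, q⟩ -
    refine card_le_one.2 fun a ha b hb => ?_
    obtain ⟨ha', hqa⟩ := (mem_bipartiteBelow extendsTo).1 ha |>.2
    obtain ⟨hb', hqb⟩ := (mem_bipartiteBelow extendsTo).1 hb |>.2
    obtain ⟨heq, hcopy⟩ := Walk.concat_inj (hqa.trans hqb.symm)
    obtain ⟨a, p⟩ := a
    obtain ⟨b, p'⟩ := b
    obtain rfl : a = b := heq
    exact congrArg _ hcopy

lemma pow_le_sum_card_pathFinset [Fintype V] (hdeg : ∀ v, d + m ≤ G.degree v) (u : V) :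
    d ^ m ≤ ∑ v, #(pathFinset G m u v) := by
  induction m with
  | zero =>
    have hnil : Walk.nil ∈ pathFinset G 0 u u := mem_pathFinset.2 ⟨.nil, rfl⟩
    exact (card_pos.2 ⟨_, hnil⟩).trans_le
      (single_le_sum (f := fun v => #(pathFinset G 0 u v)) (fun _ _ => Nat.zero_le _) (mem_univ u))
  | succ m ih =>
    calc d ^ (m + 1) = d ^ m * d := pow_succ d m
      _ ≤ (∑ v, #(pathFinset G m u v)) * d :=
        Nat.mul_le_mul_right d (ih fun v => (hdeg v).trans' (by omega))
      _ ≤ _ := sum_card_pathFinset_mul_le (fun v => (hdeg v).trans' (by omega)) u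

lemma exists_le_card_pathFinset [Fintype V] (hdeg : ∀ v, d + m ≤ G.degree v)
    (hd : (s - 1) * Fintype.card V < d ^ m) (u : V) : ∃ v, s ≤ #(pathFinset G m u v) := by
  obtain ⟨v, -, hv⟩ : ∃ v ∈ univ, s - 1 < #(pathFinset G m u v) := by
    refine exists_lt_of_sum_lt ?_
    rw [sum_const, card_univ, smul_eq_mul, mul_comm]
    exact hd.trans_le (pow_le_sum_card_pathFinset hdeg u)
  exact ⟨v, by omega⟩

end PathCounting

section DenseGraphs

variable {k s t d δ : ℕ}

lemma hasDenseSubgraph_of_le_degree [Fintype V] [Nonempty V] [G.LocallyFinite]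
    (hs : 2 ≤ s) (ht : 1 ≤ t) (hst : s * t ≤ k) (hd : (s - 1) * Fintype.card V < d ^ t)
    (hdeg : ∀ v, d + t + k ≤ G.degree v) : HasDenseSubgraph G k s := by
  classical
  by_contra hG
  have hat (x : V) : ¬ HasDenseSubgraphAt G x k s := fun hx =>
    hG (hx.hasDenseSubgraph hs ((hdeg x).trans' (by omega)))
  let G' := G.deleteEdges (shortCycleEdges G t)
  have : G'.LocallyFinite := fun _ => Fintype.ofFinite _
  have hdeg' (v : V) : d + t ≤ G'.degree v := by
    have hdel := degree_le_degree_deleteEdges_shortCycleEdges_add ht hst (hat v)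
    exact Nat.le_of_add_le_add_right ((hdeg v).trans hdel)
  obtain ⟨x⟩ := ‹Nonempty V›
  obtain ⟨y, hy⟩ := exists_le_card_pathFinset hdeg' hd x
  have hx : HasDenseSubgraphAt G' x k s := hasDenseSubgraphAt_of_paths hst ht
    (lt_egirth_deleteEdges_shortCycleEdges G t) _ (fun _ => mem_pathFinset.1) hy
  exact hat x (hx.mono (G.deleteEdges_le _))

lemma ncard_edgeSet_le_ncard_edgeSet_deleteVerts_add [Finite V] (H : G.Subgraph) (v : V) :
    H.edgeSet.ncard ≤ (H.deleteVerts {v}).edgeSet.ncard + (H.neighborSet v).ncard := by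
  have hsplit : H.edgeSet ⊆ (H.deleteVerts {v}).edgeSet ∪ (s(v, ·)) '' H.neighborSet v := by
    intro e he
    induction e with | _ a b =>
    have hab : H.Adj a b := Subgraph.mem_edgeSet.1 he
    by_cases hv : v ∈ s(a, b)
    · obtain ⟨w, hw⟩ := hv
      rw [hw, Subgraph.mem_edgeSet] at he
      exact Or.inr ⟨w, he, hw.symm⟩
    · rw [Sym2.mem_iff, not_or] at hv
      exact Or.inl (Subgraph.deleteVerts_adj.2
        ⟨H.edge_vert hab, Ne.symm hv.1, H.edge_vert hab.symm, Ne.symm hv.2, hab⟩)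
  exact (Set.ncard_le_ncard hsplit).trans ((Set.ncard_union_le _ _).trans
    (Nat.add_le_add_left Set.ncard_image_le _))

/-- Removing a vertex of degree below `δ` preserves the inequality `δ * #vertices < #edges`, so a
minimal subgraph satisfying it has minimum degree at least `δ`. -/
lemma exists_subgraph_le_ncard_neighborSet [Finite V] (h : δ * Nat.card V < G.edgeSet.ncard) :
    ∃ H : G.Subgraph, H.verts.Nonempty ∧ ∀ v ∈ H.verts, δ ≤ (H.neighborSet v).ncard := by
  obtain ⟨H, hH, hmin⟩ := exists_minimalFor_of_wellFoundedLT
    (fun H : G.Subgraph => δ * H.verts.ncard < H.edgeSet.ncard) (·.verts.ncard)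
    ⟨⊤, by simpa [Set.ncard_univ] using h⟩
  refine ⟨H, ?_, fun v hv => ?_⟩
  · by_contra! hempty
    have hedges : H.edgeSet = ∅ := by
      refine Set.eq_empty_of_forall_notMem fun e he => ?_
      induction e with | _ a b =>
      exact Set.notMem_empty a (hempty ▸ H.edge_vert (Subgraph.mem_edgeSet.1 he))
    simp [hedges] at hH
  · by_contra! hlow
    have hverts : (H.deleteVerts {v}).verts.ncard + 1 = H.verts.ncard := by
      rw [Subgraph.deleteVerts_verts, Set.ncard_sdiff_singleton_add_one hv]
    have hedges := ncard_edgeSet_le_ncard_edgeSet_deleteVerts_add H v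
    have hdense : δ * (H.deleteVerts {v}).verts.ncard < (H.deleteVerts {v}).edgeSet.ncard := by
      rw [← hverts, mul_add_one] at hH
      omega
    have hle : H.verts.ncard ≤ (H.deleteVerts {v}).verts.ncard :=
      hmin hdense (by dsimp only; omega)
    omega

lemma hasDenseSubgraph_of_lt_ncard_edgeSet [Fintype V]
    (hs : 2 ≤ s) (ht : 1 ≤ t) (hst : s * t ≤ k) (hd : (s - 1) * Fintype.card V < d ^ t)
    (hG : (d + t + k) * Fintype.card V < G.edgeSet.ncard) : HasDenseSubgraph G k s := by
  classical
  obtain ⟨H, hne, hdeg⟩ := exists_subgraph_le_ncard_neighborSet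
    (Nat.card_eq_fintype_card (α := V) ▸ hG)
  have := hne.to_subtype
  have : Fintype H.verts := Fintype.ofFinite _
  have hdense : HasDenseSubgraph H.coe k s := by
    refine hasDenseSubgraph_of_le_degree hs ht hst (hd.trans_le' ?_) fun v => ?_
    · exact Nat.mul_le_mul_left _ (Fintype.card_subtype_le _)
    · rw [Subgraph.coe_degree, ← Subgraph.finset_card_neighborSet_eq_degree,
        ← Set.ncard_eq_toFinset_card']
      exact hdeg v v.2
  exact hdense.of_isContained ⟨H.coeCopy⟩

end DenseGraphs

section Hypergraphs

variable {α : Type*} [DecidableEq α] {E : Finset (Finset α)} {S : Finset α} {e : Sym2 α}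
  {d k q r s t v M : ℕ}

/-- The link of `S` in the hypergraph `E`: the graph of the pairs disjoint from `S` whose union
with `S` is an edge of `E`. -/
def linkGraph (E : Finset (Finset α)) (S : Finset α) : SimpleGraph α :=
  fromEdgeSet {e | Disjoint S e.toFinset ∧ S ∪ e.toFinset ∈ E}

/-- Every `k` edges of the hypergraph `E` cover more than `v` vertices. -/
def IsSparse (E : Finset (Finset α)) (k v : ℕ) : Prop :=
  ∀ E' ⊆ E, #E' = k → v < #(E'.biUnion id)

lemma mem_edgeSet_linkGraph : e ∈ (linkGraph E S).edgeSet ↔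
    (Disjoint S e.toFinset ∧ S ∪ e.toFinset ∈ E) ∧ ¬ e.IsDiag := by
  rw [linkGraph, edgeSet_fromEdgeSet]
  rfl

lemma injOn_union_toFinset :
    Set.InjOn (fun e : Sym2 α => S ∪ e.toFinset) (linkGraph E S).edgeSet := by
  intro e he f hf hef
  have hdisj {e} (he : e ∈ (linkGraph E S).edgeSet) := (mem_edgeSet_linkGraph.1 he).1.1
  have : e.toFinset = f.toFinset := by
    rw [← union_sdiff_cancel_left (hdisj he), ← union_sdiff_cancel_left (hdisj hf)]
    exact congrArg (· \ S) hef
  exact Sym2.ext fun x => by rw [← Sym2.mem_toFinset, this, Sym2.mem_toFinset]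

lemma card_filter_subset_le_ncard_edgeSet_linkGraph [Finite α] (hE : ∀ e ∈ E, #e = #S + 2) :
    #{e ∈ E | S ⊆ e} ≤ (linkGraph E S).edgeSet.ncard := by
  rw [← Set.ncard_coe_finset]
  refine (Set.ncard_le_ncard fun e he => ?_).trans
    (Set.ncard_image_le (f := fun e : Sym2 α => S ∪ e.toFinset))
  obtain ⟨heE, hSe⟩ := mem_filter.1 he
  obtain ⟨a, b, hab, hpair⟩ : ∃ a b, a ≠ b ∧ e \ S = {a, b} := by
    rw [← card_eq_two, card_sdiff_of_subset hSe, hE e heE, Nat.add_sub_cancel_left]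
  have hunion : S ∪ s(a, b).toFinset = e := by
    rw [Sym2.toFinset_mk_eq, ← hpair, union_sdiff_of_subset hSe]
  refine ⟨s(a, b), mem_edgeSet_linkGraph.2 ⟨⟨?_, hunion ▸ heE⟩, by simpa using hab⟩, hunion⟩
  rw [Sym2.toFinset_mk_eq, ← hpair]
  exact disjoint_sdiff

lemma IsSparse.not_hasDenseSubgraph_linkGraph [Finite α] (hE : IsSparse E k v)
    (hv : k + #S + 2 ≤ v + s) : ¬ HasDenseSubgraph (linkGraph E S) k s := by
  rintro ⟨H, hedges, hverts⟩
  obtain ⟨F, hFH, hF⟩ := Set.exists_subset_card_eq hedges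
  lift F to Finset (Sym2 α) using F.toFinite
  rw [Set.ncard_coe_finset] at hF
  have hFlink := hFH.trans H.edgeSet_subset
  have hcover : v < #((F.image fun e => S ∪ e.toFinset).biUnion id) := by
    refine hE _ (image_subset_iff.2 fun e he => ?_) ?_
    · exact (mem_edgeSet_linkGraph.1 (hFlink he)).1.2
    · rw [card_image_of_injOn (injOn_union_toFinset.mono hFlink), hF]
  have hsubset : (((F.image fun e => S ∪ e.toFinset).biUnion id : Finset α) : Set α) ⊆
      S ∪ H.verts := by
    intro x hx
    simp only [coe_biUnion, image_biUnion, id] at hx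
    obtain ⟨e, he, hxe⟩ : ∃ e ∈ F, x ∈ S ∪ e.toFinset := by simpa using hx
    refine (mem_union.1 hxe).imp_right fun hxe => ?_
    exact H.mem_verts_of_mem_edge (hFH he) (Sym2.mem_toFinset.1 hxe)
  have := (Set.ncard_le_ncard hsubset).trans (Set.ncard_union_le _ _)
  rw [Set.ncard_coe_finset, Set.ncard_coe_finset] at this
  omega

lemma IsSparse.card_filter_subset_le [Fintype α] (hE : IsSparse E k v)
    (huniform : ∀ e ∈ E, #e = #S + 2) (hv : k + #S + 2 ≤ v + s) (hs : 2 ≤ s) (ht : 1 ≤ t)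
    (hst : s * t ≤ k) (hd : (s - 1) * Fintype.card α < d ^ t) :
    #{e ∈ E | S ⊆ e} ≤ (d + t + k) * Fintype.card α := by
  refine (card_filter_subset_le_ncard_edgeSet_linkGraph huniform).trans ?_
  by_contra! hlarge
  exact hE.not_hasDenseSubgraph_linkGraph hv
    (hasDenseSubgraph_of_lt_ncard_edgeSet hs ht hst hd hlarge)

lemma card_mul_choose_le_choose_mul [Fintype α] (hE : ∀ e ∈ E, #e = r)
    (hM : ∀ S : Finset α, #S = q → #{e ∈ E | S ⊆ e} ≤ M) :
    #E * r.choose q ≤ (Fintype.card α).choose q * M := by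
  rw [← card_univ, ← card_powersetCard]
  refine card_mul_le_card_mul' (fun S e : Finset α => S ⊆ e) (fun e he => ?_) fun S hS =>
    hM S (mem_powersetCard.1 hS).2
  rw [← hE e he, ← card_powersetCard]
  refine card_le_card fun S hS => ?_
  obtain ⟨hSe, hScard⟩ := mem_powersetCard.1 hS
  exact mem_bipartiteBelow _ |>.2 ⟨mem_powersetCard.2 ⟨subset_univ S, hScard⟩, hSe⟩

lemma card_mul_factorial_le_of_card_filter_subset_le [Fintype α] (hE : ∀ e ∈ E, #e = q + 2)
    (hM : ∀ S : Finset α, #S = q → #{e ∈ E | S ⊆ e} ≤ M) :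
    #E * (q + 2).factorial ≤ 2 * (Fintype.card α ^ q * M) := by
  calc #E * (q + 2).factorial = #E * (q + 2).choose q * q.factorial * 2 := by
        rw [← Nat.add_choose_mul_factorial_mul_factorial q 2, Nat.factorial_two,
          Nat.choose_symm_add]
        ring
    _ ≤ (Fintype.card α).choose q * M * q.factorial * 2 := by
        exact Nat.mul_le_mul_right _
          (Nat.mul_le_mul_right _ (card_mul_choose_le_choose_mul hE hM))
    _ = 2 * ((Fintype.card α).descFactorial q * M) := by
        rw [Nat.descFactorial_eq_factorial_mul_choose]
        ring
    _ ≤ 2 * (Fintype.card α ^ q * M) := by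
        gcongr
        exact Nat.descFactorial_le_pow _ _

lemma IsSparse.card_mul_factorial_le [Fintype α] (hE : IsSparse E k v)
    (huniform : ∀ e ∈ E, #e = r) (hr : 2 ≤ r) (hv : k + r ≤ v + s) (hs : 2 ≤ s) (ht : 1 ≤ t)
    (hst : s * t ≤ k) (hd : (s - 1) * Fintype.card α < d ^ t) :
    #E * r.factorial ≤ 2 * (d + t + k) * Fintype.card α ^ (r - 1) := by
  obtain ⟨q, rfl⟩ := Nat.exists_eq_add_of_le' hr
  have hcodegree (S : Finset α) (hS : #S = q) :
      #{e ∈ E | S ⊆ e} ≤ (d + t + k) * Fintype.card α :=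
    hE.card_filter_subset_le (hS ▸ huniform) (hS ▸ hv) hs ht hst hd
  calc #E * (q + 2).factorial ≤
        2 * (Fintype.card α ^ q * ((d + t + k) * Fintype.card α)) :=
        card_mul_factorial_le_of_card_filter_subset_le huniform hcodegree
    _ = 2 * (d + t + k) * Fintype.card α ^ (q + 1) := by ring

end Hypergraphs

section Bound

variable {r v k t n : ℕ}

lemma exists_lt_pow_and_cast_le_rpow_add_one {M : ℕ} (ht : 1 ≤ t) :
    ∃ d : ℕ, M < d ^ t ∧ (d : ℝ) ≤ (M : ℝ) ^ ((1 : ℝ) / t) + 1 := by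
  refine ⟨⌊(M : ℝ) ^ ((1 : ℝ) / t)⌋₊ + 1, ?_, ?_⟩
  · have hpow : ((M : ℝ) ^ ((1 : ℝ) / t)) ^ t = M := by
      rw [one_div, Real.rpow_inv_natCast_pow M.cast_nonneg (by omega)]
    have hlt := pow_lt_pow_left₀ (Nat.lt_floor_add_one ((M : ℝ) ^ ((1 : ℝ) / t)))
      (by positivity) (by omega : t ≠ 0)
    rw [hpow] at hlt
    exact_mod_cast hlt
  · push_cast
    gcongr
    exact Nat.floor_le (by positivity)

lemma fBES_le {B : ℝ} (hB : 0 ≤ B)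
    (h : ∀ E : Finset (Finset (Fin n)), (∀ e ∈ E, #e = r) → IsSparse E k v → (#E : ℝ) ≤ B) :
    (fBES n r k v : ℝ) ≤ B + 1 := by
  rw [fBES, Nat.cast_add_one]
  gcongr
  refine (Nat.le_floor_iff hB).1 (csSup_le' ?_)
  rintro m ⟨E, huniform, hsparse, rfl⟩
  refine Nat.le_floor (h E huniform fun E' hE' hcard => ?_)
  have := hsparse E' hE' hcard
  omega

theorem statement8_general (hr : 2 ≤ r) (hv : v + 2 ≤ k + r) (ht : 1 ≤ t)
    (hst : (k + r - v) * t ≤ k) (hn : 1 ≤ n) :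
    (fBES n r k (v : ℤ) : ℝ) ≤
      2 * ((k + r - v - 1 : ℕ) : ℝ) ^ ((1 : ℝ) / t) / (r.factorial : ℝ) *
          (n : ℝ) ^ ((r : ℝ) - 1 + 1 / t) +
        (2 * (1 + t + k) / (r.factorial : ℝ) + 1) * (n : ℝ) ^ ((r : ℝ) - 1) := by
  have hn0 : (0 : ℝ) < n := by exact_mod_cast hn
  have hpow : (n : ℝ) ^ ((r : ℝ) - 1) = (n : ℝ) ^ (r - 1) := by
    rw [← Real.rpow_natCast, Nat.cast_pred (by omega)]
  obtain ⟨d, hd, hd_le⟩ :=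
    exists_lt_pow_and_cast_le_rpow_add_one (M := (k + r - v - 1) * n) ht
  rw [Nat.cast_mul, Real.mul_rpow (Nat.cast_nonneg _) hn0.le] at hd_le
  have hsparse (E : Finset (Finset (Fin n))) (huniform : ∀ e ∈ E, #e = r)
      (hE : IsSparse E k v) :
      (#E : ℝ) ≤ 2 * (d + t + k) * (n : ℝ) ^ (r - 1) / (r.factorial : ℝ) := by
    rw [le_div_iff₀ (by positivity)]
    have := hE.card_mul_factorial_le (s := k + r - v) huniform hr (by omega) (by omega) ht hst
      (by rwa [Fintype.card_fin])
    rw [Fintype.card_fin] at this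
    exact_mod_cast this
  rw [Real.rpow_add hn0, hpow]
  calc (fBES n r k (v : ℤ) : ℝ)
      ≤ 2 * (d + t + k) * (n : ℝ) ^ (r - 1) / (r.factorial : ℝ) + 1 :=
        fBES_le (by positivity) hsparse
    _ ≤ 2 * (((k + r - v - 1 : ℕ) : ℝ) ^ ((1 : ℝ) / t) * (n : ℝ) ^ ((1 : ℝ) / t) + 1 + t + k) *
          (n : ℝ) ^ (r - 1) / (r.factorial : ℝ) + (n : ℝ) ^ (r - 1) := by
        gcongr
        exact one_le_pow₀ (by exact_mod_cast hn)
    _ = _ := by ring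

end Bound

end

/-- For `r ≥ 2`, `(k+2r)/2 ≤ v ≤ k+r-2` and `C = (k+r-v-1)^{1/⌊k/(k+r-v)⌋}`, there is a
constant `D` such that for every `n ≥ k`,
`f^{(r)}(n,v,k) ≤ (2C/r!)·n^{r-1+1/⌊k/(k+r-v)⌋} + D·n^{r-1}`. -/
theorem statement8 (r v k : ℕ) (C : ℝ)
    (hr : 2 ≤ r) (hv1 : k + 2 * r ≤ 2 * v) (hv2 : v ≤ k + r - 2)
    (hC : C = ((k + r - v - 1 : ℕ) : ℝ) ^ ((1 : ℝ) / ((k / (k + r - v) : ℕ) : ℝ))) :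
    ∃ D : ℝ, ∀ n : ℕ, k ≤ n →
      (fBES n r k (v : ℤ) : ℝ) ≤
        (2 * C / (r.factorial : ℝ)) *
            (n : ℝ) ^ ((r : ℝ) - 1 + 1 / ((k / (k + r - v) : ℕ) : ℝ)) +
          D * (n : ℝ) ^ ((r : ℝ) - 1) := by
  subst hC
  have ht : 1 ≤ k / (k + r - v) := (Nat.one_le_div_iff (by omega)).2 (by omega)
  exact ⟨_, fun n hn => statement8_general hr (by omega) ht (Nat.mul_div_le _ _) (by omega)⟩
end

section
/- Let q ≥ −1 and k ≥ 2q+6 be integers, let h = ⌊k/(q+3)⌋. Let F be a finite simple graph with at least one vertex whose minimum degree δ satisfies δ ≥ q+3, and suppose F is H^{(2)}(k,q)-free. Then the number of vertices of F satisfies |V(F)| > (δ−q−2)^h/(q+2). -/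
/-- An edge set `E` (of an `r`-uniform hypergraph) is `H^{(r)}(k,q)`-free if for every
integer `i` with `q + r + 1 ≤ i ≤ k`, every `i` pairwise distinct edges together cover
at least `i - q` vertices.  For `r = 2` the range of `i` is `q + 3 ≤ i ≤ k`. -/
def HFree {V : Type*} [DecidableEq V] (r k : ℕ) (q : ℤ) (E : Finset (Finset V)) : Prop :=
  ∀ i : ℕ, q + r + 1 ≤ (i : ℤ) → i ≤ k → ∀ E' ⊆ E, E'.card = i →
    (i : ℤ) - q ≤ ((E'.biUnion id).card : ℤ)

/-!
Write `p = q + 2` and `m = h - 1`, and fix a root `r`. If `p + 1` neighbours of a vertex `u` could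
all be reached from `r` by walks of length at most `m` avoiding `u`, then the union of these walks
would be connected, hence have at most one vertex more than it has edges; joining `u` to the `p + 1`
neighbours adds one vertex and `p + 1` edges, which contradicts freeness. So all but at most `p`
neighbours of `u` are private: within `m` steps they are reached from `r` only through `u`. In the
tree grown from `r` through private neighbours, vertices at a common level below `m` have disjoint
sets of private neighbours, so each of the first `m` steps multiplies the level size by at least
`δ - p`. In the last step a vertex may be shared, but by at most `p` parents.
-/

section Reachability

variable {V : Type*} {G : SimpleGraph V} {r u v x : V} {m n : ℕ}

/-- There is a walk from `r` to `x` of length at most `m` that does not visit `u`. -/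
def ReachableAvoiding (G : SimpleGraph V) (r u : V) (m : ℕ) (x : V) : Prop :=
  ∃ w : G.Walk r x, w.length ≤ m ∧ u ∉ w.support

theorem ReachableAvoiding.mono (h : ReachableAvoiding G r u m x) (hmn : m ≤ n) :
    ReachableAvoiding G r u n x :=
  let ⟨w, hw, hu⟩ := h
  ⟨w, hw.trans hmn, hu⟩

theorem ReachableAvoiding.step (h : ReachableAvoiding G r u m v) (hvx : G.Adj v x) (hxu : x ≠ u) :
    ReachableAvoiding G r u (m + 1) x := by
  obtain ⟨w, hw, hu⟩ := h
  refine ⟨w.concat hvx, by simpa using hw, ?_⟩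
  simpa [SimpleGraph.Walk.support_concat, hu] using hxu.symm

theorem ReachableAvoiding.ne_root (h : ReachableAvoiding G r u m x) : u ≠ r := by
  obtain ⟨w, -, hu⟩ := h
  rintro rfl
  exact hu w.start_mem_support

theorem ReachableAvoiding.of_edist_le (hx : G.edist r x ≤ n) (hu : n ≤ G.edist r u)
    (hxu : x ≠ u) : ReachableAvoiding G r u n x := by
  classical
  obtain ⟨w, hw⟩ := SimpleGraph.exists_walk_of_edist_ne_top (ne_top_of_le_ne_top (by simp) hx)
  have hwn : w.length ≤ n := by exact_mod_cast hw.trans_le hx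
  refine ⟨w, hwn, fun hmem => ?_⟩
  have hlt : (w.takeUntil u hmem).length < w.length := w.length_takeUntil_lt_length hmem hxu.symm
  have hle : n ≤ (w.takeUntil u hmem).length := by
    exact_mod_cast hu.trans (w.takeUntil u hmem).edist_le
  omega

end Reachability

section ConnectedSubgraphs

variable {V : Type*} {G : SimpleGraph V} {r u : V} {m : ℕ}

theorem verts_ncard_le_edgeSet_ncard_add_one {H : G.Subgraph} (hH : H.Connected) :
    H.verts.ncard ≤ H.edgeSet.ncard + 1 := by
  have hedges : H.edgeSet.ncard = Nat.card H.coe.edgeSet := by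
    rw [← H.image_coe_edgeSet_coe, Nat.card_coe_set_eq,
      Set.ncard_image_of_injective _ (Sym2.map.injective Subtype.val_injective)]
  rw [hedges, ← Nat.card_coe_set_eq]
  exact hH.coe.card_vert_le_card_edgeSet_add_one

theorem edgeSet_toSubgraph_ncard_le_length {x y : V} (w : G.Walk x y) :
    w.toSubgraph.edgeSet.ncard ≤ w.length := by
  classical
  have hedges : w.toSubgraph.edgeSet = w.edges.toFinset := by
    ext e
    simp
  rw [hedges, Set.ncard_coe_finset, ← w.length_edges]
  exact w.edges.toFinset_card_le

theorem exists_connected_subgraph_avoiding (hur : u ≠ r) (N : Finset V)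
    (hN : ∀ x ∈ N, ReachableAvoiding G r u m x) :
    ∃ H : G.Subgraph, H.Connected ∧ r ∈ H.verts ∧ ↑N ⊆ H.verts ∧ u ∉ H.verts ∧
      H.verts.Finite ∧ H.edgeSet.ncard ≤ N.card * m := by
  classical
  induction N using Finset.induction_on with
  | empty =>
    exact ⟨G.singletonSubgraph r, SimpleGraph.Subgraph.singletonSubgraph_connected,
      by simp, by simp, by simpa using hur, by simp, by simp⟩
  | insert x N hx ih =>
    obtain ⟨H, hconn, hr, hNH, hu, hfin, hcard⟩ :=
      ih fun y hy => hN y (Finset.mem_insert_of_mem hy)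
    obtain ⟨w, hw, huw⟩ := hN x (Finset.mem_insert_self x N)
    refine ⟨H ⊔ w.toSubgraph, SimpleGraph.Subgraph.connected_sup hconn.preconnected
      w.toSubgraph_connected.preconnected ⟨r, hr, by simp⟩, Or.inl hr, ?_, ?_,
      ?_, ?_⟩
    · rw [Finset.coe_insert, Set.insert_subset_iff]
      exact ⟨Or.inr (by simp), hNH.trans Set.subset_union_left⟩
    · simpa [hu] using huw
    · rw [SimpleGraph.Subgraph.verts_sup, SimpleGraph.Walk.verts_toSubgraph]
      exact hfin.union (List.finite_toSet _)
    · rw [SimpleGraph.Subgraph.edgeSet_sup, Finset.card_insert_of_notMem hx, add_one_mul]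
      exact (Set.ncard_union_le _ _).trans
        (add_le_add hcard ((edgeSet_toSubgraph_ncard_le_length w).trans hw))

end ConnectedSubgraphs

section Sparsity

variable {V : Type*} {G : SimpleGraph V} {r u : V} {p k m : ℕ}

/-- Any `i` edges of `G`, where `p < i ≤ k`, span at least `i + 2 - p` vertices. For `p = q + 2`
this is `H^{(2)}(k, q)`-freeness; the form below avoids subtraction. -/
def IsLocallySparse (G : SimpleGraph V) (p k : ℕ) : Prop :=
  ∀ (S : Finset (Sym2 V)) (U : Finset V), ↑S ⊆ G.edgeSet → S ⊆ U.sym2 →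
    p < S.card → S.card ≤ k → S.card + 2 ≤ U.card + p

theorem IsLocallySparse.card_le_of_adj (hG : IsLocallySparse G p k) {S : Finset (Sym2 V)}
    {U N : Finset V} (hSG : ↑S ⊆ G.edgeSet) (hSU : S ⊆ U.sym2) (hUS : U.card ≤ S.card + 1)
    (hu : u ∉ U) (hNU : N ⊆ U) (hadj : ∀ x ∈ N, G.Adj u x) (hk : S.card + N.card ≤ k) :
    N.card ≤ p := by
  classical
  by_contra! hp
  let star : Finset (Sym2 V) := N.image (s(u, ·))
  have hstar_card : star.card = N.card :=
    Finset.card_image_of_injective N fun _ _ => Sym2.congr_right.1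
  have hdisj : Disjoint S star := Finset.disjoint_left.2 fun e heS hestar => by
    obtain ⟨x, -, rfl⟩ := Finset.mem_image.1 hestar
    exact hu (Finset.mk_mem_sym2_iff.1 (hSU heS)).1
  have hcard : (S ∪ star).card = S.card + N.card := by
    rw [Finset.card_union_of_disjoint hdisj, hstar_card]
  have hedges : ↑(S ∪ star) ⊆ G.edgeSet := by
    rw [Finset.coe_union, Finset.coe_image]
    exact Set.union_subset hSG (Set.image_subset_iff.2 hadj)
  have hspan : S ∪ star ⊆ (insert u U).sym2 := by
    refine Finset.union_subset (hSU.trans (Finset.sym2_mono (Finset.subset_insert u U))) ?_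
    refine Finset.image_subset_iff.2 fun x hx => Finset.mk_mem_sym2_iff.2 ?_
    exact ⟨Finset.mem_insert_self u U, Finset.mem_insert_of_mem (hNU hx)⟩
  have hsparse := hG (S ∪ star) (insert u U) hedges hspan (by omega) (by omega)
  rw [hcard, Finset.card_insert_of_notMem hu] at hsparse
  omega

theorem IsLocallySparse.card_le_of_adj_connected (hG : IsLocallySparse G p k)
    {H : G.Subgraph} (hH : H.Connected) (hfin : H.verts.Finite) (hu : u ∉ H.verts) {N : Finset V}
    (hNH : ↑N ⊆ H.verts) (hadj : ∀ x ∈ N, G.Adj u x) (hk : H.edgeSet.ncard + N.card ≤ k) :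
    N.card ≤ p := by
  obtain ⟨U, hU⟩ := hfin.exists_finset_coe
  have hHU : H.edgeSet ⊆ U.sym2 := fun e he => Finset.mem_sym2_iff.2 fun v hv => by
    simpa [← hU] using H.mem_verts_of_mem_edge he hv
  obtain ⟨S, hS⟩ := (U.sym2.finite_toSet.subset hHU).exists_finset_coe
  have hcard := verts_ncard_le_edgeSet_ncard_add_one hH
  have hHG := H.edgeSet_subset
  rw [← hU] at hNH hu
  rw [← hS, Set.ncard_coe_finset] at hk
  rw [← hU, ← hS, Set.ncard_coe_finset, Set.ncard_coe_finset] at hcard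
  rw [← hS] at hHU hHG
  exact hG.card_le_of_adj hHG (Finset.coe_subset.1 hHU) hcard hu (Finset.coe_subset.1 hNH) hadj hk

theorem IsLocallySparse.card_le_of_adj_reachableAvoiding (hG : IsLocallySparse G p k)
    (hk : (p + 1) * (m + 1) ≤ k) {N : Finset V}
    (hN : ∀ x ∈ N, G.Adj u x ∧ ReachableAvoiding G r u m x) : N.card ≤ p := by
  by_contra! hp
  obtain ⟨M, hMN, hMcard⟩ := Finset.exists_subset_card_eq (show p + 1 ≤ N.card from hp)
  have hM : ∀ x ∈ M, G.Adj u x ∧ ReachableAvoiding G r u m x := fun x hx => hN x (hMN hx)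
  obtain ⟨y, hy⟩ : M.Nonempty := Finset.card_pos.1 (hMcard ▸ p.succ_pos)
  obtain ⟨H, hH, -, hMH, hu, hfin, hedges⟩ :=
    exists_connected_subgraph_avoiding (hM y hy).2.ne_root M fun x hx => (hM x hx).2
  have hMp : M.card ≤ p := by
    refine hG.card_le_of_adj_connected hH hfin hu hMH (fun x hx => (hM x hx).1) ?_
    calc H.edgeSet.ncard + M.card ≤ M.card * m + M.card := by gcongr
      _ = (p + 1) * (m + 1) := by rw [hMcard]; ring
      _ ≤ k := hk
  omega

end Sparsity

section PrivateNeighbors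

variable {V : Type*} {G : SimpleGraph V} [G.LocallyFinite] {r u v x : V} {p k m j : ℕ}

open Classical in
/-- The neighbours of `u` that cannot be reached from the root `r` within `m` steps except through
`u`: the children of `u` in the tree grown from `r`. -/
noncomputable def privateNeighbors (G : SimpleGraph V) [G.LocallyFinite] (r : V) (m : ℕ) (u : V) :
    Finset V :=
  {x ∈ G.neighborFinset u | ¬ ReachableAvoiding G r u m x}

theorem mem_privateNeighbors :
    x ∈ privateNeighbors G r m u ↔ G.Adj u x ∧ ¬ ReachableAvoiding G r u m x := by
  simp [privateNeighbors]

theorem IsLocallySparse.degree_le_card_privateNeighbors_add (hG : IsLocallySparse G p k)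
    (hk : (p + 1) * (m + 1) ≤ k) (r u : V) :
    G.degree u ≤ (privateNeighbors G r m u).card + p := by
  classical
  have hreach : (G.neighborFinset u \ privateNeighbors G r m u).card ≤ p := by
    refine hG.card_le_of_adj_reachableAvoiding hk (u := u) (r := r) fun x hx => ?_
    obtain ⟨hx, hpriv⟩ := Finset.mem_sdiff.1 hx
    have hadj : G.Adj u x := (G.mem_neighborFinset u x).1 hx
    exact ⟨hadj, by_contra fun hnot => hpriv (mem_privateNeighbors.2 ⟨hadj, hnot⟩)⟩
  have hsplit := Finset.card_le_card_sdiff_add_card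
    (s := G.neighborFinset u) (t := privateNeighbors G r m u)
  rw [G.card_neighborFinset_eq_degree] at hsplit
  omega

theorem edist_of_mem_privateNeighbors (hu : G.edist r u = j) (hjm : j ≤ m)
    (hx : x ∈ privateNeighbors G r m u) : G.edist r x = (j + 1 : ℕ) := by
  obtain ⟨hadj, hpriv⟩ := mem_privateNeighbors.1 hx
  apply le_antisymm
  · calc G.edist r x ≤ G.edist r u + G.edist u x := G.edist_triangle
      _ = (j + 1 : ℕ) := by rw [hu, SimpleGraph.edist_eq_one_iff_adj.2 hadj]; rfl
  · by_contra! hlt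
    have hle : G.edist r x ≤ j := Order.le_of_lt_add_one (by exact_mod_cast hlt)
    exact hpriv ((ReachableAvoiding.of_edist_le hle hu.ge hadj.ne').mono hjm)

theorem disjoint_privateNeighbors (hu : G.edist r u = j) (hv : G.edist r v = j) (hjm : j < m)
    (huv : u ≠ v) : Disjoint (privateNeighbors G r m u) (privateNeighbors G r m v) := by
  refine Finset.disjoint_left.2 fun x hxu hxv => ?_
  obtain ⟨hux, hpriv⟩ := mem_privateNeighbors.1 hxu
  obtain ⟨hvx, -⟩ := mem_privateNeighbors.1 hxv
  have hreach : ReachableAvoiding G r u j v := .of_edist_le hv.le hu.ge huv.symm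
  exact hpriv ((hreach.step hvx hux.ne').mono hjm)

end PrivateNeighbors

section Levels

variable {V : Type*} {G : SimpleGraph V} [G.LocallyFinite] {r u : V} {p k d m j : ℕ}

open Classical in
/-- The `j`-th level of the tree grown from `r` by passing from each vertex to its private
neighbours. -/
noncomputable def privateLevel (G : SimpleGraph V) [G.LocallyFinite] (r : V) (m : ℕ) :
    ℕ → Finset V
  | 0 => {r}
  | j + 1 => (privateLevel G r m j).biUnion (privateNeighbors G r m)

theorem edist_of_mem_privateLevel (hj : j ≤ m + 1) (hu : u ∈ privateLevel G r m j) :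
    G.edist r u = j := by
  classical
  induction j generalizing u with
  | zero =>
    obtain rfl : u = r := by simpa [privateLevel] using hu
    simp
  | succ j ih =>
    obtain ⟨v, hv, huv⟩ := Finset.mem_biUnion.1 hu
    exact edist_of_mem_privateNeighbors (ih (by omega) hv) (by omega) huv

theorem pow_le_card_privateLevel (hd : ∀ u, d ≤ (privateNeighbors G r m u).card) (hj : j ≤ m) :
    d ^ j ≤ (privateLevel G r m j).card := by
  classical
  induction j with
  | zero => simp [privateLevel]
  | succ j ih =>
    have hdisj : (privateLevel G r m j : Set V).PairwiseDisjoint (privateNeighbors G r m) :=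
      fun u hu v hv huv => disjoint_privateNeighbors (edist_of_mem_privateLevel (by omega) hu)
        (edist_of_mem_privateLevel (by omega) hv) hj huv
    calc d ^ (j + 1) = d ^ j * d := pow_succ d j
      _ ≤ (privateLevel G r m j).card * d := Nat.mul_le_mul_right d (ih (by omega))
      _ ≤ ∑ u ∈ privateLevel G r m j, (privateNeighbors G r m u).card :=
        Finset.card_nsmul_le_sum _ _ d fun u _ => hd u
      _ = (privateLevel G r m (j + 1)).card := by
        rw [privateLevel, Finset.card_biUnion hdisj]

theorem IsLocallySparse.card_privateLevel_mul_le (hG : IsLocallySparse G p k)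
    (hk : (p + 1) * (m + 1) ≤ k) (hd : ∀ u, d ≤ (privateNeighbors G r m u).card) :
    (privateLevel G r m m).card * d ≤ (privateLevel G r m (m + 1)).card * p := by
  classical
  refine Finset.card_mul_le_card_mul (fun u x => x ∈ privateNeighbors G r m u) ?_ ?_
  · refine fun u hu => (hd u).trans (Finset.card_le_card fun x hx => ?_)
    exact (Finset.mem_bipartiteAbove _).2 ⟨Finset.mem_biUnion.2 ⟨u, hu, hx⟩, hx⟩
  · refine fun x hx => hG.card_le_of_adj_reachableAvoiding hk (u := x) (r := r) fun u hu => ?_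
    obtain ⟨hu, hxu⟩ := (Finset.mem_bipartiteBelow _).1 hu
    have hadj : G.Adj u x := (mem_privateNeighbors.1 hxu).1
    have hdist_u : G.edist r u = m := edist_of_mem_privateLevel (by omega) hu
    have hdist_x : G.edist r x = (m + 1 : ℕ) := edist_of_mem_privateLevel le_rfl hx
    refine ⟨hadj.symm, .of_edist_le hdist_u.le ?_ hadj.ne⟩
    rw [hdist_x]
    exact_mod_cast m.le_succ

theorem IsLocallySparse.pow_lt_mul_card [Fintype V] [Nonempty V] (hG : IsLocallySparse G p k)
    (hp : 0 < p) (hk : (p + 1) * (m + 1) ≤ k) (hdeg : ∀ u, d + p ≤ G.degree u) :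
    d ^ (m + 1) < p * Fintype.card V := by
  obtain ⟨r⟩ := ‹Nonempty V›
  have hd (u : V) : d ≤ (privateNeighbors G r m u).card := by
    have := hdeg u
    have := hG.degree_le_card_privateNeighbors_add hk r u
    omega
  have hroot : r ∉ privateLevel G r m (m + 1) := fun hr => by
    have hdist := edist_of_mem_privateLevel le_rfl hr
    rw [SimpleGraph.edist_self] at hdist
    exact m.succ_ne_zero (by exact_mod_cast hdist.symm)
  calc d ^ (m + 1) = d ^ m * d := pow_succ d m
    _ ≤ (privateLevel G r m m).card * d :=
      Nat.mul_le_mul_right d (pow_le_card_privateLevel hd le_rfl)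
    _ ≤ (privateLevel G r m (m + 1)).card * p := hG.card_privateLevel_mul_le hk hd
    _ < Fintype.card V * p := Nat.mul_lt_mul_of_pos_right (Finset.card_lt_univ_of_notMem hroot) hp
    _ = p * Fintype.card V := mul_comm _ _

end Levels

section PairGraph

variable {V : Type*} [DecidableEq V] {E : Finset (Finset V)}

/-- The simple graph whose edges are the two-element members of `E`; other members of `E` are
ignored. -/
def pairGraph (E : Finset (Finset V)) : SimpleGraph V :=
  SimpleGraph.fromEdgeSet {e | e.toFinset ∈ E}

theorem pairGraph_adj {u x : V} : (pairGraph E).Adj u x ↔ {u, x} ∈ E ∧ u ≠ x := by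
  simp [pairGraph, Sym2.toFinset_mk_eq]

theorem card_filter_mem_le_degree_pairGraph (hunif : ∀ e ∈ E, e.card = 2) (v : V)
    [Fintype ((pairGraph E).neighborSet v)] :
    (E.filter (fun e => v ∈ e)).card ≤ (pairGraph E).degree v := by
  have hsub : E.filter (fun e => v ∈ e) ⊆
      ((pairGraph E).neighborFinset v).image fun x => {v, x} := by
    intro e he
    obtain ⟨heE, hve⟩ := Finset.mem_filter.1 he
    obtain ⟨x, hx⟩ : ∃ x, e.erase v = {x} :=
      Finset.card_eq_one.1 (by rw [Finset.card_erase_of_mem hve, hunif e heE])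
    have hvx : v ≠ x := (Finset.ne_of_mem_erase (hx ▸ Finset.mem_singleton_self x)).symm
    have hpair : {v, x} = e := by rw [← Finset.insert_erase hve, hx]
    refine Finset.mem_image.2 ⟨x, ?_, hpair⟩
    rw [SimpleGraph.mem_neighborFinset, pairGraph_adj, hpair]
    exact ⟨heE, hvx⟩
  exact (Finset.card_le_card hsub).trans Finset.card_image_le

theorem HFree.isLocallySparse_pairGraph {k p : ℕ} {q : ℤ} (hfree : HFree 2 k q E)
    (hpq : (p : ℤ) = q + 2) : IsLocallySparse (pairGraph E) p k := by
  intro S U hSE hSU hpS hSk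
  have hcard : (S.image Sym2.toFinset).card = S.card := by
    refine Finset.card_image_of_injective S fun e f hef => Sym2.ext fun v => ?_
    rw [← Sym2.mem_toFinset, hef, Sym2.mem_toFinset]
  have hsub : S.image Sym2.toFinset ⊆ E :=
    Finset.image_subset_iff.2 fun e he => (by simpa [pairGraph] using hSE he : _ ∧ _).1
  have hcover : (S.image Sym2.toFinset).biUnion id ⊆ U := by
    simp only [Finset.image_biUnion, Finset.biUnion_subset, id]
    exact fun e he v hv => Finset.mem_sym2_iff.1 (hSU he) v (Sym2.mem_toFinset.1 hv)
  have hspan := hfree S.card (by push_cast; omega) hSk _ hsub hcard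
  have hcoverCard := Finset.card_le_card hcover
  omega

end PairGraph

/-- For `q ≥ -1`, `k ≥ 2q+6` and `h = ⌊k/(q+3)⌋`: if `F` is a finite simple graph with
at least one vertex, whose minimum degree `δ` satisfies `δ ≥ q+3`, and `F` is
`H^{(2)}(k,q)`-free, then `|V(F)| > (δ-q-2)^h/(q+2)`. -/
theorem statement9 (k : ℕ) (q h : ℤ) (δ : ℕ)
    {V : Type*} [Fintype V] [DecidableEq V] [Nonempty V]
    (hq : -1 ≤ q) (hk : 2 * q + 6 ≤ (k : ℤ))
    (hh : h = (k : ℤ) / (q + 3))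
    (E : Finset (Finset V)) (hunif : ∀ e ∈ E, e.card = 2)
    (hδ_le : ∀ v : V, δ ≤ (E.filter (fun e => v ∈ e)).card)
    (hδ_attained : ∃ v : V, (E.filter (fun e => v ∈ e)).card = δ)
    (hδ_big : q + 3 ≤ (δ : ℤ))
    (hfree : HFree 2 k q E) :
    ((δ : ℝ) - (q : ℝ) - 2) ^ h / ((q : ℝ) + 2) < (Fintype.card V : ℝ) := by
  obtain ⟨p, hp⟩ := Int.eq_ofNat_of_zero_le (show 0 ≤ q + 2 by omega)
  have h2 : 2 ≤ h := hh ▸ (Int.le_ediv_iff_mul_le (by omega)).2 (by omega)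
  obtain ⟨m, hm⟩ : ∃ m : ℕ, h = (m + 1 : ℕ) := ⟨(h - 1).toNat, by omega⟩
  obtain ⟨d, hd⟩ : ∃ d : ℕ, δ = d + p := ⟨δ - p, by omega⟩
  have hpk : (p + 1) * (m + 1) ≤ k := by
    have hmul : h * (q + 3) ≤ k := hh ▸ Int.ediv_mul_le k (by omega)
    have hq3 : q + 3 = (p + 1 : ℕ) := by push_cast; omega
    rw [hm, hq3, mul_comm] at hmul
    exact_mod_cast hmul
  have hbound : d ^ (m + 1) < p * Fintype.card V := by
    classical
    exact (hfree.isLocallySparse_pairGraph hp.symm).pow_lt_mul_card (by omega) hpk fun v =>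
      hd ▸ (hδ_le v).trans (card_filter_mem_le_degree_pairGraph hunif v)
  have hpR : (q : ℝ) + 2 = p := by exact_mod_cast hp
  have hdR : (δ : ℝ) - q - 2 = d := by rw [hd]; push_cast; linarith
  rw [hdR, hpR, hm, zpow_natCast, div_lt_iff₀' (by norm_cast; omega)]
  exact_mod_cast hbound
end

section
/- Let q ≥ −1, k ≥ 2q+6 and n ≥ k be integers, let h = ⌊k/(q+3)⌋ and C = (q+2)^{1/h} (a real number). Let E be a multiset of 2-element subsets (edges, possibly repeated) of an n-element vertex set such that for every integer i with q+3 ≤ i ≤ k, every sub-multiset of E consisting of i edges (counted with multiplicity) covers at least i−q vertices in total. Then the number of edges of E counted with multiplicity is less than C·n^{1+1/h} + (q+2)·n. -/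
/-!
Deleting sets of vertices that meet few edges, we may assume that every nonempty set `A` of vertices
meets at least `(D + Q) * #A` edges, where `Q = q + 2` and `D ^ h = Q * n`. Choose a subgraph `W` of
largest excess `c` (number of edges beyond a spanning tree) among those with at most `c * h` edges.
Sparsity gives `c < Q`, and attaching to `W` a few short paths that start in it cannot raise the
excess quickly. In the breadth-first layering from `W` this has two consequences. First, almost all
edges at `W` and at each vertex of level below `h` lead to the next level, so that there are at
least `D ^ h` forward paths of length `h`. Second, at most `Q - c` of them end at any one vertex:
otherwise either two paths merge twice, gaining excess `2` with `2 * h` edges, or `Q - c + 1` paths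
together gain excess `Q - c` with `(Q - c + 1) * h` edges. Hence `D ^ h` is at most `Q` times the
number of vertices of level `h`, which is less than `Q * n`, a contradiction.
-/

section

open Finset

/-- A loopless multigraph with vertex type `V` and edge type `ι`: parallel edges are distinct
elements of `ι` with the same pair of ends. -/
structure Multigraph (V ι : Type*) where
  ends : ι → Finset V
  card_ends : ∀ e, #(ends e) = 2

namespace Multigraph

variable {V ι : Type*} {M : Multigraph V ι} {W : Finset V} {h : ℕ}

/-- The vertices at distance at most `m` from `W`. -/
def ball (M : Multigraph V ι) (W : Finset V) : ℕ → Set V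
  | 0 => W
  | m + 1 => {v | v ∈ ball M W m ∨ ∃ e, v ∈ M.ends e ∧ ∃ x ∈ M.ends e, x ∈ ball M W m}

/-- The distance from `W` truncated at `h + 1`; in particular vertices that cannot be reached from
`W` have truncated distance `h + 1`. -/
noncomputable def truncDist (M : Multigraph V ι) (W : Finset V) (h : ℕ) (v : V) : ℕ :=
  sInf (insert (h + 1) {m | v ∈ M.ball W m})

lemma ball_monotone (M : Multigraph V ι) (W : Finset V) : Monotone (M.ball W) :=
  monotone_nat_of_le_succ fun _ _ hv => Or.inl hv

lemma truncDist_le (M : Multigraph V ι) (W : Finset V) (h : ℕ) (v : V) :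
    M.truncDist W h v ≤ h + 1 :=
  Nat.sInf_le (Set.mem_insert _ _)

lemma truncDist_le_iff {m : ℕ} (hm : m ≤ h) {v : V} : M.truncDist W h v ≤ m ↔ v ∈ M.ball W m := by
  refine ⟨fun hv => ?_, fun hv => Nat.sInf_le (Set.mem_insert_of_mem _ hv)⟩
  rcases Nat.sInf_mem (Set.insert_nonempty (h + 1) {m | v ∈ M.ball W m}) with heq | hmem
  · have : M.truncDist W h v = h + 1 := heq
    omega
  · exact M.ball_monotone W hv hmem

lemma truncDist_eq_zero_iff {v : V} : M.truncDist W h v = 0 ↔ v ∈ W := by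
  rw [← Nat.le_zero, truncDist_le_iff (Nat.zero_le h)]
  rfl

lemma truncDist_le_add_one {e : ι} {x y : V} (hx : x ∈ M.ends e) (hy : y ∈ M.ends e) :
    M.truncDist W h y ≤ M.truncDist W h x + 1 := by
  rcases lt_or_ge (M.truncDist W h x) h with hlt | hge
  · exact (truncDist_le_iff hlt).2 (Or.inr ⟨e, hy, x, hx, (truncDist_le_iff hlt.le).1 le_rfl⟩)
  · exact (M.truncDist_le W h y).trans (Nat.add_le_add_right hge 1)

lemma exists_truncDist_add_one_eq {v : V} (hv : v ∉ W) (hvh : M.truncDist W h v ≤ h) :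
    ∃ e, v ∈ M.ends e ∧ ∃ x ∈ M.ends e, M.truncDist W h x + 1 = M.truncDist W h v := by
  obtain ⟨m, hm⟩ := Nat.exists_eq_succ_of_ne_zero (mt truncDist_eq_zero_iff.1 hv)
  have hball : v ∈ M.ball W (m + 1) := (truncDist_le_iff (hm ▸ hvh)).1 hm.le
  have hnot : v ∉ M.ball W m := fun hmem => by
    have := (truncDist_le_iff (h := h) (m := m) (by omega)).2 hmem
    omega
  obtain ⟨e, hve, x, hxe, hx⟩ := hball.resolve_left hnot
  have hupper := (truncDist_le_iff (h := h) (m := m) (by omega)).2 hx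
  have hlower := truncDist_le_add_one (W := W) (h := h) hxe hve
  exact ⟨e, hve, x, hxe, by omega⟩

/-- A breadth-first layering of a multigraph from the root set `W`, reliable up to depth `h`:
every edge is oriented away from `W`, and every vertex of level between `1` and `h` is the head of
an edge coming from the previous level. Levels above `h` carry no information. -/
structure Layering (M : Multigraph V ι) (W : Finset V) (h : ℕ) where
  level : V → ℕ
  tail : ι → V
  head : ι → V
  tail_mem : ∀ e, tail e ∈ M.ends e
  head_mem : ∀ e, head e ∈ M.ends e
  tail_ne_head : ∀ e, tail e ≠ head e
  level_tail_le : ∀ e, level (tail e) ≤ level (head e)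
  level_head_le : ∀ e, level (head e) ≤ level (tail e) + 1
  level_eq_zero_iff : ∀ {v}, level v = 0 ↔ v ∈ W
  exists_head_eq : ∀ v ∉ W, level v ≤ h → ∃ e, head e = v ∧ level (head e) = level (tail e) + 1

lemma exists_ordered_ends (M : Multigraph V ι) (f : V → ℕ) (e : ι) :
    ∃ x ∈ M.ends e, ∃ y ∈ M.ends e, x ≠ y ∧ f x ≤ f y := by
  obtain ⟨x, hx, y, hy, hxy⟩ := one_lt_card.1 (M.card_ends e ▸ one_lt_two)
  rcases le_total (f x) (f y) with hle | hle
  · exact ⟨x, hx, y, hy, hxy, hle⟩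
  · exact ⟨y, hy, x, hx, hxy.symm, hle⟩

lemma mem_ends_iff {e : ι} {x y v : V} (hx : x ∈ M.ends e) (hy : y ∈ M.ends e) (hxy : x ≠ y) :
    v ∈ M.ends e ↔ v = x ∨ v = y := by
  classical
  have heq : {x, y} = M.ends e :=
    eq_of_subset_of_card_le (insert_subset hx (singleton_subset_iff.2 hy))
      (by rw [M.card_ends, card_pair hxy])
  rw [← heq, mem_insert, mem_singleton]

lemma nonempty_layering (M : Multigraph V ι) (W : Finset V) (h : ℕ) :
    Nonempty (M.Layering W h) := by
  choose tail htail head hhead hne hle using M.exists_ordered_ends (M.truncDist W h)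
  refine ⟨M.truncDist W h, tail, head, htail, hhead, hne, hle,
    fun e => truncDist_le_add_one (htail e) (hhead e), truncDist_eq_zero_iff, fun v hv hvh => ?_⟩
  obtain ⟨e, hve, x, hxe, hx⟩ := exists_truncDist_add_one_eq hv hvh
  have hle := hle e
  rw [mem_ends_iff (htail e) (hhead e) (hne e)] at hve hxe
  refine ⟨e, ?_⟩
  rcases hve with rfl | rfl <;> rcases hxe with rfl | rfl <;> grind

namespace Layering

variable {L : M.Layering W h} {e : ι} {u v : V} {p : Finset ι}

lemma mem_ends (L : M.Layering W h) : v ∈ M.ends e ↔ v = L.tail e ∨ v = L.head e :=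
  mem_ends_iff (L.tail_mem e) (L.head_mem e) (L.tail_ne_head e)

/-- An edge is forward if it leads to the next level. -/
def IsForward (L : M.Layering W h) (e : ι) : Prop :=
  L.level (L.head e) = L.level (L.tail e) + 1

instance (L : M.Layering W h) : DecidablePred L.IsForward :=
  fun e => inferInstanceAs (Decidable (L.level (L.head e) = L.level (L.tail e) + 1))

lemma IsForward.head_notMem (he : L.IsForward e) : L.head e ∉ W := by
  rw [← L.level_eq_zero_iff, he]
  exact Nat.succ_ne_zero _

/-- A set of edges is rooted if its heads avoid `W` and each of its tails lies in `W` or is again a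
head. Such a set spans, besides `W`, only its heads, so adding it to a subgraph on `W` adds exactly
`#U` edges and `#(U.image L.head)` vertices. -/
def IsRooted (L : M.Layering W h) (U : Finset ι) : Prop :=
  ∀ e ∈ U, L.head e ∉ W ∧ (L.tail e ∈ W ∨ ∃ f ∈ U, L.head f = L.tail e)

/-- Every rooted set with at most `s` edges has fewer than `j` edges more than heads. -/
def ExcessLT [DecidableEq V] (L : M.Layering W h) (j s : ℕ) : Prop :=
  ∀ U, L.IsRooted U → #U ≤ s → #U < #(U.image L.head) + j

lemma IsRooted.union [DecidableEq ι] {U U' : Finset ι} (hU : L.IsRooted U) (hU' : L.IsRooted U') :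
    L.IsRooted (U ∪ U') := by
  intro e he
  rcases mem_union.1 he with he | he
  · exact ⟨(hU e he).1, (hU e he).2.imp_right fun ⟨f, hf, hfe⟩ => ⟨f, mem_union_left _ hf, hfe⟩⟩
  · exact ⟨(hU' e he).1, (hU' e he).2.imp_right fun ⟨f, hf, hfe⟩ => ⟨f, mem_union_right _ hf, hfe⟩⟩

lemma IsRooted.biUnion [DecidableEq ι] {α : Type*} {T : Finset α} {U : α → Finset ι}
    (hU : ∀ a ∈ T, L.IsRooted (U a)) : L.IsRooted (T.biUnion U) := by
  intro e he
  obtain ⟨a, ha, hea⟩ := mem_biUnion.1 he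
  exact ⟨(hU a ha e hea).1, (hU a ha e hea).2.imp_right
    fun ⟨f, hf, hfe⟩ => ⟨f, mem_biUnion.2 ⟨a, ha, hf⟩, hfe⟩⟩

lemma IsRooted.union_chords [DecidableEq ι] {U G : Finset ι} (hU : L.IsRooted U)
    (hhead : ∀ e ∈ G, ∃ f ∈ U, L.head f = L.head e)
    (htail : ∀ e ∈ G, L.tail e ∈ W ∨ ∃ f ∈ U, L.head f = L.tail e) : L.IsRooted (U ∪ G) := by
  intro e he
  rcases mem_union.1 he with he | he
  · exact ⟨(hU e he).1, (hU e he).2.imp_right fun ⟨f, hf, hfe⟩ => ⟨f, mem_union_left _ hf, hfe⟩⟩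
  · obtain ⟨f, hf, hfe⟩ := hhead e he
    exact ⟨hfe ▸ (hU f hf).1,
      (htail e he).imp_right fun ⟨f, hf, hfe⟩ => ⟨f, mem_union_left _ hf, hfe⟩⟩

lemma ExcessLT.head_eq_of_merges [DecidableEq V] {s : ℕ} (hL : L.ExcessLT 2 s) {U : Finset ι}
    (hU : L.IsRooted U) (hs : #U ≤ s) {a a' b b' : ι} (ha : a ∈ U) (ha' : a' ∈ U) (hb : b ∈ U)
    (hb' : b' ∈ U) (haa : a ≠ a') (hbb : b ≠ b') (hheada : L.head a = L.head a')
    (hheadb : L.head b = L.head b') : L.head a = L.head b := by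
  classical
  by_contra hab
  have hne : a' ≠ b' := fun h => hab (by rw [hheada, h, hheadb])
  have haR : a ∈ (U.erase a').erase b' := by
    refine mem_erase.2 ⟨fun h => hab (by rw [h, hheadb]), mem_erase.2 ⟨haa, ha⟩⟩
  have hbR : b ∈ (U.erase a').erase b' := by
    refine mem_erase.2 ⟨hbb, mem_erase.2 ⟨fun h => hab (by rw [h, hheada]), hb⟩⟩
  have hsub : U.image L.head ⊆ ((U.erase a').erase b').image L.head := by
    refine image_subset_iff.2 fun e he => ?_
    by_cases hea : e = a'
    · exact mem_image.2 ⟨a, haR, hea ▸ hheada⟩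
    by_cases heb : e = b'
    · exact mem_image.2 ⟨b, hbR, heb ▸ hheadb⟩
    · exact mem_image_of_mem _ (mem_erase.2 ⟨heb, mem_erase.2 ⟨hea, he⟩⟩)
  have hcard := (card_le_card hsub).trans card_image_le
  have hcarda := card_erase_add_one ha'
  have hcardb := card_erase_add_one (mem_erase.2 ⟨hne.symm, hb'⟩)
  have := hL U hU hs
  omega

/-- `L.IsPath v p`: the edges of a path of forward edges from `W` to `v` form the set `p`. -/
inductive IsPath [DecidableEq ι] (L : M.Layering W h) : V → Finset ι → Prop
  | nil {v : V} (hv : v ∈ W) : IsPath L v ∅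
  | cons {e : ι} {p : Finset ι} (he : L.IsForward e) (hp : IsPath L (L.tail e) p) :
      IsPath L (L.head e) (insert e p)

section IsPath

variable [DecidableEq ι]

lemma IsPath.isForward (hp : L.IsPath v p) : ∀ e ∈ p, L.IsForward e := by
  induction hp with
  | nil => simp
  | cons he _ ih => exact (forall_mem_insert _ _ _).2 ⟨he, ih⟩

lemma IsPath.level_head_le (hp : L.IsPath v p) : ∀ e ∈ p, L.level (L.head e) ≤ L.level v := by
  induction hp with
  | nil => simp
  | cons he _ ih =>
    refine (forall_mem_insert _ _ _).2 ⟨le_rfl, fun f hf => (ih f hf).trans ?_⟩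
    exact he ▸ Nat.le_succ _

lemma IsPath.notMem_of_isForward (hp : L.IsPath (L.tail e) p) (he : L.IsForward e) : e ∉ p :=
  fun hep => by
    have := hp.level_head_le e hep
    rw [he] at this
    omega

lemma IsPath.card_eq (hp : L.IsPath v p) : #p = L.level v := by
  induction hp with
  | nil hv => rw [card_empty, L.level_eq_zero_iff.2 hv]
  | cons he hp ih => rw [card_insert_of_notMem (hp.notMem_of_isForward he), ih, he]

lemma IsPath.exists_eq_insert (hp : L.IsPath v p) (hv : v ∉ W) :
    ∃ e q, L.head e = v ∧ L.IsForward e ∧ L.IsPath (L.tail e) q ∧ p = insert e q := by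
  cases hp with
  | nil hvW => exact absurd hvW hv
  | cons he hq => exact ⟨_, _, rfl, he, hq, rfl⟩

lemma IsPath.eq_empty (hp : L.IsPath v p) (hv : v ∈ W) : p = ∅ := by
  rw [← card_eq_zero, hp.card_eq, L.level_eq_zero_iff.2 hv]

lemma IsPath.mem_or_exists_head_eq (hp : L.IsPath v p) : v ∈ W ∨ ∃ e ∈ p, L.head e = v := by
  cases hp with
  | nil hv => exact Or.inl hv
  | cons => exact Or.inr ⟨_, mem_insert_self _ _, rfl⟩

lemma IsPath.head_eq_of_level_le (hp : L.IsPath v p) (he : e ∈ p)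
    (hle : L.level v ≤ L.level (L.head e)) : L.head e = v := by
  cases hp with
  | nil => simp at he
  | cons hf hq =>
    rcases mem_insert.1 he with rfl | heq
    · rfl
    · have := hq.level_head_le e heq
      rw [hf] at hle
      omega

lemma IsPath.isRooted (hp : L.IsPath v p) : L.IsRooted p := by
  induction hp with
  | nil => simp [IsRooted]
  | cons he hp ih =>
    refine (forall_mem_insert _ _ _).2 ⟨⟨he.head_notMem, ?_⟩, fun f hf => ⟨(ih f hf).1, ?_⟩⟩
    · exact hp.mem_or_exists_head_eq.imp_right fun ⟨g, hg, hge⟩ => ⟨g, mem_insert_of_mem hg, hge⟩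
    · exact (ih f hf).2.imp_right fun ⟨g, hg, hge⟩ => ⟨g, mem_insert_of_mem hg, hge⟩

lemma exists_isPath (L : M.Layering W h) (hv : L.level v ≤ h) : ∃ p, L.IsPath v p := by
  induction hm : L.level v generalizing v with
  | zero => exact ⟨∅, .nil (L.level_eq_zero_iff.1 hm)⟩
  | succ m ih =>
    obtain ⟨e, rfl, he⟩ := L.exists_head_eq v (mt L.level_eq_zero_iff.2 (by omega)) hv
    obtain ⟨p, hp⟩ := ih (v := L.tail e) (by omega) (by omega)
    exact ⟨insert e p, hp.cons he⟩


lemma IsPath.exists_merge {g g' : Finset ι} (hg : L.IsPath v g) (hg' : L.IsPath v g')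
    (he : e ∈ g) (he' : e ∉ g') :
    ∃ a ∈ g, ∃ b ∈ g', a ≠ b ∧ L.head a = L.head b ∧ L.level (L.head e) ≤ L.level (L.head a) := by
  induction hg generalizing g' with
  | nil => simp at he
  | @cons a p ha hp ih =>
    obtain ⟨b, q, hab, -, hq, rfl⟩ := hg'.exists_eq_insert ha.head_notMem
    by_cases heq : a = b
    · subst heq
      obtain ⟨heb, heq⟩ := not_or.1 (mt mem_insert.2 he')
      obtain ⟨c, hc, d, hd, hcd⟩ := ih hq (mem_of_mem_insert_of_ne he heb) heq
      exact ⟨c, mem_insert_of_mem hc, d, mem_insert_of_mem hd, hcd⟩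
    · exact ⟨a, mem_insert_self _ _, b, mem_insert_self _ _, heq, hab.symm,
        (hp.cons ha).level_head_le e he⟩

lemma IsPath.exists_notMem_head_eq {U : Finset ι} (hU : L.IsRooted U) (hp : L.IsPath v p)
    (hv : ∃ f ∈ U, L.head f = v) (hpU : ¬p ⊆ U) :
    ∃ e ∈ p, e ∉ U ∧ ∃ f ∈ U, L.head f = L.head e := by
  induction hp with
  | nil => simp at hpU
  | @cons e p _ hp ih =>
    by_cases heU : e ∈ U
    · have hp' : ¬p ⊆ U := fun h => hpU (insert_subset heU h)
      rcases (hU e heU).2 with htail | htail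
      · simp [hp.eq_empty htail] at hp'
      · obtain ⟨f, hf, hf'⟩ := ih htail hp'
        exact ⟨f, mem_insert_of_mem hf, hf'⟩
    · exact ⟨e, mem_insert_self _ _, heU, hv⟩

lemma exists_isPath_of_mem_ends (hu : u ∉ W) (huh : L.level u ≤ h) (heu : u ∈ M.ends e)
    (he : ¬(L.tail e = u ∧ L.IsForward e)) :
    ∃ q y, L.IsPath y q ∧ y ≠ u ∧ L.level y ≤ L.level u ∧
      (L.head e = u ∧ L.tail e = y ∨ L.head e = y ∧ L.tail e = u ∧ y ∉ W ∧ ¬L.IsForward e) := by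
  rcases L.mem_ends.1 heu with rfl | rfl
  · have hlevel : L.level (L.head e) = L.level (L.tail e) := by
      have hle := L.level_tail_le e
      have hle' := L.level_head_le e
      have : ¬L.IsForward e := fun hf => he ⟨rfl, hf⟩
      unfold IsForward at this
      omega
    obtain ⟨q, hq⟩ := L.exists_isPath (hlevel.trans_le huh)
    refine ⟨q, _, hq, (L.tail_ne_head e).symm, hlevel.le,
      Or.inr ⟨rfl, rfl, ?_, fun hf => he ⟨rfl, hf⟩⟩⟩
    rwa [← L.level_eq_zero_iff, hlevel, L.level_eq_zero_iff]
  · obtain ⟨q, hq⟩ := L.exists_isPath ((L.level_tail_le e).trans huh)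
    exact ⟨q, _, hq, L.tail_ne_head e, L.level_tail_le e, Or.inl ⟨rfl, rfl⟩⟩

variable [DecidableEq V] {j : ℕ} {T : Finset (Finset ι)}

lemma ExcessLT.exists_union_subset (hL : L.ExcessLT 2 (2 * h)) (hvh : L.level v ≤ h)
    (hT : ∀ g ∈ T, L.IsPath v g) {w : V} (hp : L.IsPath w p) (hpT : p ⊆ T.biUnion id)
    {s g : Finset ι} (hg : g ∈ T) (hsg : s ⊆ g) (hw : w ∈ W ∨ ∃ f ∈ g, L.head f = w)
    (hs : ∀ f ∈ s, L.level w < L.level (L.head f)) : ∃ g' ∈ T, s ∪ p ⊆ g' := by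
  induction hp generalizing s g with
  | nil => exact ⟨g, hg, by simpa using hsg⟩
  | @cons e p he _ ih =>
    obtain ⟨hep, hpT⟩ := insert_subset_iff.1 hpT
    suffices ∃ g' ∈ T, insert e s ⊆ g' by
      obtain ⟨g', hg', hsub⟩ := this
      have hlevel : ∀ f ∈ insert e s, L.level (L.tail e) < L.level (L.head f) := by
        refine (forall_mem_insert _ _ _).2 ⟨by rw [he]; exact Nat.lt_succ_self _, fun f hf => ?_⟩
        exact (L.level_tail_le e).trans_lt (hs f hf)
      obtain ⟨g'', hg'', h''⟩ := ih hpT hg' hsub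
        ((hT g' hg').isRooted e (hsub (mem_insert_self _ _))).2 hlevel
      exact ⟨g'', hg'', by rwa [union_insert, ← insert_union]⟩
    by_cases heg : e ∈ g
    · exact ⟨g, hg, insert_subset heg hsg⟩
    obtain ⟨g', hg', heg'⟩ := mem_biUnion.1 hep
    refine ⟨g', hg', insert_subset heg' fun f hfs => ?_⟩
    -- otherwise `g` and `g'` merge both at the head of `e` and later, at or after the head of `f`
    by_contra hfg'
    obtain ⟨e', he', hhead⟩ := hw.resolve_left he.head_notMem
    obtain ⟨a, ha, b, hb, hab, hheadab, hlevel⟩ :=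
      (hT g hg).exists_merge (hT g' hg') (hsg hfs) hfg'
    have hcard : #(g ∪ g') ≤ 2 * h := by
      have := card_union_le g g'
      rw [(hT g hg).card_eq, (hT g' hg').card_eq] at this
      omega
    have hsame := hL.head_eq_of_merges ((hT g hg).isRooted.union (hT g' hg').isRooted) hcard
      (mem_union_left _ he') (mem_union_right _ heg') (mem_union_left _ ha) (mem_union_right _ hb)
      (fun h => heg (h ▸ he')) hab hhead hheadab
    have := hs f hfs
    rw [← hhead, hsame] at this
    omega

lemma ExcessLT.mem_of_subset_biUnion (hL : L.ExcessLT 2 (2 * h)) (hvh : L.level v ≤ h)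
    (hT : ∀ g ∈ T, L.IsPath v g) (hTne : T.Nonempty) (hp : L.IsPath v p)
    (hpT : p ⊆ T.biUnion id) : p ∈ T := by
  obtain ⟨g, hg⟩ := hTne
  obtain ⟨g', hg', hsub⟩ := hL.exists_union_subset hvh hT hp hpT hg (empty_subset g)
    (hT g hg).mem_or_exists_head_eq (by simp)
  rw [empty_union] at hsub
  rwa [eq_of_subset_of_card_le hsub (by rw [hp.card_eq, (hT g' hg').card_eq])]

lemma ExcessLT.card_heads_add_card_le (hL : L.ExcessLT 2 (2 * h)) (hv : v ∉ W)
    (hvh : L.level v ≤ h) (hTne : T.Nonempty) (hT : ∀ g ∈ T, L.IsPath v g) :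
    #((T.biUnion id).image L.head) + #T ≤ #(T.biUnion id) + 1 := by
  induction hTne using Finset.Nonempty.cons_induction with
  | singleton g =>
    rw [singleton_biUnion, card_singleton]
    exact Nat.add_le_add_right card_image_le 1
  | cons P T hPT hTne ih =>
    obtain ⟨hP, hT⟩ := (forall_mem_cons hPT _).1 hT
    specialize ih hT
    set U := T.biUnion id
    have hv' : ∃ f ∈ U, L.head f = v := by
      obtain ⟨g, hg⟩ := hTne
      obtain ⟨f, hf, hfv⟩ := (hT g hg).mem_or_exists_head_eq.resolve_left hv
      exact ⟨f, mem_biUnion.2 ⟨g, hg, hf⟩, hfv⟩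
    obtain ⟨a, haP, haU, f, hfU, hfa⟩ := hP.exists_notMem_head_eq
      (IsRooted.biUnion fun g hg => (hT g hg).isRooted) hv'
      fun hsub => hPT (hL.mem_of_subset_biUnion hvh hT hTne hP hsub)
    have hunion : (cons P T hPT).biUnion id = U ∪ P \ U := by
      rw [cons_eq_insert, biUnion_insert, union_sdiff_self_eq_union, union_comm, id]
    have hsub : (U ∪ P \ U).image L.head ⊆ U.image L.head ∪ ((P \ U).erase a).image L.head := by
      rw [image_union]
      refine union_subset subset_union_left (image_subset_iff.2 fun e he => ?_)
      by_cases hea : e = a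
      · exact mem_union_left _ (hea ▸ hfa ▸ mem_image_of_mem _ hfU)
      · exact mem_union_right _ (mem_image_of_mem _ (mem_erase.2 ⟨hea, he⟩))
    have hheads := (card_le_card hsub).trans (card_union_le _ _)
    have hnew := (card_image_le (s := (P \ U).erase a) (f := L.head)).trans_lt
      (card_erase_lt_of_mem (mem_sdiff.2 ⟨haP, haU⟩))
    rw [hunion, card_union_of_disjoint disjoint_sdiff, card_cons]
    omega

lemma ExcessLT.card_le_of_isPath (hL : L.ExcessLT 2 (2 * h)) (hLj : L.ExcessLT j ((j + 1) * h))
    (hv : v ∉ W) (hvh : L.level v ≤ h) (hT : ∀ g ∈ T, L.IsPath v g) : #T ≤ j := by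
  by_contra! hlt
  obtain ⟨T', hsub, hcard⟩ := exists_subset_card_eq (Nat.succ_le_of_lt hlt)
  replace hT : ∀ g ∈ T', L.IsPath v g := fun g hg => hT g (hsub hg)
  have hne : T'.Nonempty := card_pos.1 (by omega)
  have hsize : #(T'.biUnion id) ≤ (j + 1) * h := by
    rw [← Nat.succ_eq_add_one, ← hcard]
    exact card_biUnion_le_card_mul _ _ _ fun g hg => (hT g hg).card_eq.trans_le hvh
  have := hLj (T'.biUnion id) (IsRooted.biUnion fun g hg => (hT g hg).isRooted) hsize
  have := hL.card_heads_add_card_le hv hvh hne hT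
  omega

end IsPath

lemma card_heads_union_add_card_le [DecidableEq V] [DecidableEq ι] {U G : Finset ι}
    (hUG : Disjoint U G)
    (hhead : ∀ e ∈ G, ∃ f ∈ U, L.head f = L.head e) :
    #((U ∪ G).image L.head) + #G ≤ #(U ∪ G) := by
  have hsub : (U ∪ G).image L.head ⊆ U.image L.head := by
    rw [image_union]
    refine union_subset Subset.rfl (image_subset_iff.2 fun e he => ?_)
    obtain ⟨f, hf, hfe⟩ := hhead e he
    exact hfe ▸ mem_image_of_mem _ hf
  rw [card_union_of_disjoint hUG]
  exact Nat.add_le_add_right ((card_le_card hsub).trans card_image_le) _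

lemma exists_isRooted_chords {G : Finset ι} {e₀ : ι} (hu : L.head e₀ ∉ W)
    (huh : L.level (L.head e₀) ≤ h) (he₀ : L.IsForward e₀) (he₀G : e₀ ∉ G)
    (hG : ∀ e ∈ G, L.head e₀ ∈ M.ends e ∧ ¬(L.tail e = L.head e₀ ∧ L.IsForward e)) :
    ∃ U, L.IsRooted U ∧ Disjoint U G ∧ (∀ e ∈ G, ∃ f ∈ U, L.head f = L.head e) ∧
      (∀ e ∈ G, L.tail e ∈ W ∨ ∃ f ∈ U, L.head f = L.tail e) ∧
      #U ≤ (#G + 1) * L.level (L.head e₀) := by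
  classical
  have : Nonempty V := ⟨L.head e₀⟩
  obtain ⟨p, hp⟩ := L.exists_isPath ((L.level_tail_le e₀).trans huh)
  choose! q y hq hyu hyle hends using fun e he =>
    exists_isPath_of_mem_ends hu huh (hG e he).1 (hG e he).2
  have hhead : ∀ e ∈ G, L.IsForward e → L.head e = L.head e₀ := fun e he hfwd =>
    (hends e he).elim (·.1) fun hr => absurd hfwd hr.2.2.2
  have hdisj : Disjoint (insert e₀ p ∪ G.biUnion q) G := by
    refine disjoint_left.2 fun e heU he => ?_
    rcases mem_union.1 heU with hep | heq
    · have hep := mem_of_mem_insert_of_ne hep (ne_of_mem_of_not_mem he he₀G)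
      have hle := hp.level_head_le e hep
      rw [hhead e he (hp.isForward e hep), he₀] at hle
      omega
    · obtain ⟨f, hf, hef⟩ := mem_biUnion.1 heq
      have heu := hhead e he ((hq f hf).isForward e hef)
      exact hyu f hf <| heu ▸ ((hq f hf).head_eq_of_level_le hef (heu ▸ hyle f hf)).symm
  have hroot : ∃ f ∈ insert e₀ p ∪ G.biUnion q, L.head f = L.head e₀ :=
    ⟨e₀, mem_union_left _ (mem_insert_self _ _), rfl⟩
  have hy : ∀ e ∈ G, y e ∈ W ∨ ∃ f ∈ insert e₀ p ∪ G.biUnion q, L.head f = y e := fun e he =>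
    (hq e he).mem_or_exists_head_eq.imp_right fun ⟨f, hf, hfe⟩ =>
      ⟨f, mem_union_right _ (mem_biUnion.2 ⟨e, he, hf⟩), hfe⟩
  refine ⟨insert e₀ p ∪ G.biUnion q, (hp.cons he₀).isRooted.union
    (IsRooted.biUnion fun e he => (hq e he).isRooted), hdisj, fun e he => ?_, fun e he => ?_, ?_⟩
  · rcases hends e he with ⟨hu, -⟩ | ⟨hye, -, hyW, -⟩
    · exact hu ▸ hroot
    · exact hye ▸ (hy e he).resolve_left hyW
  · rcases hends e he with ⟨-, hye⟩ | ⟨-, hu, -⟩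
    · exact hye ▸ hy e he
    · exact Or.inr (hu ▸ hroot)
  · calc #(insert e₀ p ∪ G.biUnion q) ≤ #(insert e₀ p) + #(G.biUnion q) := card_union_le _ _
      _ ≤ L.level (L.head e₀) + #G * L.level (L.head e₀) := add_le_add (hp.cons he₀).card_eq.le
        (card_biUnion_le_card_mul _ _ _ fun e he => (hq e he).card_eq.trans_le (hyle e he))
      _ = (#G + 1) * L.level (L.head e₀) := by ring

lemma ExcessLT.card_not_forward_le [DecidableEq V] [Fintype ι] {j : ℕ}
    (hL : L.ExcessLT j ((j + 1) * h)) (hu : u ∉ W) (huh : L.level u < h) :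
    #{e | u ∈ M.ends e ∧ ¬(L.tail e = u ∧ L.IsForward e)} ≤ j := by
  classical
  by_contra hlt
  rw [not_le] at hlt
  set B : Finset ι := {e | u ∈ M.ends e ∧ ¬(L.tail e = u ∧ L.IsForward e)}
  obtain ⟨e₀, rfl, he₀⟩ := L.exists_head_eq u hu huh.le
  obtain ⟨G, hGB, hGcard⟩ := exists_subset_card_eq
    ((Nat.le_sub_one_of_lt hlt).trans (pred_card_le_card_erase (a := e₀)))
  obtain ⟨U, hU, hdisj, hhead, htail, hcard⟩ := exists_isRooted_chords hu huh.le he₀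
    (fun he => notMem_erase _ _ (hGB he)) fun e he => (mem_filter.1 (mem_of_mem_erase (hGB he))).2
  have hsize : #(U ∪ G) ≤ (j + 1) * h :=
    calc #(U ∪ G) ≤ (#G + 1) * L.level (L.head e₀) + #G :=
          (card_union_le _ _).trans (Nat.add_le_add_right hcard _)
      _ ≤ (j + 1) * (L.level (L.head e₀) + 1) := by rw [hGcard]; linarith
      _ ≤ (j + 1) * h := Nat.mul_le_mul_left _ huh
  have hexcess := hL (U ∪ G) (hU.union_chords hhead htail) hsize
  have := card_heads_union_add_card_le hdisj hhead
  omega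

lemma IsPath.eq_and_eq_of_insert_eq [DecidableEq ι] {e' : ι} {p' : Finset ι} (he : L.IsForward e)
    (hp : L.IsPath (L.tail e) p) (he' : L.IsForward e') (hp' : L.IsPath (L.tail e') p')
    (heq : insert e p = insert e' p') : p = p' ∧ e = e' := by
  have hlevel : L.level (L.head e) = L.level (L.head e') := by
    rw [← (hp.cons he).card_eq, ← (hp'.cons he').card_eq, heq]
  have hee : e = e' := by
    refine (mem_insert.1 (heq ▸ mem_insert_self e p)).resolve_right fun hmem => ?_
    have hle := hp'.level_head_le e hmem
    rw [hlevel, he'] at hle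
    omega
  subst hee
  refine ⟨?_, rfl⟩
  rw [← erase_insert (hp.notMem_of_isForward he), heq, erase_insert (hp'.notMem_of_isForward he)]

section Counting

variable [Fintype ι] {D : ℝ} {m : ℕ}

open scoped Classical in
/-- The edge sets of the paths of forward edges that lead from `W` to a vertex of level `m`. -/
noncomputable def pathsOfLength [DecidableEq ι] (L : M.Layering W h) (m : ℕ) : Finset (Finset ι) :=
  {p | ∃ v, L.level v = m ∧ L.IsPath v p}

lemma mem_pathsOfLength [DecidableEq ι] :
    p ∈ L.pathsOfLength m ↔ ∃ v, L.level v = m ∧ L.IsPath v p := by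
  simp only [pathsOfLength, mem_filter_univ]

open scoped Classical in
lemma le_card_extensions [DecidableEq V] [DecidableEq ι]
    (hroot : D ≤ #{e | L.tail e ∈ W ∧ L.IsForward e})
    (hdeg : ∀ u ∉ W, L.level u < h → D ≤ #{e | L.tail e = u ∧ L.IsForward e})
    (hp : L.IsPath v p) (hv : L.level v < h) :
    D ≤ #{e | L.IsForward e ∧ L.IsPath (L.tail e) p} := by
  by_cases hvW : v ∈ W
  · rw [hp.eq_empty hvW]
    exact hroot.trans
      (mod_cast card_le_card (monotone_filter_right _ fun e _ he => ⟨he.2, .nil he.1⟩))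
  · exact (hdeg v hvW hv).trans
      (mod_cast card_le_card (monotone_filter_right _ fun e _ he => ⟨he.2, he.1 ▸ hp⟩))

lemma pow_le_card_pathsOfLength [DecidableEq V] [DecidableEq ι] (hD : 0 ≤ D) (hW : W.Nonempty)
    (hroot : D ≤ #{e | L.tail e ∈ W ∧ L.IsForward e})
    (hdeg : ∀ u ∉ W, L.level u < h → D ≤ #{e | L.tail e = u ∧ L.IsForward e})
    (hm : m ≤ h) : D ^ m ≤ #(L.pathsOfLength m) := by
  classical
  induction m with
  | zero =>
    obtain ⟨v, hv⟩ := hW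
    rw [pow_zero, Nat.one_le_cast, one_le_card]
    exact ⟨∅, mem_pathsOfLength.2 ⟨v, L.level_eq_zero_iff.2 hv, .nil hv⟩⟩
  | succ m ih =>
    let extensions (p : Finset ι) : Finset ι := {e | L.IsForward e ∧ L.IsPath (L.tail e) p}
    have hinj : #((L.pathsOfLength m).sigma extensions) ≤ #(L.pathsOfLength (m + 1)) := by
      refine card_le_card_of_injOn (fun x => insert x.2 x.1) ?_ ?_
      · rintro ⟨p, e⟩ hx
        obtain ⟨hp, he⟩ := mem_sigma.1 hx
        obtain ⟨v, hv, hvp⟩ := mem_pathsOfLength.1 hp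
        obtain ⟨he, hep⟩ := (mem_filter_univ _).1 he
        refine mem_pathsOfLength.2 ⟨_, ?_, hep.cons he⟩
        rw [he, ← hep.card_eq, hvp.card_eq, hv]
      · rintro ⟨p, e⟩ hx ⟨p', e'⟩ hx' heq
        obtain ⟨he, hp⟩ := (mem_filter_univ _).1 (mem_sigma.1 hx).2
        obtain ⟨he', hp'⟩ := (mem_filter_univ _).1 (mem_sigma.1 hx').2
        obtain ⟨rfl, rfl⟩ := hp.eq_and_eq_of_insert_eq he he' hp' heq
        rfl
    calc D ^ (m + 1) = D ^ m * D := pow_succ D m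
      _ ≤ #(L.pathsOfLength m) * D := mul_le_mul_of_nonneg_right (ih (by omega)) hD
      _ = ∑ _p ∈ L.pathsOfLength m, D := by rw [sum_const, nsmul_eq_mul]
      _ ≤ ∑ p ∈ L.pathsOfLength m, (#(extensions p) : ℝ) := sum_le_sum fun p hp => by
        obtain ⟨v, hv, hvp⟩ := mem_pathsOfLength.1 hp
        exact le_card_extensions hroot hdeg hvp (by omega)
      _ = #((L.pathsOfLength m).sigma extensions) := by rw [card_sigma, Nat.cast_sum]
      _ ≤ #(L.pathsOfLength (m + 1)) := mod_cast hinj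

lemma pow_le_mul_card_level [Fintype V] [DecidableEq V] {j : ℕ} (hD : 0 ≤ D) (hh : 1 ≤ h)
    (hW : W.Nonempty) (hL : L.ExcessLT 2 (2 * h)) (hLj : L.ExcessLT j ((j + 1) * h))
    (hroot : D ≤ #{e | L.tail e ∈ W ∧ L.IsForward e})
    (hdeg : ∀ u ∉ W, L.level u < h → D ≤ #{e | L.tail e = u ∧ L.IsForward e}) :
    D ^ h ≤ j * #{v | L.level v = h} := by
  classical
  have hsub : L.pathsOfLength h ⊆
      ({v | L.level v = h} : Finset V).biUnion fun v => {p | L.IsPath v p} := fun p hp => by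
    obtain ⟨v, hv, hvp⟩ := mem_pathsOfLength.1 hp
    exact mem_biUnion.2 ⟨v, by simpa using hv, by simpa using hvp⟩
  have hcard : #(L.pathsOfLength h) ≤ #{v | L.level v = h} * j := by
    refine (card_le_card hsub).trans (card_biUnion_le_card_mul _ _ _ fun v hv => ?_)
    rw [mem_filter_univ] at hv
    exact hL.card_le_of_isPath hLj (mt L.level_eq_zero_iff.2 (by omega)) hv.le
      fun g hg => (mem_filter_univ _).1 hg
  calc D ^ h ≤ #(L.pathsOfLength h) :=
        pow_le_card_pathsOfLength hD hW hroot hdeg le_rfl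
    _ ≤ j * #{v | L.level v = h} := by rw [mul_comm]; exact_mod_cast hcard

end Counting

end Layering

section Excess

variable {Q c j s : ℕ} {F : Finset ι}

/-- The subgraph with nonempty vertex set `W` and edge set `F` has at least `c` more edges than a
tree on `W`. -/
structure HasExcess (M : Multigraph V ι) (c : ℕ) (W : Finset V) (F : Finset ι) : Prop where
  nonempty : W.Nonempty
  ends_subset : ∀ e ∈ F, M.ends e ⊆ W
  card_add_le : #W + c ≤ #F + 1

lemma HasExcess.union_rooted [DecidableEq V] [DecidableEq ι] {L : M.Layering W h} {U : Finset ι}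
    (hF : M.HasExcess c W F) (hU : L.IsRooted U) (hj : #(U.image L.head) + j ≤ #U) :
    M.HasExcess (c + j) (W ∪ U.image L.head) (F ∪ U) := by
  refine ⟨hF.nonempty.mono subset_union_left, fun e he => ?_, ?_⟩
  · rcases mem_union.1 he with he | he
    · exact (hF.ends_subset e he).trans subset_union_left
    · intro x hx
      rcases L.mem_ends.1 hx with rfl | rfl
      · refine mem_union.2 ((hU e he).2.imp_right fun ⟨f, hf, hfe⟩ => ?_)
        exact hfe ▸ mem_image_of_mem _ hf
      · exact mem_union_right _ (mem_image_of_mem _ he)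
  · have hdisj : Disjoint F U := disjoint_left.2 fun e heF heU =>
      (hU e heU).1 (hF.ends_subset e heF (L.head_mem e))
    have hW := card_union_le W (U.image L.head)
    have := hF.card_add_le
    rw [card_union_of_disjoint hdisj]
    omega

lemma HasExcess.excessLT [DecidableEq V] {t : ℕ} (hF : M.HasExcess c W F) (L : M.Layering W h)
    (hsize : #F + s ≤ t) (hlt : ∀ W' F', M.HasExcess (c + j) W' F' → t < #F') :
    L.ExcessLT j s := by
  classical
  intro U hU hs
  by_contra! hj
  have := hlt _ _ (hF.union_rooted hU hj)
  have := card_union_le F U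
  omega

/-- Every set of `i` edges with `Q + 1 ≤ i ≤ (Q + 1) * h` covers at least `i - (Q - 2)` vertices;
thus `Q` stands for `q + 2`. The inequality is written without truncated subtraction. -/
def IsSparse [DecidableEq V] (M : Multigraph V ι) (Q h : ℕ) : Prop :=
  ∀ I : Finset ι, Q + 1 ≤ #I → #I ≤ (Q + 1) * h → #I + 2 ≤ #(I.biUnion M.ends) + Q

variable [DecidableEq V]

lemma IsSparse.lt_card_of_hasExcess (hM : M.IsSparse Q h) (hQ : 1 ≤ Q) (hF : M.HasExcess Q W F) :
    (Q + 1) * h < #F := by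
  by_contra! hle
  obtain ⟨hW, hsub, hcard⟩ := hF
  have hWpos := hW.card_pos
  obtain ⟨e, he⟩ : F.Nonempty := card_pos.1 (by omega)
  have hWtwo : 2 ≤ #W := M.card_ends e ▸ card_le_card (hsub e he)
  have hcover : #(F.biUnion M.ends) ≤ #W := card_le_card (biUnion_subset.2 hsub)
  have := hM F (by omega) hle
  omega

lemma IsSparse.exists_maximal_hasExcess [Nonempty V] (hM : M.IsSparse Q h) (hQ : 1 ≤ Q) :
    ∃ c < Q, ∃ W F, M.HasExcess c W F ∧ #F ≤ c * h ∧
      ∀ c' W' F', c < c' → c' ≤ Q + 1 → M.HasExcess c' W' F' → c' * h < #F' := by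
  classical
  let P (c : ℕ) : Prop := ∃ W F, M.HasExcess c W F ∧ #F ≤ c * h
  have hP : P 0 := ⟨{Classical.arbitrary V}, ∅, ⟨singleton_nonempty _, by simp, by simp⟩, by simp⟩
  obtain ⟨W, F, hF, hcard⟩ : P (Nat.findGreatest P (Q + 1)) :=
    Nat.findGreatest_spec (Nat.zero_le _) hP
  refine ⟨Nat.findGreatest P (Q + 1), ?_, W, F, hF, hcard, fun c' W' F' hlt hle hF' => ?_⟩
  · by_contra! hge
    have hcardQ := hF.card_add_le
    have hlt := hM.lt_card_of_hasExcess hQ ⟨hF.nonempty, hF.ends_subset, by omega⟩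
    have hmul := Nat.mul_le_mul_right h (Nat.findGreatest_le (P := P) (Q + 1))
    omega
  · by_contra! hsmall
    exact Nat.findGreatest_is_greatest hlt hle ⟨W', F', hF', hsmall⟩

lemma HasExcess.card_edges_inside_lt [Fintype ι] (hF : M.HasExcess c W F) (hcard : #F ≤ c * h)
    (hh : 1 ≤ h) (hlt : ∀ F', M.HasExcess (c + 1) W F' → (c + 1) * h < #F') :
    #{e | M.ends e ⊆ W} < #W + c := by
  by_contra! hle
  obtain ⟨F', hF', hcard'⟩ := exists_subset_card_eq hle
  have hsmall := hlt F' ⟨hF.nonempty, fun e he => (mem_filter.1 (hF' he)).2, by omega⟩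
  have := hF.card_add_le
  rw [add_one_mul] at hsmall
  omega

/-- The subgraph induced by a set of vertices. -/
def induce (M : Multigraph V ι) (S : Finset V) : Multigraph S {e // M.ends e ⊆ S} where
  ends e := (M.ends e).subtype (· ∈ S)
  card_ends e := by rw [card_subtype, filter_true_of_mem e.2, M.card_ends]

lemma IsSparse.induce (hM : M.IsSparse Q h) (S : Finset V) : (M.induce S).IsSparse Q h := by
  intro I hI hIh
  have hmap : (I.biUnion (M.induce S).ends).map (.subtype _) =
      (I.map (.subtype _)).biUnion M.ends := by
    ext x
    simpa [Multigraph.induce] using fun e he _ hxe => he hxe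
  have := hM (I.map (.subtype _)) (by rwa [card_map]) (by rwa [card_map])
  rwa [← hmap, card_map, card_map] at this

end Excess

section Density

variable [DecidableEq V] [Fintype ι] {d D : ℝ} {Q c j : ℕ}

/-- Every nonempty set `A` of vertices is met by at least `d * #A` edges. -/
def IsUniformlyDense (M : Multigraph V ι) (d : ℝ) : Prop :=
  ∀ A : Finset V, A.Nonempty → d * #A ≤ #{e | ∃ x ∈ M.ends e, x ∈ A}

namespace Layering

variable {L : M.Layering W h} {u : V}

lemma le_card_forward_root (hM : M.IsUniformlyDense (D + Q)) (hD : 0 ≤ D) (hW : W.Nonempty)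
    (hc : c < Q) (hinside : #{e | M.ends e ⊆ W} < #W + c) :
    D ≤ #{e | L.tail e ∈ W ∧ L.IsForward e} := by
  classical
  have hsub : ({e | ∃ x ∈ M.ends e, x ∈ W} : Finset ι) ⊆
      ({e | L.tail e ∈ W ∧ L.IsForward e} : Finset ι) ∪ ({e | M.ends e ⊆ W} : Finset ι) := by
    intro e he
    obtain ⟨x, hxe, hxW⟩ := (mem_filter_univ _).1 he
    have htail : L.level (L.tail e) = 0 := by
      have hle := L.level_tail_le e
      rcases L.mem_ends.1 hxe with rfl | rfl <;> have := L.level_eq_zero_iff.2 hxW <;> omega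
    simp only [mem_union, mem_filter_univ, or_iff_not_imp_left]
    intro hforward x hx
    have hhead : L.level (L.head e) = 0 := by
      have hle := L.level_head_le e
      have hne : ¬L.IsForward e := fun hf => hforward ⟨L.level_eq_zero_iff.1 htail, hf⟩
      unfold IsForward at hne
      omega
    rcases L.mem_ends.1 hx with rfl | rfl <;> rwa [← L.level_eq_zero_iff]
  have hcard := (card_le_card hsub).trans (card_union_le _ _)
  have hdense := hM W hW
  have hpos : (1 : ℝ) ≤ #W := mod_cast hW.card_pos
  have hQ : (c : ℝ) + 1 ≤ Q := mod_cast hc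
  have hbound : (#{e | ∃ x ∈ M.ends e, x ∈ W} : ℝ) + 1 ≤
      #{e | L.tail e ∈ W ∧ L.IsForward e} + (#W + c) := by
    exact_mod_cast (show _ + 1 ≤ _ + (#W + c) by omega)
  have : (0 : ℝ) ≤ (D + Q - 1) * (#W - 1) :=
    mul_nonneg (by linarith [c.cast_nonneg (α := ℝ)]) (by linarith)
  nlinarith

lemma ExcessLT.le_card_forward (hM : M.IsUniformlyDense (D + j))
    (hL : L.ExcessLT j ((j + 1) * h)) (hu : u ∉ W) (huh : L.level u < h) :
    D ≤ #{e | L.tail e = u ∧ L.IsForward e} := by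
  classical
  have hsub : ({e | ∃ x ∈ M.ends e, x ∈ ({u} : Finset V)} : Finset ι) ⊆
      ({e | L.tail e = u ∧ L.IsForward e} : Finset ι) ∪
        ({e | u ∈ M.ends e ∧ ¬(L.tail e = u ∧ L.IsForward e)} : Finset ι) := by
    intro e he
    simp only [mem_filter_univ, mem_singleton, exists_eq_right, mem_union] at he ⊢
    tauto
  have hcard := (card_le_card hsub).trans ((card_union_le _ _).trans
    (Nat.add_le_add_left (hL.card_not_forward_le hu huh) _))
  have hdense := hM {u} (singleton_nonempty u)
  rw [card_singleton, Nat.cast_one, mul_one] at hdense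
  have : (#{e | ∃ x ∈ M.ends e, x ∈ ({u} : Finset V)} : ℝ) ≤
    #{e | L.tail e = u ∧ L.IsForward e} + j := mod_cast hcard
  linarith

end Layering

lemma IsUniformlyDense.mono {d' : ℝ} (hM : M.IsUniformlyDense d) (hd : d' ≤ d) :
    M.IsUniformlyDense d' := fun A hA =>
  (mul_le_mul_of_nonneg_right hd (Nat.cast_nonneg _)).trans (hM A hA)

theorem IsSparse.pow_lt [Fintype V] [Nonempty V] (hM : M.IsSparse Q h) (hQ : 1 ≤ Q)
    (hh : 1 ≤ h) (hD : 0 ≤ D) (hdense : M.IsUniformlyDense (D + Q)) :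
    D ^ h < Q * Fintype.card V := by
  obtain ⟨c, hc, W, F, hF, hFcard, hmax⟩ := hM.exists_maximal_hasExcess hQ
  obtain ⟨L⟩ := M.nonempty_layering W h
  have hL : L.ExcessLT 2 (2 * h) := hF.excessLT L (t := (c + 2) * h) (by linarith)
    fun W' F' => hmax _ W' F' (by omega) (by omega)
  have hLj : L.ExcessLT (Q - c) ((Q - c + 1) * h) := by
    refine hF.excessLT L (t := (Q + 1) * h) ?_ fun W' F' hF' =>
      hM.lt_card_of_hasExcess hQ (by rwa [Nat.add_sub_cancel' hc.le] at hF')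
    calc #F + (Q - c + 1) * h ≤ c * h + (Q - c + 1) * h := Nat.add_le_add_right hFcard _
      _ = (Q + 1) * h := by rw [← add_mul, ← add_assoc, Nat.add_sub_cancel' hc.le]
  have hroot := L.le_card_forward_root hdense hD hF.nonempty hc
    (hF.card_edges_inside_lt hFcard hh fun F' => hmax _ W F' (by omega) (by omega))
  have hdeg : ∀ u ∉ W, L.level u < h → D ≤ #{e | L.tail e = u ∧ L.IsForward e} := fun u =>
    hLj.le_card_forward (hdense.mono (by gcongr; omega))
  obtain ⟨w, hw⟩ := hF.nonempty
  have hlevel : #{v | L.level v = h} < Fintype.card V := by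
    refine card_lt_univ_of_notMem (x := w) fun hwh => ?_
    have := L.level_eq_zero_iff.2 hw
    have := (mem_filter_univ _).1 hwh
    omega
  calc D ^ h ≤ (Q - c : ℕ) * #{v | L.level v = h} :=
        Layering.pow_le_mul_card_level hD hh hF.nonempty hL hLj hroot hdeg
    _ ≤ Q * #{v | L.level v = h} := by gcongr; omega
    _ < Q * Fintype.card V := by gcongr

theorem IsSparse.card_edges_lt [Fintype V] [Nonempty V] (hM : M.IsSparse Q h) (hQ : 1 ≤ Q)
    (hh : 1 ≤ h) (hD : 0 ≤ D) (hV : Q * Fintype.card V ≤ D ^ h) :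
    Fintype.card ι < (D + Q) * Fintype.card V := by
  induction hn : Fintype.card V using Nat.strong_induction_on generalizing V ι with
  | _ n ih =>
  subst hn
  by_contra! hcard
  have hdense : ¬M.IsUniformlyDense (D + Q) := fun hdense => (hM.pow_lt hQ hh hD hdense).not_ge hV
  simp only [IsUniformlyDense, not_forall, not_le] at hdense
  obtain ⟨A, hA, hlt⟩ := hdense
  have hedges : Fintype.card {e // M.ends e ⊆ Aᶜ} + #{e | ∃ x ∈ M.ends e, x ∈ A} =
      Fintype.card ι := by
    rw [Fintype.card_subtype, ← card_univ,
      ← card_filter_add_card_filter_not (s := univ) fun e => M.ends e ⊆ Aᶜ]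
    simp [subset_iff]
  have hvertices : Fintype.card ↥Aᶜ + #A = Fintype.card V := by
    rw [Fintype.card_coe, card_compl_add_card]
  have hcompl : (D + Q) * Fintype.card ↥Aᶜ < Fintype.card {e // M.ends e ⊆ Aᶜ} := by
    rw [← hedges, ← hvertices] at hcard
    push_cast at hcard
    linarith
  have : Nonempty ↥Aᶜ := by
    obtain ⟨e⟩ : Nonempty {e // M.ends e ⊆ Aᶜ} :=
      Fintype.card_pos_iff.1 (Nat.cast_pos.1 (hcompl.trans_le' (by positivity)))
    obtain ⟨x, hx⟩ := card_pos.1 ((M.card_ends e).symm ▸ two_pos)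
    exact ⟨x, e.2 hx⟩
  have hfewer : Fintype.card ↥Aᶜ < Fintype.card V := by
    have := hA.card_pos
    omega
  exact lt_asymm hcompl (ih _ hfewer (hM.induce Aᶜ) (hV.trans' (by gcongr)) rfl)

theorem IsSparse.card_edges_lt_rpow [Fintype V] [Nonempty V] (hM : M.IsSparse Q h) (hQ : 1 ≤ Q)
    (hh : 1 ≤ h) :
    Fintype.card ι < (Q : ℝ) ^ (1 / (h : ℝ)) * (Fintype.card V : ℝ) ^ (1 + 1 / (h : ℝ)) +
      Q * Fintype.card V := by
  have hh0 : h ≠ 0 := by omega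
  have hn : (0 : ℝ) < Fintype.card V := mod_cast Fintype.card_pos
  set D : ℝ := (Q : ℝ) ^ (1 / (h : ℝ)) * (Fintype.card V : ℝ) ^ (1 / (h : ℝ)) with hD
  have hDpow : D ^ h = Q * Fintype.card V := by
    rw [hD, mul_pow, one_div, Real.rpow_inv_natCast_pow (by positivity) hh0,
      Real.rpow_inv_natCast_pow (by positivity) hh0]
  calc (Fintype.card ι : ℝ) < (D + Q) * Fintype.card V :=
        hM.card_edges_lt hQ hh (by positivity) hDpow.ge
    _ = _ := by
      rw [Real.rpow_add hn, Real.rpow_one, hD]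
      ring

end Density

section OfMultiset

variable [DecidableEq V] {E : Multiset (Finset V)}

/-- The multigraph whose edges are the members of a multiset of pairs, with multiplicity. -/
def ofMultiset (E : Multiset (Finset V)) (hE : ∀ e ∈ E, #e = 2) : Multigraph V E.ToType where
  ends e := e
  card_ends e := hE e Multiset.coe_mem

lemma isSparse_ofMultiset {Q : ℕ} (hE : ∀ e ∈ E, #e = 2)
    (hcover : ∀ E' ≤ E, Q + 1 ≤ Multiset.card E' → Multiset.card E' ≤ (Q + 1) * h →
      Multiset.card E' + 2 ≤ #(E'.toFinset.biUnion id) + Q) :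
    (ofMultiset E hE).IsSparse Q h := by
  intro I hI hIh
  have hle : I.val.map (ofMultiset E hE).ends ≤ E :=
    (Multiset.map_le_map (Finset.val_le_iff.2 (subset_univ I))).trans_eq (Multiset.map_univ_coe E)
  have hunion : (I.val.map (ofMultiset E hE).ends).toFinset.biUnion id =
      I.biUnion (ofMultiset E hE).ends := image_biUnion
  simpa only [Multiset.card_map, card_val, hunion] using
    hcover _ hle (by rwa [Multiset.card_map]) (by rwa [Multiset.card_map])

end OfMultiset

end Multigraph

end

theorem statement10_general {V : Type*} [Fintype V] [DecidableEq V] [Nonempty V] (k : ℕ) (q h : ℤ)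
    (C : ℝ) (hq : -1 ≤ q) (hk : q + 3 ≤ (k : ℤ)) (hh : h = (k : ℤ) / (q + 3))
    (hC : C = ((q : ℝ) + 2) ^ ((1 : ℝ) / (h : ℝ)))
    (E : Multiset (Finset V)) (hunif : ∀ e ∈ E, e.card = 2)
    (hcode : ∀ i : ℕ, q + 3 ≤ (i : ℤ) → i ≤ k → ∀ E' ≤ E, Multiset.card E' = i →
      (i : ℤ) - q ≤ ((E'.toFinset.biUnion id).card : ℤ)) :
    (Multiset.card E : ℝ) < C * (Fintype.card V : ℝ) ^ ((1 : ℝ) + 1 / (h : ℝ)) +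
      ((q : ℝ) + 2) * (Fintype.card V : ℝ) := by
  obtain ⟨Q, hQ⟩ := Int.eq_ofNat_of_zero_le (show 0 ≤ q + 2 by omega)
  obtain rfl : q = Q - 2 := by omega
  have hhpos : 1 ≤ h := hh ▸ (Int.le_ediv_iff_mul_le (by omega)).2 (by omega)
  lift h to ℕ using by omega
  have hmul : (Q + 1) * h ≤ k := by
    have := Int.ediv_mul_le (k : ℤ) (show (Q : ℤ) - 2 + 3 ≠ 0 by omega)
    rw [← hh] at this
    zify
    linarith
  have hsparse := Multigraph.isSparse_ofMultiset (Q := Q) (h := h) hunif fun E' hE' hlow hupp => by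
    have := hcode _ (by omega) (hupp.trans hmul) E' hE' rfl
    omega
  simpa [hC] using hsparse.card_edges_lt_rpow (by omega) (by omega)

/-- For `q ≥ -1`, `k ≥ 2q+6`, `n ≥ k`, `h = ⌊k/(q+3)⌋` and `C = (q+2)^{1/h}`: every
multiset `E` of `2`-element subsets (edges, possibly repeated) of an `n`-element vertex
set in which, for every `q+3 ≤ i ≤ k`, every sub-multiset of `i` edges (counted with
multiplicity) covers at least `i-q` vertices, has fewer than `C·n^{1+1/h} + (q+2)·n`
edges counted with multiplicity. -/
theorem statement10 (k n : ℕ) (q h : ℤ) (C : ℝ)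
    (hq : -1 ≤ q) (hk : 2 * q + 6 ≤ (k : ℤ)) (hn : k ≤ n)
    (hh : h = (k : ℤ) / (q + 3))
    (hC : C = ((q : ℝ) + 2) ^ ((1 : ℝ) / (h : ℝ)))
    (E : Multiset (Finset (Fin n))) (hunif : ∀ e ∈ E, e.card = 2)
    (hcode : ∀ i : ℕ, q + 3 ≤ (i : ℤ) → i ≤ k → ∀ E' ≤ E, Multiset.card E' = i →
      (i : ℤ) - q ≤ ((E'.toFinset.biUnion id).card : ℤ)) :
    (Multiset.card E : ℝ) < C * (n : ℝ) ^ ((1 : ℝ) + 1 / (h : ℝ)) + ((q : ℝ) + 2) * (n : ℝ) := by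
  have : Nonempty (Fin n) := ⟨⟨0, by omega⟩⟩
  simpa using statement10_general k q h C hq (by omega) hh hC E hunif hcode
end

section
/- Let n, k, r, q be integers with r ≥ 2, q ≥ −r+1 and n ≥ k ≥ 2q+2r+2, and let C' = (q+r)^{1/⌊k/(q+r+1)⌋} (a real number). Let E be a multiset of r-element subsets (edges, possibly repeated) of an n-element vertex set such that for every integer i with q+r+1 ≤ i ≤ k, every sub-multiset of E consisting of i edges (counted with multiplicity) covers at least i−q vertices in total. Then the number of edges of E counted with multiplicity is less than (2C'/r!)·n^{r−1+1/⌊k/(q+r+1)⌋} + (2(q+r)/r!)·n^{r−1}. -/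
/-!
Put `s = q + r` and `D ^ h = s n`. Averaging over the `(r - 2)`-element vertex sets reduces the
bound to their links, which are multigraphs with the same sparsity property as graphs: any `i` of
their edges, `s < i ≤ k`, cover at least `i - s + 2` vertices.

A multigraph with at least `n (D + s)` edges has a nonempty subgraph of minimum degree at least
`D + s`. Grow a tree in that subgraph layer by layer, attaching below a last-layer vertex `x` only
those vertices whose sole last-layer neighbour is `x`. A subtree with `s` further edges between its
vertices has too few vertices, so if it has at most `k` edges in all it violates sparsity. Hence
every `x` keeps at least `D` such private neighbours, and the layer at depth `h - 1` has at least
`D ^ (h - 1)` vertices. At least `D` edges leave the tree from each of these, whereas each outside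
vertex receives at most `s` of them, so that `D ^ h < s n`, a contradiction.
-/

section

open Finset

variable {V ι : Type*} [DecidableEq V]

/-- Local sparsity of the hypergraph with edge family `e` restricted to the indices in `F`: any `i`
of these edges, `s < i ≤ k`, cover at least `i - (s - r)` vertices. Repeated edges are distinct
indices. With `s = q + r` this is the hypothesis on `i` edges covering `i - q` vertices, stated
without subtraction. -/
def EdgeSparse (e : ι → Finset V) (F : Finset ι) (r s k : ℕ) : Prop :=
  ∀ B ⊆ F, s < #B → #B ≤ k → #B + r ≤ #(B.biUnion e) + s

lemma EdgeSparse.mono {e : ι → Finset V} {F F' : Finset ι} {r s k : ℕ}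
    (hsp : EdgeSparse e F r s k) (hF : F' ⊆ F) : EdgeSparse e F' r s k :=
  fun B hB => hsp B (hB.trans hF)

lemma EdgeSparse.link {e : ι → Finset V} {F : Finset ι} {r s k : ℕ} {S : Finset V}
    (hsp : EdgeSparse e F (#S + r) s k) :
    EdgeSparse (fun f => e f \ S) {f ∈ F | S ⊆ e f} r s k := by
  intro B hB hsB hBk
  have hcover : B.biUnion e ⊆ (B.biUnion fun f => e f \ S) ∪ S := fun v hv => by
    obtain ⟨f, hf, hvf⟩ := mem_biUnion.1 hv
    by_cases hvS : v ∈ S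
    · exact mem_union_right _ hvS
    · exact mem_union_left _ (mem_biUnion.2 ⟨f, hf, mem_sdiff.2 ⟨hvf, hvS⟩⟩)
  have hcard := (card_le_card hcover).trans (card_union_le _ _)
  have hBe := hsp B (hB.trans (filter_subset _ _)) hsB hBk
  omega

lemma edgeSparse_coe {E : Multiset (Finset V)} {r s k : ℕ}
    (hE : ∀ E' ≤ E, s < E'.card → E'.card ≤ k → E'.card + r ≤ #(E'.toFinset.biUnion id) + s) :
    EdgeSparse (fun f : E.ToType => f.1) univ r s k := by
  intro B _ hsB hBk
  have hle : B.val.map (fun f : E.ToType => f.1) ≤ E :=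
    (Multiset.map_le_map (val_le_iff.2 (subset_univ B))).trans_eq (Multiset.map_univ_coe E)
  have hcover : (B.val.map fun f : E.ToType => f.1).toFinset.biUnion id =
      B.biUnion fun f => f.1 := by
    ext v
    simp
  simpa [hcover] using hE _ hle (by simpa using hsB) (by simpa using hBk)

lemma eq_pair_of_card_eq_two {A : Finset V} (hA : #A = 2) {x y : V} (hx : x ∈ A) (hy : y ∈ A)
    (hxy : x ≠ y) : A = {x, y} :=
  (eq_of_subset_of_card_le (by simp [insert_subset_iff, hx, hy])
    (by rw [hA, card_pair hxy])).symm

/-- A tree of height `height` in the multigraph with edges `e f`, `f ∈ F`, whose vertices are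
graded by their distance `depth` to `root`; `up v` is (the index of) the edge joining `v` to its
parent. The values of `depth` outside `verts` and of `up` outside `verts.erase root` are junk. -/
structure LayeredTree (e : ι → Finset V) (F : Finset ι) (root : V) (height : ℕ) where
  verts : Finset V
  depth : V → ℕ
  up : V → ι
  root_mem : root ∈ verts
  depth_root : depth root = 0
  depth_le : ∀ v ∈ verts, depth v ≤ height
  up_mem : ∀ v ∈ verts, v ≠ root → up v ∈ F
  exists_parent : ∀ v ∈ verts, v ≠ root → ∃ u ∈ verts, e (up v) = {u, v} ∧ depth v = depth u + 1

namespace LayeredTree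

variable {e : ι → Finset V} {F : Finset ι} {root : V} {j : ℕ} (t : LayeredTree e F root j)

/-- The vertices at depth exactly the height of the tree. -/
def lastLayer : Finset V := {v ∈ t.verts | t.depth v = j}

/-- The children of `x`: the other vertices whose parent edge contains `x`. -/
def children (x : V) : Finset V := {w ∈ t.verts | w ≠ root ∧ w ≠ x ∧ x ∈ e (t.up w)}

/-- A set of non-root vertices which together with the root contains the parent of each of its
members. Adding the root gives the vertex set of a subtree, with one edge for each vertex of `P`. -/
def IsAncestorClosed (P : Finset V) : Prop :=
  P ⊆ t.verts.erase root ∧ ∀ v ∈ P, e (t.up v) ⊆ insert root P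

variable {t} {x v w : V}

lemma mem_lastLayer : x ∈ t.lastLayer ↔ x ∈ t.verts ∧ t.depth x = j := mem_filter

lemma mem_verts_of_mem_lastLayer (hx : x ∈ t.lastLayer) : x ∈ t.verts := (mem_lastLayer.1 hx).1

lemma mem_edge_up (hv : v ∈ t.verts) (hvr : v ≠ root) : v ∈ e (t.up v) := by
  obtain ⟨u, -, he, -⟩ := t.exists_parent v hv hvr
  simp [he]

lemma depth_eq_add_one (hv : v ∈ t.verts) (hvr : v ≠ root) (hx : x ∈ e (t.up v)) (hvx : v ≠ x) :
    t.depth v = t.depth x + 1 := by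
  obtain ⟨u, -, he, hd⟩ := t.exists_parent v hv hvr
  obtain rfl | rfl : x = u ∨ x = v := by simpa [he] using hx
  · exact hd
  · exact absurd rfl hvx

lemma up_injOn : Set.InjOn t.up (t.verts.erase root) := by
  intro u hu v hv huv
  obtain ⟨hur, hu⟩ := mem_erase.1 hu
  obtain ⟨hvr, hv⟩ := mem_erase.1 hv
  by_contra hne
  have hvu := depth_eq_add_one hu hur (huv ▸ mem_edge_up hv hvr) hne
  have huv := depth_eq_add_one hv hvr (huv ▸ mem_edge_up hu hur) (Ne.symm hne)
  omega

lemma children_eq_empty (hx : x ∈ t.lastLayer) : t.children x = ∅ := by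
  rw [children, filter_eq_empty_iff]
  rintro w hw ⟨hwr, hwx, hxw⟩
  have hdw := depth_eq_add_one hw hwr hxw hwx
  have := t.depth_le w hw
  have := (mem_lastLayer.1 hx).2
  omega

lemma IsAncestorClosed.union {P Q : Finset V} (hP : t.IsAncestorClosed P)
    (hQ : t.IsAncestorClosed Q) : t.IsAncestorClosed (P ∪ Q) := by
  refine ⟨union_subset hP.1 hQ.1, fun v hv => ?_⟩
  rcases mem_union.1 hv with hv | hv
  · exact (hP.2 v hv).trans (insert_subset_insert _ subset_union_left)
  · exact (hQ.2 v hv).trans (insert_subset_insert _ subset_union_right)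

lemma IsAncestorClosed.biUnion {Y : Finset V} {P : V → Finset V}
    (hP : ∀ y ∈ Y, t.IsAncestorClosed (P y)) : t.IsAncestorClosed (Y.biUnion P) := by
  refine ⟨biUnion_subset.2 fun y hy => (hP y hy).1, fun v hv => ?_⟩
  obtain ⟨y, hy, hvy⟩ := mem_biUnion.1 hv
  exact ((hP y hy).2 v hvy).trans (insert_subset_insert _ (subset_biUnion_of_mem P hy))

lemma exists_isAncestorClosed (hv : v ∈ t.verts) :
    ∃ P, t.IsAncestorClosed P ∧ v ∈ insert root P ∧ #P ≤ t.depth v := by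
  induction hd : t.depth v generalizing v with
  | zero =>
    obtain rfl | hvr := eq_or_ne v root
    · exact ⟨∅, ⟨by simp, by simp⟩, by simp, by simp⟩
    · obtain ⟨u, -, -, hdu⟩ := t.exists_parent v hv hvr
      omega
  | succ d ih =>
    have hvr : v ≠ root := by
      rintro rfl
      simp [t.depth_root] at hd
    obtain ⟨u, hu, he, hdu⟩ := t.exists_parent v hv hvr
    obtain ⟨P, hP, huP, hPd⟩ := ih hu (by omega)
    refine ⟨insert v P, ⟨?_, ?_⟩, by simp, (card_insert_le _ _).trans (by omega)⟩
    · exact insert_subset (mem_erase.2 ⟨hvr, hv⟩) hP.1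
    · have hmono : insert root P ⊆ insert root (insert v P) :=
        insert_subset_insert _ (subset_insert _ _)
      refine forall_mem_insert _ _ _ |>.2 ⟨?_, fun w hw => (hP.2 w hw).trans hmono⟩
      rw [he]
      exact insert_subset (hmono huP) (by simp)

variable {s k : ℕ} {B : Finset ι}

lemma card_lt_of_edges_subset (he : ∀ f ∈ F, #(e f) = 2) (hs : 0 < s)
    (hsp : EdgeSparse e F 2 s k) {P : Finset V} (hP : t.IsAncestorClosed P) (hk : #P + #B ≤ k)
    (hBF : B ⊆ F) (hBP : ∀ f ∈ B, e f ⊆ insert root P)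
    (hup : ∀ f ∈ B, ∀ v ∈ t.verts, v ≠ root → t.up v ≠ f) : #B < s := by
  classical
  by_contra! hsB
  have hdisj : Disjoint (P.image t.up) B := by
    refine disjoint_left.2 fun f hf hfB => ?_
    obtain ⟨v, hv, rfl⟩ := mem_image.1 hf
    obtain ⟨hvr, hvt⟩ := mem_erase.1 (hP.1 hv)
    exact hup _ hfB v hvt hvr rfl
  have hcard : #(P.image t.up ∪ B) = #P + #B := by
    rw [card_union_of_disjoint hdisj, card_image_of_injOn (t.up_injOn.mono (mod_cast hP.1))]
  have hPF : P.image t.up ⊆ F := image_subset_iff.2 fun v hv =>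
    t.up_mem v (mem_of_mem_erase (hP.1 hv)) (ne_of_mem_erase (hP.1 hv))
  have hcover : #((P.image t.up ∪ B).biUnion e) ≤ #P + 1 := by
    refine (card_le_card (biUnion_subset.2 fun f hf => ?_)).trans (card_insert_le root P)
    rcases mem_union.1 hf with hf | hf
    · obtain ⟨v, hv, rfl⟩ := mem_image.1 hf
      exact hP.2 v hv
    · exact hBP f hf
  have hPpos : 0 < #P := by
    obtain ⟨f, hf⟩ := card_pos.1 (hs.trans_le hsB)
    have := (card_le_card (hBP f hf)).trans (card_insert_le _ _)
    have := he f (hBF hf)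
    omega
  have := hsp _ (union_subset hPF hBF) (by omega) (by omega)
  omega

lemma card_lt_of_forall_up_ne (he : ∀ f ∈ F, #(e f) = 2) (hs : 0 < s)
    (hsp : EdgeSparse e F 2 s k) (hx : x ∈ t.verts) {b : ℕ} (hk : t.depth x + s * b + s ≤ k)
    (hBF : B ⊆ F) (hxB : ∀ f ∈ B, x ∈ e f)
    (hB : ∀ f ∈ B, ∀ y ∈ e f, y ≠ x → y ∈ t.verts ∧ t.depth y ≤ b)
    (hup : ∀ f ∈ B, ∀ v ∈ t.verts, v ≠ root → t.up v ≠ f) : #B < s := by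
  classical
  by_contra! hsB
  obtain ⟨B', hB', hcardB'⟩ := exists_subset_card_eq hsB
  have hpath : ∀ v ∈ t.verts, ∃ P, t.IsAncestorClosed P ∧ v ∈ insert root P ∧ #P ≤ t.depth v :=
    fun v hv => exists_isAncestorClosed hv
  choose! P hP hmem hcardP using hpath
  let Y : Finset V := B'.biUnion fun f => (e f).erase x
  have hY : ∀ y ∈ Y, y ∈ t.verts ∧ t.depth y ≤ b := fun y hy => by
    obtain ⟨f, hf, hyf⟩ := mem_biUnion.1 hy
    exact hB f (hB' hf) y (mem_of_mem_erase hyf) (ne_of_mem_erase hyf)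
  have hcardY : #Y ≤ s := by
    rw [← hcardB', ← mul_one #B']
    refine card_biUnion_le_card_mul _ _ _ fun f hf => ?_
    exact (card_erase_of_mem (hxB f (hB' hf))).trans_le (by simp [he f (hBF (hB' hf))])
  have hcardYP : #(Y.biUnion P) ≤ s * b :=
    (card_biUnion_le_card_mul _ _ b fun y hy => (hcardP y (hY y hy).1).trans (hY y hy).2).trans
      (Nat.mul_le_mul_right b hcardY)
  have hcardx := hcardP x hx
  have hcard := card_union_le (P x) (Y.biUnion P)
  refine (card_lt_of_edges_subset he hs hsp
    ((hP x hx).union (IsAncestorClosed.biUnion fun y hy => hP y (hY y hy).1))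
    (by omega) (hB'.trans hBF) (fun f hf y hy => ?_) fun f hf => hup f (hB' hf)).ne hcardB'
  obtain rfl | hyx := eq_or_ne y x
  · exact insert_subset_insert _ subset_union_left (hmem y hx)
  · have hyY : y ∈ Y := mem_biUnion.2 ⟨f, hf, mem_erase.2 ⟨hyx, hy⟩⟩
    exact insert_subset_insert _ ((subset_biUnion_of_mem P hyY).trans subset_union_right)
      (hmem y (hY y hyY).1)

lemma card_le_add_card_children (he : ∀ f ∈ F, #(e f) = 2) (hs : 0 < s)
    (hsp : EdgeSparse e F 2 s k) (hx : x ∈ t.verts) {b : ℕ} (hk : t.depth x + s * b + s ≤ k)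
    (hBF : B ⊆ F) (hxB : ∀ f ∈ B, x ∈ e f)
    (hB : ∀ f ∈ B, ∀ y ∈ e f, y ≠ x → y ∈ t.verts ∧ t.depth y ≤ b) :
    #B ≤ s + #(t.children x) := by
  classical
  let B₀ : Finset ι := {f ∈ B | ∀ v ∈ t.verts, v ≠ root → t.up v ≠ f}
  have hB₀ : #B₀ < s := card_lt_of_forall_up_ne he hs hsp hx hk ((filter_subset _ _).trans hBF)
    (fun f hf => hxB f (mem_filter.1 hf).1) (fun f hf => hB f (mem_filter.1 hf).1)
    fun f hf => (mem_filter.1 hf).2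
  have hsub : B ⊆ insert (t.up x) (B₀ ∪ (t.children x).image t.up) := by
    intro f hf
    by_cases hup : ∀ v ∈ t.verts, v ≠ root → t.up v ≠ f
    · exact mem_insert_of_mem (mem_union_left _ (mem_filter.2 ⟨hf, hup⟩))
    push Not at hup
    obtain ⟨v, hv, hvr, rfl⟩ := hup
    obtain rfl | hvx := eq_or_ne v x
    · exact mem_insert_self _ _
    · exact mem_insert_of_mem (mem_union_right _ (mem_image_of_mem _
        (mem_filter.2 ⟨hv, hvr, hvx, hxB _ hf⟩)))
  have := (card_le_card hsub).trans (card_insert_le _ _)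
  have := card_union_le B₀ ((t.children x).image t.up)
  have := card_image_le (s := t.children x) (f := t.up)
  omega

variable (t) in
/-- The vertices outside the tree that are joined to `x` by an edge. -/
def newNbrs (x : V) : Finset V := {w ∈ F.biUnion e | w ∉ t.verts ∧ ∃ f ∈ F, e f = {x, w}}

variable (t) in
/-- The vertices outside the tree whose only neighbour in the last layer is `x`. Only these are
added below `x` when the tree grows, so that distinct `x` receive disjoint sets of children. -/
def privateNbrs (x : V) : Finset V :=
  {w ∈ t.newNbrs x | ∀ y ∈ t.lastLayer, w ∈ t.newNbrs y → y = x}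

lemma mem_newNbrs : w ∈ t.newNbrs x ↔ w ∉ t.verts ∧ ∃ f ∈ F, e f = {x, w} := by
  rw [newNbrs, mem_filter, and_iff_right_iff_imp]
  rintro ⟨-, f, hf, hfe⟩
  exact mem_biUnion.2 ⟨f, hf, by simp [hfe]⟩

lemma exists_edge_of_mem_newNbrs (hx : x ∈ t.lastLayer) (hw : w ∈ t.newNbrs x) :
    ∃ f ∈ F, ∃ y ∈ t.lastLayer, e f = {y, w} ∧ (y = x → w ∈ t.privateNbrs x) := by
  by_cases hwx : w ∈ t.privateNbrs x
  · obtain ⟨-, f, hf, hfe⟩ := mem_newNbrs.1 hw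
    exact ⟨f, hf, x, hx, hfe, fun _ => hwx⟩
  · obtain ⟨y, hy, hwy, hyx⟩ : ∃ y ∈ t.lastLayer, w ∈ t.newNbrs y ∧ y ≠ x := by
      simpa [privateNbrs, hw] using hwx
    obtain ⟨-, f, hf, hfe⟩ := mem_newNbrs.1 hwy
    exact ⟨f, hf, y, hy, hfe, fun h => absurd h hyx⟩

variable (t) in
/-- The tree with the vertices of `W` added below its last layer, `w` being attached by the edge
`c w`. -/
def extend (W : Finset V) (c : V → ι)
    (hW : ∀ w ∈ W, w ∉ t.verts ∧ c w ∈ F ∧ ∃ y ∈ t.lastLayer, e (c w) = {y, w}) :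
    LayeredTree e F root (j + 1) where
  verts := t.verts ∪ W
  depth v := if v ∈ t.verts then t.depth v else j + 1
  up v := if v ∈ t.verts then t.up v else c v
  root_mem := mem_union_left _ t.root_mem
  depth_root := by rw [if_pos t.root_mem, t.depth_root]
  depth_le v _ := by
    split_ifs with hvt
    · exact (t.depth_le v hvt).trans j.le_succ
    · exact le_rfl
  up_mem v hv hvr := by
    split_ifs with hvt
    · exact t.up_mem v hvt hvr
    · exact (hW v ((mem_union.1 hv).resolve_left hvt)).2.1
  exists_parent v hv hvr := by
    by_cases hvt : v ∈ t.verts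
    · obtain ⟨u, hu, he, hd⟩ := t.exists_parent v hvt hvr
      exact ⟨u, mem_union_left _ hu, by rw [if_pos hvt, he], by rw [if_pos hvt, if_pos hu, hd]⟩
    · obtain ⟨-, -, y, hy, he⟩ := hW v ((mem_union.1 hv).resolve_left hvt)
      obtain ⟨hyt, hyj⟩ := mem_lastLayer.1 hy
      exact ⟨y, mem_union_left _ hyt, by rw [if_neg hvt, he], by rw [if_neg hvt, if_pos hyt, hyj]⟩

section extend

variable {W : Finset V} {c : V → ι}
  {hW : ∀ w ∈ W, w ∉ t.verts ∧ c w ∈ F ∧ ∃ y ∈ t.lastLayer, e (c w) = {y, w}}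

lemma depth_extend_of_mem (hv : v ∈ t.verts) : (t.extend W c hW).depth v = t.depth v :=
  if_pos hv

lemma lastLayer_extend : (t.extend W c hW).lastLayer = W := by
  ext w
  rw [mem_lastLayer]
  constructor
  · rintro ⟨hw, hdw⟩
    refine (mem_union.1 hw).resolve_left fun hwt => ?_
    rw [depth_extend_of_mem hwt] at hdw
    have := t.depth_le w hwt
    omega
  · exact fun hw => ⟨mem_union_right _ hw, if_neg (hW w hw).1⟩

lemma mem_and_mem_of_mem_children_extend (hx : x ∈ t.lastLayer)
    (hw : w ∈ (t.extend W c hW).children x) : w ∈ W ∧ x ∈ e (c w) := by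
  obtain ⟨hwt', hwr, hwx, hxw⟩ := mem_filter.1 hw
  have hdw := depth_eq_add_one hwt' hwr hxw hwx
  obtain ⟨hxt, hxj⟩ := mem_lastLayer.1 hx
  rw [depth_extend_of_mem hxt, hxj] at hdw
  have hwW : w ∈ W := by
    rw [← lastLayer_extend (hW := hW)]
    exact mem_lastLayer.2 ⟨hwt', hdw⟩
  have hup : (t.extend W c hW).up w = c w := if_neg (hW w hwW).1
  exact ⟨hwW, hup ▸ hxw⟩

end extend

lemma card_edges_le_add_card_privateNbrs (he : ∀ f ∈ F, #(e f) = 2) (hs : 0 < s)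
    (hsp : EdgeSparse e F 2 s k) (hk : (j + 2) * (s + 1) ≤ k) (hx : x ∈ t.lastLayer) :
    #{f ∈ F | x ∈ e f} ≤ s + #(t.privateNbrs x) := by
  obtain ⟨hxt, hxj⟩ := mem_lastLayer.1 hx
  have : Nonempty ι := ⟨t.up x⟩
  choose! c hcF y hy hce hprivate using fun w (hw : w ∈ t.newNbrs x) =>
    exists_edge_of_mem_newNbrs hx hw
  let t' := t.extend (t.newNbrs x) c fun w hw =>
    ⟨(mem_newNbrs.1 hw).1, hcF w hw, y w, hy w hw, hce w hw⟩
  have hchildren : t'.children x ⊆ t.privateNbrs x := fun w hw => by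
    obtain ⟨hwW, hxw⟩ := mem_and_mem_of_mem_children_extend hx hw
    obtain rfl | rfl : x = y w ∨ x = w := by simpa [hce w hwW] using hxw
    · exact hprivate w hwW rfl
    · exact absurd hxt (mem_newNbrs.1 hwW).1
  refine (card_le_add_card_children (t := t') (b := j + 1) he hs hsp (mem_union_left _ hxt) ?_
    (filter_subset _ _) (fun f hf => (mem_filter.1 hf).2) fun f hf z hz hzx => ?_).trans
    (Nat.add_le_add_left (card_le_card hchildren) s)
  · rw [depth_extend_of_mem hxt, hxj]
    linarith
  · obtain ⟨hfF, hxf⟩ := mem_filter.1 hf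
    suffices hzt' : z ∈ t'.verts from ⟨hzt', t'.depth_le z hzt'⟩
    by_cases hzt : z ∈ t.verts
    · exact mem_union_left _ hzt
    · exact mem_union_right _ (mem_newNbrs.2
        ⟨hzt, f, hfF, eq_pair_of_card_eq_two (he f hfF) hxf hz hzx.symm⟩)

lemma card_edges_le_add_sum (he : ∀ f ∈ F, #(e f) = 2) (hs : 0 < s)
    (hsp : EdgeSparse e F 2 s k) (hk : (j + 1) * (s + 1) ≤ k) [Fintype V] (hx : x ∈ t.lastLayer) :
    #{f ∈ F | x ∈ e f} ≤ s + ∑ w ∈ t.vertsᶜ, #{f ∈ F | e f = {x, w}} := by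
  classical
  obtain ⟨hxt, hxj⟩ := mem_lastLayer.1 hx
  have hinside : #{f ∈ F | x ∈ e f ∧ e f ⊆ t.verts} ≤ s := by
    simpa [children_eq_empty hx] using
      card_le_add_card_children (b := j) (B := {f ∈ F | x ∈ e f ∧ e f ⊆ t.verts}) he hs hsp hxt
        (by linarith) (filter_subset _ _) (fun f hf => (mem_filter.1 hf).2.1)
        fun f hf y hy _ => have hyt := (mem_filter.1 hf).2.2 hy; ⟨hyt, t.depth_le y hyt⟩
  have hsub : {f ∈ F | x ∈ e f} ⊆ {f ∈ F | x ∈ e f ∧ e f ⊆ t.verts} ∪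
      t.vertsᶜ.biUnion fun w => {f ∈ F | e f = {x, w}} := by
    intro f hf
    obtain ⟨hfF, hxf⟩ := mem_filter.1 hf
    by_cases hft : e f ⊆ t.verts
    · exact mem_union_left _ (mem_filter.2 ⟨hfF, hxf, hft⟩)
    · obtain ⟨w, hwf, hwt⟩ := not_subset.1 hft
      have hxw : x ≠ w := fun h => hwt (h ▸ hxt)
      exact mem_union_right _ (mem_biUnion.2 ⟨w, mem_compl.2 hwt,
        mem_filter.2 ⟨hfF, eq_pair_of_card_eq_two (he f hfF) hxf hwf hxw⟩⟩)
  calc #{f ∈ F | x ∈ e f}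
      ≤ #{f ∈ F | x ∈ e f ∧ e f ⊆ t.verts} +
          #(t.vertsᶜ.biUnion fun w => {f ∈ F | e f = {x, w}}) :=
        (card_le_card hsub).trans (card_union_le _ _)
    _ ≤ s + ∑ w ∈ t.vertsᶜ, #{f ∈ F | e f = {x, w}} := add_le_add hinside card_biUnion_le

lemma sum_card_edges_lastLayer_le (he : ∀ f ∈ F, #(e f) = 2) (hs : 0 < s)
    (hsp : EdgeSparse e F 2 s k) (hk : (j + 1) * (s + 1) ≤ k) (hw : w ∉ t.verts) :
    ∑ x ∈ t.lastLayer, #{f ∈ F | e f = {x, w}} ≤ s := by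
  classical
  let B : Finset ι := t.lastLayer.biUnion fun x => {f ∈ F | e f = {x, w}}
  have hB : ∀ f ∈ B, f ∈ F ∧ ∃ x ∈ t.lastLayer, e f = {x, w} := fun f hf => by
    obtain ⟨x, hx, hf⟩ := mem_biUnion.1 hf
    exact ⟨(mem_filter.1 hf).1, x, hx, (mem_filter.1 hf).2⟩
  have hcard : #B = ∑ x ∈ t.lastLayer, #{f ∈ F | e f = {x, w}} := by
    refine card_biUnion fun x hx y _ hxy => disjoint_left.2 fun f hfx hfy => ?_
    have hxf : x ∈ ({y, w} : Finset V) := by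
      rw [← (mem_filter.1 hfy).2, (mem_filter.1 hfx).2]
      exact mem_insert_self _ _
    obtain rfl | rfl : x = y ∨ x = w := by simpa using hxf
    · exact hxy rfl
    · exact hw (mem_verts_of_mem_lastLayer hx)
  rw [← hcard]
  obtain hB₀ | ⟨f₀, hf₀⟩ := B.eq_empty_or_nonempty
  · simp [hB₀]
  let t' := t.extend {w} (fun _ => f₀) fun v hv => by
    rw [mem_singleton.1 hv]
    exact ⟨hw, hB f₀ hf₀⟩
  have hwt' : w ∈ t'.lastLayer := by
    rw [lastLayer_extend]
    exact mem_singleton_self w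
  obtain ⟨hw', hdw⟩ := mem_lastLayer.1 hwt'
  refine (card_le_add_card_children (b := j) he hs hsp hw' (by linarith) (fun f hf => (hB f hf).1)
    (fun f hf => ?_) fun f hf y hy hyw => ?_).trans_eq
    (by rw [children_eq_empty hwt', card_empty, add_zero])
  · obtain ⟨-, x, -, hfe⟩ := hB f hf
    simp [hfe]
  · obtain ⟨-, x, hx, hfe⟩ := hB f hf
    obtain rfl : y = x := by simpa [hfe, hyw] using hy
    obtain ⟨hyt, hyj⟩ := mem_lastLayer.1 hx
    exact ⟨mem_union_left _ hyt, (depth_extend_of_mem hyt).trans_le hyj.le⟩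

variable {D : ℝ}

lemma exists_mul_card_lastLayer_le (he : ∀ f ∈ F, #(e f) = 2) (hs : 0 < s)
    (hsp : EdgeSparse e F 2 s k) (hk : (j + 2) * (s + 1) ≤ k)
    (hdeg : ∀ x ∈ t.lastLayer, D + s ≤ #{f ∈ F | x ∈ e f}) :
    ∃ t' : LayeredTree e F root (j + 1), D * #t.lastLayer ≤ #t'.lastLayer := by
  have : Nonempty ι := ⟨t.up root⟩
  let W : Finset V := t.lastLayer.biUnion t.privateNbrs
  have hW : ∀ w ∈ W, w ∉ t.verts ∧ ∃ f ∈ F, ∃ y ∈ t.lastLayer, e f = {y, w} := fun w hw => by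
    obtain ⟨x, hx, hwx⟩ := mem_biUnion.1 hw
    obtain ⟨hwt, f, hf, hfe⟩ := mem_newNbrs.1 (mem_filter.1 hwx).1
    exact ⟨hwt, f, hf, x, hx, hfe⟩
  choose! hWt c hcF hce using hW
  refine ⟨t.extend W c fun w hw => ⟨hWt w hw, hcF w hw, hce w hw⟩, ?_⟩
  have hcardW : #W = ∑ x ∈ t.lastLayer, #(t.privateNbrs x) := by
    refine card_biUnion fun x hx y _ hxy => disjoint_left.2 fun w hwx hwy => hxy ?_
    exact (mem_filter.1 hwy).2 x hx (mem_filter.1 hwx).1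
  have hprivate : ∀ x ∈ t.lastLayer, D ≤ #(t.privateNbrs x) := fun x hx => by
    have hle : (#{f ∈ F | x ∈ e f} : ℝ) ≤ s + #(t.privateNbrs x) :=
      mod_cast card_edges_le_add_card_privateNbrs he hs hsp hk hx
    linarith [hdeg x hx]
  calc D * #t.lastLayer = ∑ _ ∈ t.lastLayer, D := by rw [sum_const, nsmul_eq_mul, mul_comm]
    _ ≤ ∑ x ∈ t.lastLayer, (#(t.privateNbrs x) : ℝ) := sum_le_sum hprivate
    _ = #(t.extend W c _).lastLayer := by rw [lastLayer_extend, hcardW, Nat.cast_sum]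

lemma mul_card_lastLayer_lt [Fintype V] (he : ∀ f ∈ F, #(e f) = 2) (hs : 0 < s)
    (hsp : EdgeSparse e F 2 s k) (hk : (j + 1) * (s + 1) ≤ k)
    (hdeg : ∀ x ∈ t.lastLayer, D + s ≤ #{f ∈ F | x ∈ e f}) :
    D * #t.lastLayer < s * Fintype.card V := by
  have hout : ∀ x ∈ t.lastLayer, D ≤ ∑ w ∈ t.vertsᶜ, (#{f ∈ F | e f = {x, w}} : ℝ) :=
    fun x hx => by
      have hle : (#{f ∈ F | x ∈ e f} : ℝ) ≤ s + ∑ w ∈ t.vertsᶜ, (#{f ∈ F | e f = {x, w}} : ℝ) :=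
        mod_cast card_edges_le_add_sum he hs hsp hk hx
      linarith [hdeg x hx]
  have hin : ∀ w ∈ t.vertsᶜ, ∑ x ∈ t.lastLayer, (#{f ∈ F | e f = {x, w}} : ℝ) ≤ s :=
    fun w hw => mod_cast sum_card_edges_lastLayer_le he hs hsp hk (mem_compl.1 hw)
  have hcompl : #t.vertsᶜ < Fintype.card V := by
    rw [card_compl_lt_iff_nonempty]
    exact ⟨root, t.root_mem⟩
  calc D * #t.lastLayer = ∑ _ ∈ t.lastLayer, D := by rw [sum_const, nsmul_eq_mul, mul_comm]
    _ ≤ ∑ x ∈ t.lastLayer, ∑ w ∈ t.vertsᶜ, (#{f ∈ F | e f = {x, w}} : ℝ) := sum_le_sum hout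
    _ = ∑ w ∈ t.vertsᶜ, ∑ x ∈ t.lastLayer, (#{f ∈ F | e f = {x, w}} : ℝ) := sum_comm
    _ ≤ ∑ _ ∈ t.vertsᶜ, (s : ℝ) := sum_le_sum hin
    _ = s * #t.vertsᶜ := by rw [sum_const, nsmul_eq_mul, mul_comm]
    _ < s * Fintype.card V := by gcongr

/-- The tree with the single vertex `root`; the edge `f` is only a junk value for `up`. -/
def single (F : Finset ι) (root : V) (f : ι) : LayeredTree e F root 0 where
  verts := {root}
  depth _ := 0
  up _ := f
  root_mem := mem_singleton_self root
  depth_root := rfl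
  depth_le _ _ := le_rfl
  up_mem _ hv hvr := absurd (mem_singleton.1 hv) hvr
  exists_parent _ hv hvr := absurd (mem_singleton.1 hv) hvr

lemma mem_biUnion_of_mem_verts (hroot : root ∈ F.biUnion e) (hv : v ∈ t.verts) :
    v ∈ F.biUnion e := by
  obtain rfl | hvr := eq_or_ne v root
  · exact hroot
  · exact mem_biUnion.2 ⟨t.up v, t.up_mem v hv hvr, mem_edge_up hv hvr⟩

lemma exists_pow_le_card_lastLayer (he : ∀ f ∈ F, #(e f) = 2) (hs : 0 < s)
    (hsp : EdgeSparse e F 2 s k) (hD : 0 ≤ D)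
    (hdeg : ∀ v ∈ F.biUnion e, D + s ≤ #{f ∈ F | v ∈ e f}) (hroot : root ∈ F.biUnion e)
    (hk : (j + 1) * (s + 1) ≤ k) :
    ∃ t : LayeredTree e F root j, D ^ j ≤ #t.lastLayer := by
  induction j with
  | zero =>
    obtain ⟨f, -, -⟩ := mem_biUnion.1 hroot
    exact ⟨single F root f, by simp [single, lastLayer]⟩
  | succ j ih =>
    obtain ⟨t, ht⟩ := ih (by linarith)
    obtain ⟨t', ht'⟩ := exists_mul_card_lastLayer_le he hs hsp hk fun x hx =>
      hdeg x (mem_biUnion_of_mem_verts (t := t) hroot (mem_verts_of_mem_lastLayer hx))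
    exact ⟨t', by rw [pow_succ']; exact (mul_le_mul_of_nonneg_left ht hD).trans ht'⟩

end LayeredTree

section

variable {e : ι → Finset V} {F : Finset ι}

lemma exists_subset_forall_le_degree {d : ℝ} (hd : 0 ≤ d) (hF : F.Nonempty)
    (hcard : #(F.biUnion e) * d ≤ #F) :
    ∃ F' ⊆ F, F'.Nonempty ∧ ∀ v ∈ F'.biUnion e, d ≤ #{f ∈ F' | v ∈ e f} := by
  induction F using Finset.strongInduction with
  | H F ih =>
    by_cases! hdeg : ∀ v ∈ F.biUnion e, d ≤ #{f ∈ F | v ∈ e f}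
    · exact ⟨F, subset_rfl, hF, hdeg⟩
    obtain ⟨v, hv, hvd⟩ := hdeg
    let F' : Finset ι := {f ∈ F | v ∉ e f}
    have hsplit : (#{f ∈ F | v ∈ e f} : ℝ) + #F' = #F :=
      mod_cast card_filter_add_card_filter_not (s := F) fun f => v ∈ e f
    have hcover : #(F'.biUnion e) + 1 ≤ #(F.biUnion e) := by
      refine card_lt_card ((ssubset_iff_of_subset
        (biUnion_subset_biUnion_of_subset_left e (filter_subset _ F))).2 ⟨v, hv, fun hvF' => ?_⟩)
      obtain ⟨f, hf, hvf⟩ := mem_biUnion.1 hvF'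
      exact (mem_filter.1 hf).2 hvf
    have hlt : #(F'.biUnion e) * d < #F' := by
      have : ((#(F'.biUnion e) : ℝ) + 1) * d ≤ #(F.biUnion e) * d := by
        gcongr
        exact_mod_cast hcover
      linarith
    have hF' : F'.Nonempty := by
      rw [← card_pos, ← Nat.cast_pos (α := ℝ)]
      exact lt_of_le_of_lt (by positivity) hlt
    have hssub : F' ⊂ F := by
      obtain ⟨f, hf, hvf⟩ := mem_biUnion.1 hv
      exact filter_ssubset.2 ⟨f, hf, not_not.2 hvf⟩
    obtain ⟨F'', hsub, hF''⟩ := ih F' hssub hF' hlt.le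
    exact ⟨F'', hsub.trans hssub.subset, hF''⟩

variable [Fintype V]

lemma EdgeSparse.card_lt_of_card_eq_two {s k h : ℕ} {D : ℝ} [Nonempty V]
    (hsp : EdgeSparse e F 2 s k) (he : ∀ f ∈ F, #(e f) = 2) (hs : 0 < s) (hh : h ≠ 0)
    (hk : h * (s + 1) ≤ k) (hD : 0 < D) (hDh : D ^ h = s * Fintype.card V) :
    #F < Fintype.card V * (D + s) := by
  by_contra! hlarge
  obtain ⟨j, rfl⟩ := Nat.exists_eq_add_one_of_ne_zero hh
  have hF : F.Nonempty := by
    rw [← card_pos, ← Nat.cast_pos (α := ℝ)]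
    exact lt_of_lt_of_le (by positivity) hlarge
  obtain ⟨F', hF', ⟨f, hf⟩, hdeg⟩ := exists_subset_forall_le_degree (e := e) (d := D + s)
    (by positivity) hF (le_trans (by gcongr; exact card_le_univ _) hlarge)
  have he' : ∀ f ∈ F', #(e f) = 2 := fun f hf => he f (hF' hf)
  obtain ⟨root, hroot⟩ : (e f).Nonempty := card_pos.1 (by rw [he' f hf]; exact two_pos)
  have hroot' : root ∈ F'.biUnion e := mem_biUnion.2 ⟨f, hf, hroot⟩
  obtain ⟨t, ht⟩ := LayeredTree.exists_pow_le_card_lastLayer he' hs (hsp.mono hF') hD.le hdeg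
    hroot' hk
  have hlt := LayeredTree.mul_card_lastLayer_lt (t := t) he' hs (hsp.mono hF') hk fun x hx =>
    hdeg x (LayeredTree.mem_biUnion_of_mem_verts hroot' (LayeredTree.mem_verts_of_mem_lastLayer hx))
  exact (((pow_succ' D j).trans_le (mul_le_mul_of_nonneg_left ht hD.le)).trans_lt hlt).ne hDh

lemma sum_card_filter_subset_eq {r : ℕ} (he : ∀ f ∈ F, #(e f) = r) (m : ℕ) :
    ∑ S ∈ powersetCard m univ, #{f ∈ F | S ⊆ e f} = #F * r.choose m := by
  simp_rw [card_filter]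
  rw [sum_comm, ← smul_eq_mul, ← sum_const]
  refine sum_congr rfl fun f hf => ?_
  rw [← card_filter, ← he f hf, ← card_powersetCard]
  congr 1
  ext S
  simp [mem_powersetCard, and_comm]

open scoped Nat in
lemma card_lt_of_forall_card_filter_subset_lt {m d : ℕ} {X : ℝ} [Nonempty V]
    (he : ∀ f ∈ F, #(e f) = m + d) (hX : 0 < X)
    (hlink : ∀ S : Finset V, #S = m → #{f ∈ F | S ⊆ e f} < X) :
    #F < (d ! * Fintype.card V ^ m / (m + d)! : ℝ) * X := by
  obtain rfl | ⟨f, hf⟩ := F.eq_empty_or_nonempty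
  · rw [card_empty, Nat.cast_zero]
    positivity
  have hpowerset : (powersetCard m (univ : Finset V)).Nonempty := by
    rw [powersetCard_nonempty]
    have := card_le_card (subset_univ (e f))
    have := he f hf
    omega
  have hchoose : ((m + d).choose m * (m ! * d !) : ℝ) = (m + d)! := by
    have := Nat.choose_mul_factorial_mul_factorial (Nat.le_add_right m d)
    rw [Nat.add_sub_cancel_left, mul_assoc] at this
    exact_mod_cast this
  have hsum : (#F * (m + d).choose m : ℝ) < Fintype.card V ^ m / m ! * X :=
    calc (#F * (m + d).choose m : ℝ)
        = ∑ S ∈ powersetCard m (univ : Finset V), (#{f ∈ F | S ⊆ e f} : ℝ) := by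
          exact_mod_cast (sum_card_filter_subset_eq he m).symm
      _ < ∑ _ ∈ powersetCard m (univ : Finset V), X :=
          sum_lt_sum_of_nonempty hpowerset fun S hS => hlink S (mem_powersetCard.1 hS).2
      _ = (Fintype.card V).choose m * X := by
          rw [sum_const, card_powersetCard, card_univ, nsmul_eq_mul]
      _ ≤ Fintype.card V ^ m / m ! * X := by
          gcongr
          exact Nat.choose_le_pow_div m _
  rw [div_mul_eq_mul_div, lt_div_iff₀ (by positivity), ← hchoose]
  calc #F * ((m + d).choose m * (m ! * d ! : ℝ))
      = #F * (m + d).choose m * (m ! * d !) := (mul_assoc _ _ _).symm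
    _ < Fintype.card V ^ m / m ! * X * (m ! * d !) := by gcongr
    _ = d ! * Fintype.card V ^ m * X := by field_simp

lemma EdgeSparse.card_lt {m s k h : ℕ} {D : ℝ} [Nonempty V]
    (hsp : EdgeSparse e F (m + 2) s k) (he : ∀ f ∈ F, #(e f) = m + 2) (hs : 0 < s) (hh : h ≠ 0)
    (hk : h * (s + 1) ≤ k) (hD : 0 < D) (hDh : D ^ h = s * Fintype.card V) :
    #F < (2 * Fintype.card V ^ m / (m + 2).factorial : ℝ) * (Fintype.card V * (D + s)) := by
  have hlink : ∀ S : Finset V, #S = m → #{f ∈ F | S ⊆ e f} < (Fintype.card V * (D + s) : ℝ) := by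
    rintro S rfl
    refine hsp.link.card_lt_of_card_eq_two (fun f hf => ?_) hs hh hk hD hDh
    obtain ⟨hfF, hSf⟩ := mem_filter.1 hf
    rw [card_sdiff_of_subset hSf, he f hfF, Nat.add_sub_cancel_left]
  simpa using card_lt_of_forall_card_filter_subset_lt he (by positivity) hlink

lemma two_mul_pow_div_mul_eq_rpow {n s : ℝ} (hn : 0 < n) (hs : 0 ≤ s) (m : ℕ) (a b : ℝ) :
    2 * n ^ m / b * (n * ((s * n) ^ a + s)) =
      2 * s ^ a / b * n ^ (((m + 2 : ℕ) : ℝ) - 1 + a) +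
        2 * s / b * n ^ (((m + 2 : ℕ) : ℝ) - 1) := by
  have hexp : ((m + 2 : ℕ) : ℝ) - 1 = (m + 1 : ℕ) := by
    push_cast
    ring
  rw [hexp, Real.rpow_add hn, Real.rpow_natCast, Real.mul_rpow hs hn.le]
  ring

end

end

open Finset in
theorem statement11_general {V : Type*} [Fintype V] [DecidableEq V] [Nonempty V] (k r : ℕ)
    (q h : ℤ) (C' : ℝ) (hr : 2 ≤ r) (hq : -(r : ℤ) + 1 ≤ q) (hk : q + r + 1 ≤ (k : ℤ))
    (hh : h = (k : ℤ) / (q + r + 1))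
    (hC : C' = ((q : ℝ) + (r : ℝ)) ^ ((1 : ℝ) / (h : ℝ)))
    (E : Multiset (Finset V)) (hunif : ∀ e ∈ E, #e = r)
    (hcode : ∀ i : ℕ, q + r + 1 ≤ (i : ℤ) → i ≤ k → ∀ E' ≤ E, Multiset.card E' = i →
      (i : ℤ) - q ≤ (#(E'.toFinset.biUnion id) : ℤ)) :
    (Multiset.card E : ℝ) <
      (2 * C' / (r.factorial : ℝ)) * (Fintype.card V : ℝ) ^ ((r : ℝ) - 1 + 1 / (h : ℝ)) +
        (2 * ((q : ℝ) + (r : ℝ)) / (r.factorial : ℝ)) *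
          (Fintype.card V : ℝ) ^ ((r : ℝ) - 1) := by
  obtain ⟨m, rfl⟩ := Nat.exists_eq_add_of_le' hr
  obtain ⟨s, hs⟩ : ∃ s : ℕ, q + (m + 2 : ℕ) = s := ⟨(q + (m + 2 : ℕ)).toNat, by omega⟩
  have hsR : (q : ℝ) + (m + 2 : ℕ) = s := mod_cast hs
  have hspos : 0 < s := by omega
  rw [hs] at hh hk
  lift h to ℕ using hh ▸ by positivity
  have hh' : h = k / (s + 1) := mod_cast hh
  have hh0 : h ≠ 0 := hh' ▸ (Nat.div_pos (by omega) s.succ_pos).ne'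
  have hhk : h * (s + 1) ≤ k := hh' ▸ Nat.div_mul_le_self k (s + 1)
  have hV : (0 : ℝ) < Fintype.card V := mod_cast Fintype.card_pos
  have hDh : (((s : ℝ) * Fintype.card V) ^ (1 / h : ℝ)) ^ h = s * Fintype.card V := by
    rw [one_div, Real.rpow_inv_natCast_pow (by positivity) hh0]
  have hsparse : EdgeSparse (fun f : E.ToType => f.1) univ (m + 2) s k :=
    edgeSparse_coe fun E' hE' hsE' hE'k => by
      have := hcode _ (by omega) hE'k E' hE' rfl
      omega
  have hcard :=
    hsparse.card_lt (fun f _ => hunif f.1 Multiset.coe_mem) hspos hh0 hhk (by positivity) hDh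
  rw [two_mul_pow_div_mul_eq_rpow hV s.cast_nonneg, card_univ, Multiset.card_coe] at hcard
  simpa only [hC, hsR, Int.cast_natCast] using hcard

/-- For `r ≥ 2`, `q ≥ -r+1`, `n ≥ k ≥ 2q+2r+2`, `h = ⌊k/(q+r+1)⌋` and
`C' = (q+r)^{1/h}`: every multiset `E` of `r`-element subsets (edges, possibly
repeated) of an `n`-element vertex set in which, for every `q+r+1 ≤ i ≤ k`, every
sub-multiset of `i` edges (counted with multiplicity) covers at least `i-q` vertices,
has fewer than `(2C'/r!)·n^{r-1+1/h} + (2(q+r)/r!)·n^{r-1}` edges counted with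
multiplicity. -/
theorem statement11 (n k r : ℕ) (q h : ℤ) (C' : ℝ)
    (hr : 2 ≤ r) (hq : -(r : ℤ) + 1 ≤ q)
    (hk : 2 * q + 2 * r + 2 ≤ (k : ℤ)) (hn : k ≤ n)
    (hh : h = (k : ℤ) / (q + r + 1))
    (hC : C' = ((q : ℝ) + (r : ℝ)) ^ ((1 : ℝ) / (h : ℝ)))
    (E : Multiset (Finset (Fin n))) (hunif : ∀ e ∈ E, e.card = r)
    (hcode : ∀ i : ℕ, q + r + 1 ≤ (i : ℤ) → i ≤ k → ∀ E' ≤ E, Multiset.card E' = i →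
      (i : ℤ) - q ≤ ((E'.toFinset.biUnion id).card : ℤ)) :
    (Multiset.card E : ℝ) <
      (2 * C' / (r.factorial : ℝ)) * (n : ℝ) ^ ((r : ℝ) - 1 + 1 / (h : ℝ)) +
        (2 * ((q : ℝ) + (r : ℝ)) / (r.factorial : ℝ)) * (n : ℝ) ^ ((r : ℝ) - 1) := by
  have : Nonempty (Fin n) := ⟨⟨0, by omega⟩⟩
  simpa only [Fintype.card_fin] using
    statement11_general k r q h C' hr hq (by omega) hh hC E hunif hcode
end

section
/- Let k and q be integers with q ≥ −1 and k ≥ q+3, and let G be a simple graph with at least k−q−1 vertices. Let G' = (V', E') be a subgraph of G (V' ⊆ V(G) and E' is a set of edges of G all of whose endpoints lie in V') that is forbidden for (k,q), i.e., |E'| − |V'| = q+1 and |E'| ≤ k, and assume G' is maximal forbidden: there is no forbidden subgraph G'' = (V'', E'') of G with V' ⊆ V'', E' ⊆ E'' and |V''| > |V'|. Then either |E'| = k, or G' is the union of one or more connected components of G, i.e., no edge of G joins a vertex of V' to a vertex of V(G)∖V', and every edge of G with both endpoints in V' belongs to E'. -/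
/-!
If an edge outside a forbidden subgraph has both endpoints in it once a single vertex is added, then
adding that edge and that vertex preserves `|E'| - |V'|`; when `|E'| < k` the enlarged subgraph is
again forbidden, which maximality rules out. An edge crossing the boundary of `V'` can be added
together with its outer endpoint. A missing edge inside `V'` can be added together with any vertex
outside `V'`, and such a vertex exists because `|V'| = |E'| - q - 1 < k - q - 1`.
-/

section ForbiddenSubgraph

variable {V : Type*} {k : ℕ} {q : ℤ} {E : Set (Finset V)} {W : Finset V} {F : Finset (Finset V)}

/-- `(W, F)` is a subgraph of the graph with edge set `E` that is forbidden for `(k, q)`. An edge is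
encoded as the finite set of its endpoints. -/
structure IsForbiddenSubgraph (k : ℕ) (q : ℤ) (E : Set (Finset V)) (W : Finset V)
    (F : Finset (Finset V)) : Prop where
  edges_subset : ↑F ⊆ E
  edge_subset : ∀ e ∈ F, e ⊆ W
  card_sub_card : (F.card : ℤ) - W.card = q + 1
  card_edges_le : F.card ≤ k

/-- A forbidden subgraph that no forbidden subgraph extends with strictly more vertices. -/
structure IsMaximalForbiddenSubgraph (k : ℕ) (q : ℤ) (E : Set (Finset V)) (W : Finset V)
    (F : Finset (Finset V)) : Prop extends IsForbiddenSubgraph k q E W F where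
  card_le_of_subset : ∀ (W' : Finset V) (F' : Finset (Finset V)),
    IsForbiddenSubgraph k q E W' F' → W ⊆ W' → F ⊆ F' → W'.card ≤ W.card

theorem IsForbiddenSubgraph.exists_vertex_notMem (h : IsForbiddenSubgraph k q E W F)
    (hF : F.card < k) (hV : ∃ U : Finset V, (k : ℤ) - q - 1 ≤ U.card) : ∃ v, v ∉ W := by
  obtain ⟨U, hU⟩ := hV
  have hWU : W.card < U.card := by
    have := h.card_sub_card
    omega
  obtain ⟨v, -, hv⟩ := Finset.exists_mem_notMem_of_card_lt_card hWU
  exact ⟨v, hv⟩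

theorem subset_insert_of_card_le_two [DecidableEq V] {e : Finset V} {v : V}
    (he : e.card ≤ 2) (hmeet : (e ∩ W).Nonempty) (hve : v ∈ e) (hvW : v ∉ W) : e ⊆ insert v W := by
  obtain ⟨u, hu⟩ := hmeet
  obtain ⟨hue, huW⟩ := Finset.mem_inter.1 hu
  intro x hxe
  by_contra hx
  obtain ⟨hxv, hxW⟩ : x ≠ v ∧ x ∉ W := by simpa only [Finset.mem_insert, not_or] using hx
  have three_vertices : 2 < e.card := Finset.two_lt_card.2
    ⟨u, hue, v, hve, x, hxe, ne_of_mem_of_not_mem huW hvW, ne_of_mem_of_not_mem huW hxW, hxv.symm⟩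
  exact he.not_gt three_vertices

theorem IsForbiddenSubgraph.insert_insert [DecidableEq V] {e : Finset V} {v : V}
    (h : IsForbiddenSubgraph k q E W F) (hF : F.card < k) (heE : e ∈ E) (heF : e ∉ F)
    (hvW : v ∉ W) (hev : e ⊆ insert v W) :
    IsForbiddenSubgraph k q E (insert v W) (insert e F) where
  edges_subset := by
    rw [Finset.coe_insert]
    exact Set.insert_subset heE h.edges_subset
  edge_subset := (Finset.forall_mem_insert ..).2
    ⟨hev, fun f hf => (h.edge_subset f hf).trans (Finset.subset_insert v W)⟩
  card_sub_card := by
    rw [Finset.card_insert_of_notMem heF, Finset.card_insert_of_notMem hvW, Nat.cast_succ,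
      Nat.cast_succ, add_sub_add_right_eq_sub]
    exact h.card_sub_card
  card_edges_le := (Finset.card_insert_le e F).trans hF

namespace IsMaximalForbiddenSubgraph

theorem mem_of_subset_insert [DecidableEq V] {e : Finset V} {v : V}
    (h : IsMaximalForbiddenSubgraph k q E W F) (hF : F.card < k) (heE : e ∈ E) (hvW : v ∉ W)
    (hev : e ⊆ insert v W) : e ∈ F := by
  by_contra heF
  have hle : (insert v W).card ≤ W.card := h.card_le_of_subset _ _
    (h.insert_insert hF heE heF hvW hev) (Finset.subset_insert v W) (Finset.subset_insert e F)
  exact hle.not_gt (Finset.card_lt_card (Finset.ssubset_insert hvW))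

theorem subset_of_inter_nonempty [DecidableEq V] {e : Finset V}
    (h : IsMaximalForbiddenSubgraph k q E W F) (hF : F.card < k) (heE : e ∈ E) (he : e.card ≤ 2)
    (hmeet : (e ∩ W).Nonempty) : e ⊆ W := by
  intro v hve
  by_contra hvW
  have heF : e ∈ F :=
    h.mem_of_subset_insert hF heE hvW (subset_insert_of_card_le_two he hmeet hve hvW)
  exact hvW (h.edge_subset e heF hve)

theorem mem_of_subset {e : Finset V} (h : IsMaximalForbiddenSubgraph k q E W F)
    (hF : F.card < k) (hV : ∃ U : Finset V, (k : ℤ) - q - 1 ≤ U.card) (heE : e ∈ E)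
    (heW : e ⊆ W) : e ∈ F := by
  classical
  obtain ⟨v, hvW⟩ := h.exists_vertex_notMem hF hV
  exact h.mem_of_subset_insert hF heE hvW (heW.trans (Finset.subset_insert v W))

end IsMaximalForbiddenSubgraph

theorem statement12_general [DecidableEq V] (hE : ∀ e ∈ E, e.card ≤ 2)
    (hV : ∃ U : Finset V, (k : ℤ) - q - 1 ≤ U.card) (h : IsMaximalForbiddenSubgraph k q E W F) :
    F.card = k ∨ ((∀ e ∈ E, (e ∩ W).Nonempty → e ⊆ W) ∧ (∀ e ∈ E, e ⊆ W → e ∈ F)) :=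
  h.card_edges_le.eq_or_lt.imp_right fun hF =>
    ⟨fun e he => h.subset_of_inter_nonempty hF he (hE e he), fun _ he => h.mem_of_subset hF hV he⟩

end ForbiddenSubgraph

/-- Let `q ≥ -1`, `k ≥ q+3`, and let `G` be a simple graph (edge set `E`) on a finite
vertex type `V` with at least `k-q-1` vertices.  If `(V', E')` is a subgraph of `G`
that is forbidden for `(k,q)` (i.e. `|E'| - |V'| = q+1` and `|E'| ≤ k`) and is maximal
forbidden (no forbidden subgraph of `G` extends it with strictly more vertices), then
either `|E'| = k`, or `(V', E')` is a union of connected components of `G`: no edge of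
`G` meets both `V'` and its complement, and every edge of `G` inside `V'` lies in `E'`. -/
theorem statement12 (k : ℕ) (q : ℤ) {V : Type*} [Fintype V] [DecidableEq V]
    (hq : -1 ≤ q) (hk : q + 3 ≤ (k : ℤ))
    (E : Finset (Finset V)) (hG : ∀ e ∈ E, e.card = 2)
    (hV : (k : ℤ) - q - 1 ≤ (Fintype.card V : ℤ))
    (V' : Finset V) (E' : Finset (Finset V))
    (hE'sub : E' ⊆ E) (hE'V : ∀ e ∈ E', e ⊆ V')
    (hforb : (E'.card : ℤ) - (V'.card : ℤ) = q + 1 ∧ E'.card ≤ k)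
    (hmax : ¬ ∃ (V'' : Finset V) (E'' : Finset (Finset V)),
      V' ⊆ V'' ∧ E' ⊆ E'' ∧ E'' ⊆ E ∧ (∀ e ∈ E'', e ⊆ V'') ∧
      ((E''.card : ℤ) - (V''.card : ℤ) = q + 1 ∧ E''.card ≤ k) ∧ V'.card < V''.card) :
    E'.card = k ∨
      ((∀ e ∈ E, (e ∩ V').Nonempty → e ⊆ V') ∧ (∀ e ∈ E, e ⊆ V' → e ∈ E')) := by
  have h : IsMaximalForbiddenSubgraph k q E V' E' :=
    ⟨⟨hE'sub, hE'V, hforb.1, hforb.2⟩, fun W F hWF hW hF => not_lt.1 fun hlt =>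
      hmax ⟨W, F, hW, hF, hWF.edges_subset, hWF.edge_subset,
        ⟨hWF.card_sub_card, hWF.card_edges_le⟩, hlt⟩⟩
  exact statement12_general (fun e he => (hG e he).le) ⟨Finset.univ, hV⟩ h
end

section
/- Let r ≥ 3, q ≥ −r+1 and k ≥ q+r+1 be integers, and let H be an H^{(r)}(k,q)-free r-uniform hypergraph with m edges on an n-element vertex set V (n ≥ r). Then there exists an (r−2)-element subset S ⊆ V such that S is contained in at least m·binom(r,2)/binom(n,r−2) edges of H, and the simple graph G on vertex set V with edge set {e∖S : e ∈ E(H), S ⊆ e} is H^{(2)}(k, q+r−2)-free, i.e., for every integer i with q+r+1 ≤ i ≤ k, every i pairwise distinct edges of G together cover at least i−(q+r−2) vertices. -/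
section

open Finset

variable {V : Type*} [DecidableEq V]

/-- The link of a vertex set `S` in the hypergraph with edge set `E`: the traces outside `S` of the
edges containing `S`. If `E` is `r`-uniform, the link is `(r - #S)`-uniform, so for `#S = r - 2` it
is the edge set of a graph. -/
def hypergraphLink (E : Finset (Finset V)) (S : Finset V) : Finset (Finset V) :=
  {e ∈ E | S ⊆ e}.image (· \ S)

theorem mem_hypergraphLink {E : Finset (Finset V)} {S f : Finset V} :
    f ∈ hypergraphLink E S ↔ f ∪ S ∈ E ∧ Disjoint f S := by
  simp only [hypergraphLink, mem_image, mem_filter]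
  constructor
  · rintro ⟨e, ⟨he, hSe⟩, rfl⟩
    exact ⟨by rwa [sdiff_union_of_subset hSe], sdiff_disjoint⟩
  · rintro ⟨hf, hfS⟩
    exact ⟨f ∪ S, ⟨hf, subset_union_right⟩, union_sdiff_cancel_right hfS⟩

theorem injOn_union_right_of_disjoint (S : Finset V) :
    Set.InjOn (· ∪ S) {f : Finset V | Disjoint f S} :=
  Set.LeftInvOn.injOn (f₁' := (· \ S)) fun _ hf ↦ union_sdiff_cancel_right hf

theorem card_biUnion_image_union_right_le (F : Finset (Finset V)) (S : Finset V) :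
    #((F.image (· ∪ S)).biUnion id) ≤ #(F.biUnion id) + #S := by
  have hsub : (F.image (· ∪ S)).biUnion id ⊆ F.biUnion id ∪ S := by
    rw [image_biUnion]
    exact biUnion_subset.2 fun f hf ↦ union_subset_union_left (subset_biUnion_of_mem id hf)
  exact (card_le_card hsub).trans (card_union_le _ _)

theorem HFree.hypergraphLink {t k : ℕ} {q : ℤ} {E : Finset (Finset V)} {S : Finset V}
    (hE : HFree (#S + t) k q E) : HFree t k (q + #S) (hypergraphLink E S) := by
  intro i hi hik F hF hFi
  have hlift : F.image (· ∪ S) ⊆ E :=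
    image_subset_iff.2 fun f hf ↦ (mem_hypergraphLink.1 (hF hf)).1
  have hcard : #(F.image (· ∪ S)) = i := by
    rw [card_image_of_injOn ((injOn_union_right_of_disjoint S).mono
      fun f hf ↦ (mem_hypergraphLink.1 (hF hf)).2), hFi]
  have hcover := hE i (by omega) hik _ hlift hcard
  have hvertices := card_biUnion_image_union_right_le F S
  omega

variable [Fintype V]

theorem sum_powersetCard_card_filter_subset (s : ℕ) (E : Finset (Finset V)) :
    ∑ S ∈ powersetCard s (univ : Finset V), #{e ∈ E | S ⊆ e} = ∑ e ∈ E, (#e).choose s := by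
  have hsubsets (e : Finset V) :
      {S ∈ powersetCard s (univ : Finset V) | S ⊆ e} = powersetCard s e := by
    ext S
    simp [mem_powersetCard, and_comm]
  calc ∑ S ∈ powersetCard s (univ : Finset V), #{e ∈ E | S ⊆ e}
      = ∑ e ∈ E, #{S ∈ powersetCard s univ | S ⊆ e} :=
        by simpa only [bipartiteAbove, bipartiteBelow] using
          sum_card_bipartiteAbove_eq_sum_card_bipartiteBelow fun S e : Finset V ↦ S ⊆ e
    _ = ∑ e ∈ E, (#e).choose s := by simp only [hsubsets, card_powersetCard]

theorem exists_sum_choose_le_choose_mul_card_filter_subset {s : ℕ} (hs : s ≤ Fintype.card V)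
    (E : Finset (Finset V)) :
    ∃ S : Finset V, #S = s ∧
      ∑ e ∈ E, (#e).choose s ≤ (Fintype.card V).choose s * #{e ∈ E | S ⊆ e} := by
  have hne : (powersetCard s (univ : Finset V)).Nonempty := powersetCard_nonempty.2 hs
  obtain ⟨S, hS, hle⟩ := exists_le_of_sum_le hne
    (f := fun _ ↦ ∑ e ∈ E, (#e).choose s)
    (g := fun S ↦ (Fintype.card V).choose s * #{e ∈ E | S ⊆ e}) <| by
      rw [sum_const, card_powersetCard, card_univ, smul_eq_mul, ← mul_sum,
        sum_powersetCard_card_filter_subset]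
  exact ⟨S, (mem_powersetCard.1 hS).2, hle⟩

theorem statement13_general {s t k : ℕ} {q : ℤ} (hs : s ≤ Fintype.card V)
    {E : Finset (Finset V)} (hunif : ∀ e ∈ E, #e = s + t) (hfree : HFree (s + t) k q E) :
    ∃ S : Finset V, #S = s ∧
      (#E : ℝ) * (s + t).choose s / (Fintype.card V).choose s ≤ #{e ∈ E | S ⊆ e} ∧
      HFree t k (q + s) (hypergraphLink E S) := by
  obtain ⟨S, rfl, hS⟩ := exists_sum_choose_le_choose_mul_card_filter_subset hs E
  have hsum : ∑ e ∈ E, (#e).choose #S = #E * (#S + t).choose #S :=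
    sum_const_nat fun e he ↦ by rw [hunif e he]
  have hpos : (0 : ℝ) < (Fintype.card V).choose #S := mod_cast Nat.choose_pos hs
  refine ⟨S, rfl, ?_, hfree.hypergraphLink⟩
  rw [div_le_iff₀' hpos]
  exact_mod_cast hsum ▸ hS

end

/-- Let `r ≥ 3`, `q ≥ -r+1`, `k ≥ q+r+1`, and let `H` be an `H^{(r)}(k,q)`-free
`r`-uniform hypergraph with `m` edges on an `n`-element vertex set (`n ≥ r`).  Then
there is an `(r-2)`-element subset `S` of the vertices contained in at least
`m·C(r,2)/C(n,r-2)` edges of `H`, such that the graph with edge set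
`{e \ S : e ∈ E(H), S ⊆ e}` is `H^{(2)}(k, q+r-2)`-free: for every
`q+r+1 ≤ i ≤ k`, every `i` pairwise distinct edges of it cover at least `i-(q+r-2)`
vertices. -/
theorem statement13 (r k n m : ℕ) (q : ℤ) {V : Type*} [Fintype V] [DecidableEq V]
    (hr : 3 ≤ r) (hq : -(r : ℤ) + 1 ≤ q) (hk : q + r + 1 ≤ (k : ℤ))
    (hV : Fintype.card V = n) (hnr : r ≤ n)
    (E : Finset (Finset V)) (hunif : ∀ e ∈ E, e.card = r)
    (hfree : HFree r k q E) (hm : E.card = m) :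
    ∃ S : Finset V, S.card = r - 2 ∧
      ((m : ℝ) * (r.choose 2 : ℝ)) / (n.choose (r - 2) : ℝ) ≤
        ((E.filter (fun e => S ⊆ e)).card : ℝ) ∧
      (∀ i : ℕ, q + r + 1 ≤ (i : ℤ) → i ≤ k →
        ∀ E' ⊆ (E.filter (fun e => S ⊆ e)).image (fun e => e \ S), E'.card = i →
          (i : ℤ) - (q + r - 2) ≤ ((E'.biUnion id).card : ℤ)) := by
  subst hV hm
  obtain ⟨s, rfl⟩ := Nat.exists_eq_add_of_le' (show 2 ≤ r by omega)
  obtain ⟨S, hS, hdeg, hlink⟩ := statement13_general (by omega) hunif hfree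
  exact ⟨S, hS, by rwa [Nat.add_sub_cancel, ← Nat.choose_symm_add], fun i hi hik F hF hFi ↦ by
    have hcover := hlink i (by omega) hik F hF hFi
    omega⟩
end
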